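/- arXiv:2106.12816 — 2 statements merged into one kernel-verified Lean document; each statement's English description precedes it below -/
import Mathlib

section
/- Suppose the sequences γ = (r_k)_{k≥0}, σ = (s_k)_{k≥0}, τ = (t_k)_{k≥1} of q-nonnegative polynomials satisfy s_0 ≥_q t_1 and s_k ≥_q r_{k−1} + t_{k+1} for all k ≥ 1. Then for every m ≥ 1, every m×m submatrix M of the Catalan–Stieltjes matrix C^{γ,σ,τ} (rows and columns chosen by strictly increasing index sequences), and every irreducible character χ of the symmetric group 𝔖_m, the immanant Imm_χ M is q-nonnegative; the same holds for every m×m submatrix of the Hankel matrix H^{γ,σ,τ}. -/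
/-!
The proof works with all characters at once. For a representation `U` of the symmetric group by
complex matrices, the immanant of a matrix is the trace of its universal immanant
`∑ σ, (∏ a, M (i a) (j (σ a))) • U σ` (`ImmPos.immE`). So it is enough to find a cone of matrices
with nonnegative trace which contains all the coefficients of the universal immanants of the
Catalan–Stieltjes and Hankel matrices. That cone is `ImmPos.K U`, the closed semiring generated by
the nonnegative scalars and the elements `1 + U s`, with `s` an adjacent transposition.

*The trace is nonnegative on `K U`.* This is Young's seminormal form. The Jucys–Murphy elements
have joint eigenprojections `p α`, and for `g` increasing on the level sets of `α` the elements
`N g α = p (α ∘ g⁻¹) * U g * p α` span a cone (`EigenSystem.cone`). The relations between `s` and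
the Jucys–Murphy elements give
`(1 + U s) * N g α = (1 + 1 / c) • N g α + (a nonnegative multiple of) N (s * g) α`
with `c` the difference of two consecutive joint eigenvalues, a nonzero integer; hence the cone is
stable under multiplication by `1 + U s`. It contains `1`, so it contains the semiring generated
by these elements. The trace of `N g α` vanishes unless `g = 1`, and `N 1 α` is idempotent.

*Sums over Young subgroups lie in `K U`.* Such a sum is, up to a scalar, the average of `U` against
the uniform measure of the subgroup, which is obtained from the point mass at `1` by averaging
over adjacent transpositions and passing to the limit (`sum_stabilizer_mem_K`).

*Cauchy–Binet.* The universal immanant of a product is a positive combination of products of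
universal immanants of the factors, where the intermediate indices run over monotone sequences
with repetitions (`Positivity.immE_mem`). Hence the matrices with positive universal immanants for
all monotone row and column sequences are closed under multiplication and transposition. They
contain every weighted monotone relabelling `i ↦ f i`, as its universal immanant is a multiple
of a sum over a Young subgroup (`Positivity.good_map`).

*Factorisation.* Under the hypotheses, the tridiagonal matrix of the recurrence is a product of
weighted monotone relabellings and their transposes (`good_tri`), and so is its sum with an
identity block. The Catalan–Stieltjes matrix consists of the first rows of the powers of the
tridiagonal matrix, and is locally a product of such block matrices with further relabellings
(`rowGood_pad_rowIter`). The Hankel matrix is the product of the Catalan–Stieltjes matrix and the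
transpose of the one attached to the transposed tridiagonal matrix (`rowIter_add`).
-/

open Polynomial


/-- A polynomial is `q`-nonnegative if all of its coefficients are nonnegative. -/
def QNonneg (f : Polynomial ℝ) : Prop := ∀ i, 0 ≤ f.coeff i

/-- `χ : G → ℝ` is (the real-valued incarnation of) an irreducible character of `G`,
i.e. the character of an irreducible finite-dimensional complex representation of `G`. -/
def IsIrrChar {G : Type} [Monoid G] (χ : G → ℝ) : Prop :=
  ∃ V : FDRep ℂ G, CategoryTheory.Simple V ∧ ∀ g : G, (χ g : ℂ) = FDRep.character V g

namespace ImmPos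

/-! ### Jucys–Murphy elements -/

lemma perm_inv_apply {ι : Type*} (g : Equiv.Perm ι) (x : ι) : g⁻¹ (g x) = x :=
  g.symm_apply_apply x

lemma perm_apply_inv {ι : Type*} (g : Equiv.Perm ι) (x : ι) : g (g⁻¹ x) = x :=
  g.apply_symm_apply x

section JucysMurphy

variable {n : ℕ} {B : Type*} [Ring B] (U : Equiv.Perm (Fin (n + 1)) →* B)

/-- The adjacent transposition exchanging `i` and `i + 1`. -/
def adj (i : Fin n) : Equiv.Perm (Fin (n + 1)) := Equiv.swap i.castSucc i.succ

lemma adj_mul_self (i : Fin n) : adj i * adj i = 1 := Equiv.swap_mul_self _ _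

lemma adj_inv (i : Fin n) : (adj i)⁻¹ = adj i := Equiv.swap_inv _ _

lemma adj_castSucc (i : Fin n) : adj i i.castSucc = i.succ := Equiv.swap_apply_left _ _

lemma adj_succ (i : Fin n) : adj i i.succ = i.castSucc := Equiv.swap_apply_right _ _

lemma adj_of_ne (i : Fin n) (k : Fin (n + 1)) (h1 : k ≠ i.castSucc) (h2 : k ≠ i.succ) :
    adj i k = k := Equiv.swap_apply_of_ne_of_ne h1 h2

/-- The image under `U` of the `k`-th Jucys–Murphy element `∑_{i < k} (i k)`. -/
def jm (k : Fin (n + 1)) : B := ∑ i ∈ Finset.Iio k, U (Equiv.swap i k)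

lemma jm_commute_of (g : Equiv.Perm (Fin (n + 1))) (k : Fin (n + 1)) (hk : g k = k)
    (h : ∀ i, i < k ↔ g i < k) : U g * jm U k = jm U k * U g := by
  unfold jm
  rw [Finset.mul_sum, Finset.sum_mul]
  refine Finset.sum_equiv g (fun i => by simpa using h i) (fun i _ => ?_)
  rw [← map_mul, ← map_mul, Equiv.mul_swap_eq_swap_mul, hk]

lemma jm_commute_lt {j k : Fin (n + 1)} (h : j < k) : jm U j * jm U k = jm U k * jm U j := by
  rw [jm, Finset.sum_mul, Finset.mul_sum]
  refine Finset.sum_congr rfl fun i hi => jm_commute_of U _ _ ?_ ?_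
  · rw [Finset.mem_Iio] at hi
    exact Equiv.swap_apply_of_ne_of_ne (hi.trans h).ne' h.ne'
  · intro l
    rw [Finset.mem_Iio] at hi
    rw [Equiv.swap_apply_def]
    split_ifs with h1 h2
    · subst h1; exact ⟨fun _ => h, fun _ => hi.trans h⟩
    · subst h2; exact ⟨fun _ => hi.trans h, fun _ => h⟩
    · rfl

lemma jm_commute (j k : Fin (n + 1)) : jm U j * jm U k = jm U k * jm U j := by
  rcases lt_trichotomy j k with h | h | h
  · exact jm_commute_lt U h
  · rw [h]
  · exact (jm_commute_lt U h).symm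

lemma adj_jm_of_ne (i : Fin n) (k : Fin (n + 1)) (h1 : k ≠ i.castSucc) (h2 : k ≠ i.succ) :
    U (adj i) * jm U k = jm U k * U (adj i) := by
  refine jm_commute_of U _ _ (adj_of_ne i k h1 h2) fun l => ?_
  rw [adj, Equiv.swap_apply_def]
  simp only [Fin.ext_iff, Fin.lt_def, Fin.val_castSucc, Fin.val_succ, ne_eq] at *
  split_ifs <;> simp only [Fin.val_castSucc, Fin.val_succ] <;> omega

lemma jm_succ (i : Fin n) :
    jm U i.succ = U (adj i) * jm U i.castSucc * U (adj i) + U (adj i) := by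
  have h : Finset.Iio i.succ = insert i.castSucc (Finset.Iio i.castSucc) := by
    ext l
    simp only [Finset.mem_Iio, Finset.mem_insert, Fin.ext_iff, Fin.lt_def, Fin.val_castSucc,
      Fin.val_succ]
    omega
  rw [jm, h, Finset.sum_insert (by simp), add_comm]
  congr 1
  rw [jm, Finset.mul_sum, Finset.sum_mul]
  refine Finset.sum_congr rfl fun l hl => ?_
  rw [Finset.mem_Iio] at hl
  rw [← map_mul, ← map_mul, Equiv.mul_swap_eq_swap_mul, mul_assoc, adj_mul_self, mul_one,
    adj_castSucc, adj_of_ne i l hl.ne (hl.trans (Fin.castSucc_lt_succ)).ne]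

lemma adj_jm (i : Fin n) : U (adj i) * jm U i.castSucc = jm U i.succ * U (adj i) - 1 := by
  rw [jm_succ, add_mul, mul_assoc _ (U (adj i)) (U (adj i)), ← map_mul, adj_mul_self, map_one,
    mul_one, add_sub_cancel_right]

lemma jm_adj (i : Fin n) : jm U i.castSucc * U (adj i) = U (adj i) * jm U i.succ - 1 := by
  rw [jm_succ, mul_add, ← mul_assoc, ← mul_assoc, ← map_mul, adj_mul_self, map_one,
    one_mul, add_sub_cancel_right]

lemma jm_zero : jm U 0 = 0 := by
  have : Finset.Iio (0 : Fin (n + 1)) = ∅ := by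
    ext l; simp
  rw [jm, this, Finset.sum_empty]

end JucysMurphy

/-! ### Joint eigenprojections of the Jucys–Murphy elements -/

section Idempotents

/-- A real symmetric matrix is annihilated by a polynomial with simple real roots. -/
lemma hermitian_annihilated {ι : Type*} [Fintype ι] [DecidableEq ι] (M : Matrix ι ι ℝ)
    (hM : M.IsHermitian) : ∃ S : Finset ℝ, ∀ T : Finset ℝ, S ⊆ T →
      Polynomial.aeval M (Lagrange.nodal T id) = 0 := by
  refine ⟨Finset.univ.image hM.eigenvalues, fun T hT => ?_⟩
  have h := hM.spectral_theorem
  set φ := Unitary.conjStarAlgAut ℝ (Matrix ι ι ℝ) hM.eigenvectorUnitary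
  set D := Matrix.diagonalAlgHom (n := ι) (α := ℝ) ℝ
  have h2 : M = φ.toAlgEquiv.toAlgHom (D hM.eigenvalues) := h
  rw [h2, Polynomial.aeval_algHom_apply, Polynomial.aeval_algHom_apply]
  have h3 : Polynomial.aeval hM.eigenvalues (Lagrange.nodal T id) = 0 := by
    funext i
    have h4 := Polynomial.aeval_algHom_apply (Pi.evalAlgHom ℝ (fun _ : ι => ℝ) i)
      hM.eigenvalues (Lagrange.nodal T id)
    rw [Pi.evalAlgHom_apply, Pi.evalAlgHom_apply] at h4
    rw [← h4, Pi.zero_apply, Polynomial.coe_aeval_eq_eval]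
    exact Lagrange.eval_nodal_at_node (s := T) (v := id) (i := hM.eigenvalues i)
      (hT (Finset.mem_image_of_mem _ (Finset.mem_univ i)))
  rw [h3, map_zero, map_zero]

/-- The regular representation of a finite group by real matrices. -/
def regMat (G : Type*) [Group G] [Fintype G] [DecidableEq G] : G →* Matrix G G ℝ where
  toFun g := Matrix.of fun a b => if a = g * b then 1 else 0
  map_one' := by
    ext a b; simp [Matrix.one_apply]
  map_mul' g h := by
    ext a b
    simp [Matrix.mul_apply, mul_assoc]

/-- In any algebra generated by a finite group, a sum of involutions of the group is annihilated
by a polynomial with simple real roots: this holds in the regular representation, where the sum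
is a symmetric matrix, and the regular representation is faithful on the group algebra. -/
lemma involutions_annihilated {G : Type*} [Group G] [Fintype G] {B : Type*} [Ring B] [Algebra ℝ B]
    (U : G →* B) {ι : Type*} (s : Finset ι) (w : ι → G) (hw : ∀ i ∈ s, w i * w i = 1) :
    ∃ S : Finset ℝ, ∀ T : Finset ℝ, S ⊆ T →
      Polynomial.aeval (∑ i ∈ s, U (w i)) (Lagrange.nodal T id) = 0 := by
  classical
  have hherm : (∑ i ∈ s, regMat G (w i)).IsHermitian := by
    rw [Matrix.IsHermitian, Matrix.conjTranspose_sum]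
    refine Finset.sum_congr rfl fun i hi => ?_
    ext a b
    have h1 : (b = w i * a) ↔ (a = w i * b) := by
      constructor
      · rintro rfl; rw [← mul_assoc, hw i hi, one_mul]
      · rintro rfl; rw [← mul_assoc, hw i hi, one_mul]
    simp [regMat, Matrix.conjTranspose_apply, h1]
  obtain ⟨S, hS⟩ := hermitian_annihilated _ hherm
  refine ⟨S, fun T hT => ?_⟩
  set x : MonoidAlgebra ℝ G := ∑ i ∈ s, MonoidAlgebra.of ℝ G (w i) with hx
  have hU : MonoidAlgebra.lift ℝ B G U x = ∑ i ∈ s, U (w i) := by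
    rw [hx, map_sum]
    exact Finset.sum_congr rfl fun i _ => MonoidAlgebra.lift_of _ _
  have h0 : Polynomial.aeval x (Lagrange.nodal T id) = 0 := by
    have h1 := hS T hT
    have hreg : MonoidAlgebra.lift ℝ (Matrix G G ℝ) G (regMat G) x = ∑ i ∈ s, regMat G (w i) := by
      rw [hx, map_sum]
      exact Finset.sum_congr rfl fun i _ => MonoidAlgebra.lift_of _ _
    rw [← hreg, Polynomial.aeval_algHom_apply] at h1
    set y := Polynomial.aeval x (Lagrange.nodal T id)
    ext g
    have h2 := congrFun (congrFun h1 g) 1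
    rw [MonoidAlgebra.lift_apply, Finsupp.sum, Matrix.sum_apply] at h2
    simpa [regMat] using h2
  rw [← hU, Polynomial.aeval_algHom_apply, h0, map_zero]

open scoped IsMulCommutative in
/-- Commuting elements, all annihilated by the same polynomial with simple real roots, have a
complete system of joint eigenprojections. -/
lemma exists_eigenprojections {B : Type*} [Ring B] [Algebra ℝ B] {ι : Type*} [Fintype ι]
    [DecidableEq ι] (X : ι → B) (hX : ∀ i j, X i * X j = X j * X i) (S : Finset ℝ)
    (hS : S.Nonempty) (hann : ∀ i, Polynomial.aeval (X i) (Lagrange.nodal S id) = 0) :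
    ∃ (F : Finset (ι → ℝ)) (p : (ι → ℝ) → B), ∑ α ∈ F, p α = 1 ∧ (∀ α ∉ F, p α = 0) ∧
      (∀ α k, X k * p α = α k • p α) ∧ (∀ α k, p α * X k = α k • p α) := by
  classical
  have hcomm : ∀ a ∈ Set.range X, ∀ b ∈ Set.range X, a * b = b * a := by
    rintro _ ⟨i, rfl⟩ _ ⟨j, rfl⟩
    exact hX i j
  have : IsMulCommutative (Algebra.adjoin ℝ (Set.range X)) :=
    Algebra.isMulCommutative_adjoin ℝ hcomm
  let Y : ι → Algebra.adjoin ℝ (Set.range X) := fun i => ⟨X i, Algebra.subset_adjoin ⟨i, rfl⟩⟩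
  let V : Algebra.adjoin ℝ (Set.range X) →ₐ[ℝ] B := (Algebra.adjoin ℝ (Set.range X)).val
  have hV : Function.Injective V := Subtype.val_injective
  have hY : ∀ i, Polynomial.aeval (Y i) (Lagrange.nodal S id) = 0 := by
    intro i
    apply hV
    rw [← Polynomial.aeval_algHom_apply, map_zero]
    exact hann i
  let e : ι → ℝ → Algebra.adjoin ℝ (Set.range X) := fun i a =>
    Polynomial.aeval (Y i) (Lagrange.basis S id a)
  have he1 : ∀ i, ∑ a ∈ S, e i a = 1 := by
    intro i
    rw [← map_sum, Lagrange.sum_basis Function.injective_id.injOn hS, map_one]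
  have he2 : ∀ i, ∀ a ∈ S, Y i * e i a = a • e i a := by
    intro i a ha
    have h1 : (Polynomial.X - Polynomial.C a) * Lagrange.basis S id a =
        Polynomial.C (Lagrange.nodalWeight S id a) * Lagrange.nodal S id := by
      have h2 := Lagrange.basis_eq_prod_sub_inv_mul_nodal_div (v := (id : ℝ → ℝ)) ha
      have h3 := Lagrange.nodal_eq_mul_nodal_erase (v := (id : ℝ → ℝ)) ha
      have h4 := Lagrange.nodal_erase_eq_nodal_div (v := (id : ℝ → ℝ)) ha
      rw [h2, ← h4, h3]
      simp only [id]
      ring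
    have h5 := congrArg (Polynomial.aeval (Y i)) h1
    rw [map_mul, map_mul, hY, mul_zero, map_sub, Polynomial.aeval_X, Polynomial.aeval_C,
      sub_mul, sub_eq_zero] at h5
    rw [Algebra.smul_def]
    exact h5
  let F : Finset (ι → ℝ) := Fintype.piFinset fun _ => S
  let p : (ι → ℝ) → Algebra.adjoin ℝ (Set.range X) := fun α =>
    if α ∈ F then ∏ i, e i (α i) else 0
  have hp : ∀ α k, Y k * p α = α k • p α := by
    intro α k
    by_cases hα : α ∈ F
    · have : p α = ∏ i, e i (α i) := if_pos hα
      rw [this, ← Finset.mul_prod_erase _ _ (Finset.mem_univ k), ← mul_assoc,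
        he2 k _ (Fintype.mem_piFinset.1 hα k), smul_mul_assoc]
    · have : p α = 0 := if_neg hα
      rw [this, mul_zero, smul_zero]
  refine ⟨F, fun α => V (p α), ?_, ?_, ?_, ?_⟩
  · rw [← map_sum, Finset.sum_congr rfl (fun α hα => if_pos hα), ← Finset.prod_univ_sum,
      Finset.prod_congr rfl (fun i _ => he1 i), Finset.prod_const_one, map_one]
  · intro α hα
    have : p α = 0 := if_neg hα
    change V (p α) = 0
    rw [this, map_zero]
  · intro α k
    have := congrArg V (hp α k)
    rw [map_mul, map_smul] at this
    exact this
  · intro α k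
    have := congrArg V (hp α k)
    rw [mul_comm, map_mul, map_smul] at this
    exact this

end Idempotents

/-! ### Word length and order-preserving permutations -/

section Length

variable {n : ℕ}

/-- The least number of adjacent transpositions whose product is `g`. -/
noncomputable def len (g : Equiv.Perm (Fin (n + 1))) : ℕ :=
  sInf {l | ∃ L : List (Fin n), L.length = l ∧ (L.map adj).prod = g}

lemma len_le (L : List (Fin n)) : len (L.map adj).prod ≤ L.length := Nat.sInf_le ⟨L, rfl, rfl⟩

lemma exists_word (g : Equiv.Perm (Fin (n + 1))) :
    ∃ L : List (Fin n), L.length = len g ∧ (L.map adj).prod = g := by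
  have hne : {l | ∃ L : List (Fin n), L.length = l ∧ (L.map adj).prod = g}.Nonempty := by
    have hg : g ∈ Submonoid.closure
        (Set.range fun i : Fin n => Equiv.swap i.castSucc i.succ) := by
      rw [Equiv.Perm.mclosure_swap_castSucc_succ]; trivial
    obtain ⟨L, hL, rfl⟩ := Submonoid.exists_list_of_mem_closure hg
    have h : ∃ L' : List (Fin n), L'.map adj = L := by
      clear hg
      induction L with
      | nil => exact ⟨[], rfl⟩
      | cons a L ih =>
        obtain ⟨L', rfl⟩ := ih fun y hy => hL y (List.mem_cons_of_mem _ hy)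
        obtain ⟨i, rfl⟩ := hL a List.mem_cons_self
        exact ⟨i :: L', rfl⟩
    obtain ⟨L', rfl⟩ := h
    exact ⟨_, L', rfl, rfl⟩
  exact Nat.sInf_mem hne

lemma len_adj_mul_le (i : Fin n) (g : Equiv.Perm (Fin (n + 1))) :
    len (adj i * g) ≤ len g + 1 := by
  obtain ⟨L, h1, h2⟩ := exists_word g
  have := len_le (i :: L)
  rw [List.map_cons, List.prod_cons, h2, List.length_cons, h1] at this
  exact this

lemma sign_eq (g : Equiv.Perm (Fin (n + 1))) : Equiv.Perm.sign g = (-1) ^ len g := by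
  obtain ⟨L, h1, h2⟩ := exists_word g
  rw [← h1, ← h2]
  clear h1 h2
  induction L with
  | nil => simp
  | cons i L ih =>
    rw [List.map_cons, List.prod_cons, Equiv.Perm.sign_mul, ih, List.length_cons, pow_succ',
      adj, Equiv.Perm.sign_swap (Fin.castSucc_lt_succ).ne]

lemma len_adj_mul (i : Fin n) (g : Equiv.Perm (Fin (n + 1))) :
    len (adj i * g) = len g + 1 ∨ len g = len (adj i * g) + 1 := by
  have h1 := len_adj_mul_le i g
  have h2 := len_adj_mul_le i (adj i * g)
  rw [← mul_assoc, adj_mul_self, one_mul] at h2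
  have h3 : len (adj i * g) ≠ len g := by
    intro h
    have h4 := sign_eq (adj i * g)
    rw [h, ← sign_eq, Equiv.Perm.sign_mul, adj,
      Equiv.Perm.sign_swap (Fin.castSucc_lt_succ).ne] at h4
    rcases Int.units_eq_one_or (Equiv.Perm.sign g) with h5 | h5 <;> rw [h5] at h4 <;>
      exact absurd h4 (by decide)
  omega

/-- `g` is increasing on every level set of `α`. Among the permutations carrying `α` to a given
rearrangement of `α` there is exactly one such `g`. -/
def LevelMono (α : Fin (n + 1) → ℝ) (g : Equiv.Perm (Fin (n + 1))) : Prop :=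
  ∀ a b, a < b → α a = α b → g a < g b

lemma LevelMono.adj_mul {α : Fin (n + 1) → ℝ} {g : Equiv.Perm (Fin (n + 1))}
    (h : LevelMono α g) (i : Fin n) (hi : α (g⁻¹ i.castSucc) ≠ α (g⁻¹ i.succ)) :
    LevelMono α (adj i * g) := by
  intro a b hab he
  have h1 := h a b hab he
  have h2 : ¬ (g a = i.castSucc ∧ g b = i.succ) := by
    rintro ⟨h3, h4⟩
    apply hi
    rw [← h3, ← h4, perm_inv_apply, perm_inv_apply, he]
  rw [Equiv.Perm.mul_apply, Equiv.Perm.mul_apply, adj, Equiv.swap_apply_def, Equiv.swap_apply_def]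
  generalize g a = x at *
  generalize g b = y at *
  simp only [Fin.ext_iff, Fin.lt_def, Fin.val_castSucc, Fin.val_succ] at h1 h2 ⊢
  split_ifs <;> (try simp only [Fin.val_castSucc, Fin.val_succ]) <;> omega

lemma LevelMono.eq_one {α : Fin (n + 1) → ℝ} {u : Equiv.Perm (Fin (n + 1))}
    (h : LevelMono α u) (hu : ∀ a, α (u a) = α a) : u = 1 := by
  have key : ∀ k : ℕ, ∀ a : Fin (n + 1), a.val = k → u a = a := by
    intro k
    induction k using Nat.strong_induction_on with
    | _ k ih =>
      intro a ha
      have fix : ∀ b, b < a → u b = b := fun b hb => ih b.val (ha ▸ hb) b rfl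
      by_contra hne
      have h1 : a < u a := by
        rcases lt_trichotomy a (u a) with h1 | h1 | h1
        · exact h1
        · exact absurd h1.symm hne
        · exact absurd (u.injective (fix _ h1)) hne
      have h2 : u (u⁻¹ a) = a := perm_apply_inv u a
      have h3 : a < u⁻¹ a := by
        rcases lt_trichotomy a (u⁻¹ a) with h3 | h3 | h3
        · exact h3
        · rw [← h3] at h2; exact absurd h2 hne
        · have h4 := fix _ h3
          rw [h2] at h4
          exact absurd h4 h3.ne'
      have h4 := h a (u⁻¹ a) h3 (by rw [← hu (u⁻¹ a), h2])
      rw [h2] at h4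
      exact absurd h4 (not_lt.2 h1.le)
  ext a
  rw [key _ a rfl, Equiv.Perm.one_apply]

lemma LevelMono.unique {α : Fin (n + 1) → ℝ} {g h : Equiv.Perm (Fin (n + 1))}
    (hg : LevelMono α g) (hh : LevelMono α h) (e : α ∘ ⇑g⁻¹ = α ∘ ⇑h⁻¹) : g = h := by
  have e' : ∀ a, α (h⁻¹ (g a)) = α a := fun a => by
    have := congrFun e (g a)
    rw [Function.comp_apply, Function.comp_apply, perm_inv_apply] at this
    exact this.symm
  have h1 : LevelMono α (h⁻¹ * g) := by
    intro a b hab hα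
    have h2 := hg a b hab hα
    by_contra h3
    rcases lt_or_eq_of_le (not_lt.1 h3) with h4 | h4
    · have h5 := hh _ _ h4 (by
        rw [Equiv.Perm.mul_apply, Equiv.Perm.mul_apply, e', e', hα])
      rw [← Equiv.Perm.mul_apply, ← Equiv.Perm.mul_apply, mul_inv_cancel_left] at h5
      exact absurd h5 (not_lt.2 h2.le)
    · exact hab.ne ((h⁻¹ * g).injective h4).symm
  exact (inv_mul_eq_one.1 (h1.eq_one e')).symm

end Length

/-! ### The seminormal form -/

section Seminormal

variable {n : ℕ} {B : Type*} [Ring B] [Algebra ℝ B] (U : Equiv.Perm (Fin (n + 1)) →* B)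

/-- A complete system of joint eigenprojections `p α` of the Jucys–Murphy elements. The joint
eigenvalues are recorded by the functions `α`; all but finitely many of the `p α` vanish. -/
structure EigenSystem where
  F : Finset (Fin (n + 1) → ℝ)
  p : (Fin (n + 1) → ℝ) → B
  sum_p : ∑ α ∈ F, p α = 1
  p_out : ∀ α ∉ F, p α = 0
  jm_p : ∀ α k, jm U k * p α = α k • p α
  p_jm : ∀ α k, p α * jm U k = α k • p α

lemma exists_eigenSystem : Nonempty (EigenSystem U) := by
  classical
  have h : ∀ k : Fin (n + 1), ∃ S : Finset ℝ, ∀ T : Finset ℝ, S ⊆ T →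
      Polynomial.aeval (jm U k) (Lagrange.nodal T id) = 0 := fun k =>
    involutions_annihilated U _ _ fun i _ => Equiv.swap_mul_self i k
  choose S hS using h
  obtain ⟨F, p, h1, h2, h3, h4⟩ := exists_eigenprojections (jm U) (jm_commute U)
    (insert 0 (Finset.univ.biUnion S)) (Finset.insert_nonempty _ _)
    (fun k => hS k _ ((Finset.subset_biUnion_of_mem S (Finset.mem_univ k)).trans
      (Finset.subset_insert _ _)))
  exact ⟨⟨F, p, h1, h2, h3, h4⟩⟩

namespace EigenSystem

variable {U} (E : EigenSystem U)

lemma p_mul_p_of_ne {α β : Fin (n + 1) → ℝ} (h : α ≠ β) : E.p α * E.p β = 0 := by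
  obtain ⟨k, hk⟩ := Function.ne_iff.1 h
  have h1 : α k • (E.p α * E.p β) = β k • (E.p α * E.p β) := by
    rw [← smul_mul_assoc, ← E.p_jm, mul_assoc, E.jm_p, mul_smul_comm]
  rw [← sub_eq_zero, ← sub_smul, smul_eq_zero, sub_eq_zero] at h1
  exact h1.resolve_left hk

lemma eq_sum (x : B) : x = ∑ γ ∈ E.F, E.p γ * x := by
  rw [← Finset.sum_mul, E.sum_p, one_mul]

lemma p_idem (α : Fin (n + 1) → ℝ) : E.p α * E.p α = E.p α := by
  by_cases hα : α ∈ E.F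
  · have h := E.eq_sum (E.p α)
    rw [Finset.sum_eq_single α (fun γ _ hγ => E.p_mul_p_of_ne hγ) (fun h => absurd hα h)] at h
    exact h.symm
  · rw [E.p_out α hα, mul_zero]

/-- Off the diagonal, `adj i` maps the `α`-eigenspace only to the eigenspace of `α ∘ adj i`. -/
lemma p_adj_p_eq_zero (i : Fin n) {α γ : Fin (n + 1) → ℝ} (h1 : γ ≠ α) (h2 : γ ≠ α ∘ adj i) :
    E.p γ * U (adj i) * E.p α = 0 := by
  obtain ⟨k, hk⟩ := Function.ne_iff.1 h2
  have key : γ k • (E.p γ * U (adj i) * E.p α) = α (adj i k) • (E.p γ * U (adj i) * E.p α) := by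
    have h0 := E.p_mul_p_of_ne h1
    have e1 : γ k • (E.p γ * U (adj i) * E.p α) = E.p γ * (jm U k * U (adj i)) * E.p α := by
      rw [← mul_assoc, E.p_jm, smul_mul_assoc, smul_mul_assoc]
    have e2 : α (adj i k) • (E.p γ * U (adj i) * E.p α) =
        E.p γ * (U (adj i) * jm U (adj i k)) * E.p α := by
      rw [mul_assoc (E.p γ) (_ * _), mul_assoc (U _), E.jm_p, mul_smul_comm, mul_smul_comm,
        mul_assoc]
    rw [e1, e2]
    by_cases hk1 : k = i.castSucc
    · rw [hk1, adj_castSucc, jm_adj, mul_sub, sub_mul, mul_one, h0, sub_zero]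
    by_cases hk2 : k = i.succ
    · rw [hk2, adj_succ, adj_jm, mul_sub, sub_mul, mul_one, h0, sub_zero]
    rw [adj_of_ne i k hk1 hk2, adj_jm_of_ne U i k hk1 hk2]
  rw [← sub_eq_zero, ← sub_smul, smul_eq_zero, sub_eq_zero] at key
  exact key.resolve_left hk

lemma p_adj_p_self (i : Fin n) (α : Fin (n + 1) → ℝ) :
    (α i.succ - α i.castSucc) • (E.p α * U (adj i) * E.p α) = E.p α := by
  have h1 : E.p α * (jm U i.castSucc * U (adj i)) * E.p α =
      α i.castSucc • (E.p α * U (adj i) * E.p α) := by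
    rw [← mul_assoc, E.p_jm, smul_mul_assoc, smul_mul_assoc]
  have h2 : E.p α * (U (adj i) * jm U i.succ) * E.p α =
      α i.succ • (E.p α * U (adj i) * E.p α) := by
    rw [mul_assoc (E.p α) (_ * _), mul_assoc (U _), E.jm_p, mul_smul_comm, mul_smul_comm,
        mul_assoc]
  rw [jm_adj, mul_sub, sub_mul, mul_one, p_idem, h2] at h1
  rw [sub_smul, ← h1, sub_sub_cancel]

lemma diff_ne_zero (i : Fin n) {α : Fin (n + 1) → ℝ} (h : E.p α ≠ 0) :
    α i.succ - α i.castSucc ≠ 0 := by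
  intro h0
  have := E.p_adj_p_self i α
  rw [h0, zero_smul] at this
  exact h this.symm

lemma p_adj_p (i : Fin n) {α : Fin (n + 1) → ℝ} (h : E.p α ≠ 0) :
    E.p α * U (adj i) * E.p α = (α i.succ - α i.castSucc)⁻¹ • E.p α := by
  conv_rhs => rw [← E.p_adj_p_self i α]
  rw [smul_smul, inv_mul_cancel₀ (E.diff_ne_zero i h), one_smul]

lemma comp_adj_ne (i : Fin n) {α : Fin (n + 1) → ℝ} (h : E.p α ≠ 0) : α ∘ adj i ≠ α := by
  intro h1
  have h2 := congrFun h1 i.castSucc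
  rw [Function.comp_apply, adj_castSucc] at h2
  exact E.diff_ne_zero i h (sub_eq_zero.2 h2)

/-- Multiplication by `adj i` on the `α`-eigenspace has only two components. -/
lemma adj_mul_p (i : Fin n) {α : Fin (n + 1) → ℝ} (h : E.p α ≠ 0) :
    U (adj i) * E.p α = (α i.succ - α i.castSucc)⁻¹ • E.p α +
      E.p (α ∘ adj i) * U (adj i) * E.p α := by
  classical
  have hsub : ∑ γ ∈ E.F, E.p γ * (U (adj i) * E.p α) =
      ∑ γ ∈ ({α, α ∘ adj i} : Finset _), E.p γ * (U (adj i) * E.p α) := by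
    have e1 : ∑ γ ∈ E.F ∪ {α, α ∘ adj i}, E.p γ * (U (adj i) * E.p α) =
        ∑ γ ∈ E.F, E.p γ * (U (adj i) * E.p α) := by
      symm
      refine Finset.sum_subset Finset.subset_union_left fun γ _ hγ => ?_
      rw [E.p_out γ hγ, zero_mul]
    rw [← e1]
    symm
    refine Finset.sum_subset Finset.subset_union_right fun γ _ hγ => ?_
    rw [Finset.mem_insert, Finset.mem_singleton, not_or] at hγ
    rw [← mul_assoc, E.p_adj_p_eq_zero i hγ.1 hγ.2]
  rw [E.eq_sum (U (adj i) * E.p α), hsub, Finset.sum_pair (E.comp_adj_ne i h).symm, ← mul_assoc,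
    E.p_adj_p i h, mul_assoc]

lemma p_adj_adj_p (i : Fin n) {α : Fin (n + 1) → ℝ} (h : E.p α ≠ 0) :
    E.p α * U (adj i) * (E.p (α ∘ adj i) * U (adj i) * E.p α) =
      (1 - (α i.succ - α i.castSucc)⁻¹ ^ 2) • E.p α := by
  have h1 : E.p α * U (adj i) * (U (adj i) * E.p α) = E.p α := by
    rw [mul_assoc, ← mul_assoc (U _), ← map_mul, adj_mul_self, map_one, one_mul, p_idem]
  rw [E.adj_mul_p i h, mul_add, mul_smul_comm, E.p_adj_p i h, smul_smul] at h1
  rw [sub_smul, one_smul, sq]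
  exact eq_sub_of_add_eq' h1

/-- The joint eigenvalues are integers: if `α (i + 1) ≠ α i ± 1`, then `α ∘ adj i` is again a
joint eigenvalue, so integrality propagates from `α 0 = 0`. -/
lemma eigenvalue_int (k : ℕ) : ∀ (a : Fin (n + 1)), a.val = k → ∀ α, E.p α ≠ 0 →
    ∃ z : ℤ, α a = z := by
  induction k with
  | zero =>
    intro a ha α h
    have ha0 : a = 0 := Fin.ext ha
    subst ha0
    have h1 := E.jm_p α 0
    rw [jm_zero, zero_mul] at h1
    refine ⟨0, ?_⟩
    rw [Int.cast_zero]
    exact (smul_eq_zero.1 h1.symm).resolve_right h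
  | succ k ih =>
    intro a ha α h
    have hk : k < n := by have := a.isLt; omega
    obtain ⟨i, rfl⟩ : ∃ i : Fin n, a = i.succ := ⟨⟨k, hk⟩, Fin.ext ha⟩
    have hi : (i.castSucc).val = k := by
      rw [Fin.val_succ] at ha; rw [Fin.val_castSucc]; omega
    obtain ⟨z, hz⟩ := ih _ hi α h
    by_cases h1 : 1 - (α i.succ - α i.castSucc)⁻¹ ^ 2 = 0
    · have h2 : (α i.succ - α i.castSucc) ^ 2 = 1 := by
        rw [inv_pow, sub_eq_zero] at h1
        exact inv_eq_one.1 h1.symm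
      rcases mul_self_eq_one_iff.1 ((sq _).symm.trans h2) with h3 | h3
      · exact ⟨z + 1, by push_cast; linarith⟩
      · exact ⟨z - 1, by push_cast; linarith⟩
    · have h2 : E.p (α ∘ adj i) ≠ 0 := by
        intro h3
        have h4 := E.p_adj_adj_p i h
        rw [h3, zero_mul, zero_mul, mul_zero] at h4
        exact (smul_ne_zero h1 h) h4.symm
      obtain ⟨w, hw⟩ := ih _ hi _ h2
      rw [Function.comp_apply, adj_castSucc] at hw
      exact ⟨w, hw⟩

lemma abs_inv_diff_le (i : Fin n) {α : Fin (n + 1) → ℝ} (h : E.p α ≠ 0) :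
    |(α i.succ - α i.castSucc)⁻¹| ≤ 1 := by
  obtain ⟨z, hz⟩ := E.eigenvalue_int _ i.succ rfl α h
  obtain ⟨w, hw⟩ := E.eigenvalue_int _ i.castSucc rfl α h
  have h1 := E.diff_ne_zero i h
  rw [hz, hw] at h1 ⊢
  have h2 : z - w ≠ 0 := by exact_mod_cast h1
  rw [abs_inv]
  apply inv_le_one_of_one_le₀
  exact_mod_cast Int.one_le_abs h2

/-- If `U g` has a component from the `α`-eigenspace to the `γ`-eigenspace, then `γ` is a
rearrangement of `α`, and the level-monotone permutation realising it is no longer than `g`. -/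
lemma exists_levelMono (L : List (Fin n)) (α : Fin (n + 1) → ℝ) : ∀ γ,
    E.p γ * U (L.map adj).prod * E.p α ≠ 0 →
      ∃ h, LevelMono α h ∧ α ∘ ⇑h⁻¹ = γ ∧ len h ≤ L.length := by
  induction L with
  | nil =>
    intro γ hγ
    rw [List.map_nil, List.prod_nil, map_one, mul_one] at hγ
    have h1 : γ = α := by
      by_contra h2
      exact hγ (E.p_mul_p_of_ne h2)
    refine ⟨1, fun a b hab _ => hab, ?_, len_le []⟩
    rw [h1, inv_one]; rfl
  | cons i L ih =>
    intro γ hγ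
    have hne : ∃ δ, E.p γ * U (adj i) * E.p δ * (E.p δ * U (L.map adj).prod * E.p α) ≠ 0 := by
      by_contra hall
      push Not at hall
      apply hγ
      rw [List.map_cons, List.prod_cons, map_mul, mul_assoc, mul_assoc,
        E.eq_sum (U (L.map adj).prod * E.p α), Finset.mul_sum, Finset.mul_sum]
      refine Finset.sum_eq_zero fun δ _ => ?_
      have := hall δ
      rw [← E.p_idem δ]
      simpa only [mul_assoc] using this
    obtain ⟨δ, hδ⟩ := hne
    have hγδ : E.p γ * U (adj i) * E.p δ ≠ 0 := left_ne_zero_of_mul hδ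
    obtain ⟨h, hh1, hh2, hh3⟩ := ih δ (right_ne_zero_of_mul hδ)
    by_cases h1 : γ = δ
    · exact ⟨h, hh1, h1 ▸ hh2, hh3.trans (Nat.le_succ _)⟩
    by_cases h2 : γ = δ ∘ adj i
    · have h3 : E.p δ ≠ 0 := right_ne_zero_of_mul hγδ
      refine ⟨adj i * h, hh1.adj_mul i ?_, ?_, ?_⟩
      · intro h4
        apply E.diff_ne_zero i h3
        rw [← hh2, Function.comp_apply, Function.comp_apply, h4, sub_self]
      · rw [h2, ← hh2, mul_inv_rev, adj_inv]; rfl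
      · rw [List.length_cons]
        exact (len_adj_mul_le i h).trans (Nat.succ_le_succ hh3)
    · exact absurd (E.p_adj_p_eq_zero i h1 h2) hγδ

/-- The component of `U g` from the `α`-eigenspace to the eigenspace of its translate by `g`. -/
def N (g : Equiv.Perm (Fin (n + 1))) (α : Fin (n + 1) → ℝ) : B :=
  E.p (α ∘ ⇑g⁻¹) * U g * E.p α

/-- Going up in length, the intertwiner attached to `adj i` carries `N g α` to
`N (adj i * g) α`: any other contribution would give a level-monotone permutation that is
too short. -/
lemma intertwiner_up (i : Fin n) {g : Equiv.Perm (Fin (n + 1))} {α : Fin (n + 1) → ℝ}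
    (hg : LevelMono α g) (hp : E.p (α ∘ ⇑g⁻¹) ≠ 0) (hlen : len (adj i * g) = len g + 1) :
    E.p ((α ∘ ⇑g⁻¹) ∘ adj i) * U (adj i) * E.N g α = E.N (adj i * g) α := by
  classical
  set β := α ∘ ⇑g⁻¹ with hβ
  have hne : β ∘ adj i ≠ β := E.comp_adj_ne i hp
  have hcomp : α ∘ ⇑(adj i * g)⁻¹ = β ∘ adj i := by
    rw [mul_inv_rev, adj_inv]; rfl
  have hmono : LevelMono α (adj i * g) := by
    refine hg.adj_mul i fun h => E.diff_ne_zero i hp ?_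
    rw [hβ, Function.comp_apply, Function.comp_apply, h, sub_self]
  have hzero : E.p (β ∘ adj i) * U g * E.p α = 0 := by
    by_contra h
    obtain ⟨L, hL1, hL2⟩ := exists_word g
    rw [← hL2] at h
    obtain ⟨h', h1, h2, h3⟩ := E.exists_levelMono L α _ h
    have h4 : h' = adj i * g := h1.unique hmono (h2.trans hcomp.symm)
    rw [h4, hlen, hL1] at h3
    omega
  have h1 : E.N (adj i * g) α = ∑ δ ∈ E.F, E.p (β ∘ adj i) * U (adj i) * E.p δ *
      (E.p δ * U g * E.p α) := by
    rw [N, hcomp, map_mul, mul_assoc, mul_assoc, E.eq_sum (U g * E.p α), Finset.mul_sum,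
      Finset.mul_sum]
    refine Finset.sum_congr rfl fun δ _ => ?_
    conv_lhs => rw [← E.p_idem δ]
    simp only [mul_assoc]
  have h2 : ∀ δ, δ ≠ β → E.p (β ∘ adj i) * U (adj i) * E.p δ * (E.p δ * U g * E.p α) = 0 := by
    intro δ hδ
    by_cases h3 : δ = β ∘ adj i
    · rw [h3, hzero, mul_zero]
    · rw [E.p_adj_p_eq_zero i, zero_mul]
      · exact fun h => h3 h.symm
      · intro h
        apply hδ
        have := congrArg (fun f => f ∘ ⇑(adj i)) h
        funext x
        have h4 := congrFun this x
        simp only [Function.comp_apply, ← Equiv.Perm.mul_apply, adj_mul_self,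
          Equiv.Perm.one_apply] at h4
        exact h4.symm
  have hF : β ∈ E.F := by
    by_contra h
    exact hp (E.p_out _ h)
  rw [h1, Finset.sum_eq_single β (fun δ _ => h2 δ) (fun h => absurd hF h), N, ← hβ]
  simp only [mul_assoc]
  rw [← mul_assoc (E.p β) (E.p β), p_idem]

/-- The cone spanned by the elements `N g α` with `g` increasing on the level sets of `α`. -/
def cone : AddSubmonoid B := AddSubmonoid.closure
  {x | ∃ (c : ℝ) (g : Equiv.Perm (Fin (n + 1))) (α : Fin (n + 1) → ℝ), 0 ≤ c ∧ LevelMono α g ∧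
    x = c • E.N g α}

lemma smul_N_mem {c : ℝ} (hc : 0 ≤ c) {g : Equiv.Perm (Fin (n + 1))} {α : Fin (n + 1) → ℝ}
    (hg : LevelMono α g) : c • E.N g α ∈ E.cone :=
  AddSubmonoid.subset_closure ⟨c, g, α, hc, hg, rfl⟩

lemma one_mem_cone : (1 : B) ∈ E.cone := by
  rw [← E.sum_p]
  refine sum_mem fun α _ => ?_
  have h : E.p α = (1 : ℝ) • E.N 1 α := by
    rw [N, one_smul, map_one, mul_one, inv_one]
    exact (E.p_idem α).symm
  rw [h]
  exact E.smul_N_mem zero_le_one fun a b hab _ => hab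

lemma one_add_adj_mul_N (i : Fin n) {g : Equiv.Perm (Fin (n + 1))} {α : Fin (n + 1) → ℝ}
    (hg : LevelMono α g) : (1 + U (adj i)) * E.N g α ∈ E.cone := by
  set β := α ∘ ⇑g⁻¹ with hβ
  by_cases hp : E.p β = 0
  · rw [N, ← hβ, hp, zero_mul, zero_mul, mul_zero]
    exact zero_mem _
  have hdec : (1 + U (adj i)) * E.N g α = (1 + (β i.succ - β i.castSucc)⁻¹) • E.N g α +
      E.p (β ∘ adj i) * U (adj i) * E.N g α := by
    have h1 : E.N g α = E.p β * E.N g α := by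
      rw [N, ← hβ, ← mul_assoc, ← mul_assoc, p_idem]
    rw [add_mul, one_mul, add_smul, one_smul, add_assoc]
    congr 1
    conv_lhs => rw [h1, ← mul_assoc, E.adj_mul_p i hp, add_mul, smul_mul_assoc, mul_assoc, ← h1]
  rw [hdec]
  refine add_mem (E.smul_N_mem ?_ hg) ?_
  · have := neg_le_of_abs_le (E.abs_inv_diff_le i hp)
    linarith
  have hmono : LevelMono α (adj i * g) := by
    refine hg.adj_mul i fun h => E.diff_ne_zero i hp ?_
    rw [hβ, Function.comp_apply, Function.comp_apply, h, sub_self]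
  rcases len_adj_mul i g with hlen | hlen
  · rw [E.intertwiner_up i hg hp hlen, ← one_smul ℝ (E.N (adj i * g) α)]
    exact E.smul_N_mem zero_le_one hmono
  · have hcomp : α ∘ ⇑(adj i * g)⁻¹ = β ∘ adj i := by
      rw [mul_inv_rev, adj_inv]; rfl
    have hcc : (β ∘ adj i) ∘ adj i = β := by
      funext x
      rw [Function.comp_apply, Function.comp_apply, ← Equiv.Perm.mul_apply, adj_mul_self,
        Equiv.Perm.one_apply]
    have hgg : adj i * (adj i * g) = g := by rw [← mul_assoc, adj_mul_self, one_mul]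
    by_cases hp' : E.p (β ∘ adj i) = 0
    · rw [hp', zero_mul, zero_mul]
      exact zero_mem _
    -- here `N g α` is itself the image of `N (adj i * g) α` under an intertwiner
    have h1 := E.intertwiner_up i hmono (by rwa [hcomp]) (by rw [hgg]; exact hlen)
    rw [hgg, hcomp, hcc] at h1
    have h2 : E.N (adj i * g) α = E.p (β ∘ adj i) * E.N (adj i * g) α := by
      rw [N, hcomp, ← mul_assoc, ← mul_assoc, p_idem]
    have h3 := E.p_adj_adj_p i hp'
    rw [hcc] at h3
    have h4 : E.p (β ∘ adj i) * U (adj i) * E.N g α =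
        (1 - ((β ∘ adj i) i.succ - (β ∘ adj i) i.castSucc)⁻¹ ^ 2) • E.N (adj i * g) α := by
      conv_rhs => rw [h2, ← smul_mul_assoc, ← h3]
      rw [← h1]
      conv_lhs => rw [h2]
      simp only [mul_assoc]
    rw [h4]
    refine E.smul_N_mem ?_ hmono
    have := E.abs_inv_diff_le i hp'
    rw [sub_nonneg, sq_le_one_iff_abs_le_one]
    exact this

lemma smul_mem_cone {c : ℝ} (hc : 0 ≤ c) {x : B} (hx : x ∈ E.cone) : c • x ∈ E.cone := by
  induction hx using AddSubmonoid.closure_induction with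
  | mem y hy =>
    obtain ⟨c', g', α', hc', hg', rfl⟩ := hy
    rw [smul_smul]
    exact E.smul_N_mem (mul_nonneg hc hc') hg'
  | zero => rw [smul_zero]; exact zero_mem _
  | add y z _ _ hy hz => rw [smul_add]; exact add_mem hy hz

lemma one_add_adj_mul_mem (i : Fin n) {x : B} (hx : x ∈ E.cone) :
    (1 + U (adj i)) * x ∈ E.cone := by
  induction hx using AddSubmonoid.closure_induction with
  | mem x hx =>
    obtain ⟨c, g, α, hc, hg, rfl⟩ := hx
    rw [mul_smul_comm]
    exact E.smul_mem_cone hc (E.one_add_adj_mul_N i hg)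
  | zero => rw [mul_zero]; exact zero_mem _
  | add x y _ _ hx hy => rw [mul_add]; exact add_mem hx hy

end EigenSystem

end Seminormal

/-! ### Positivity of the trace -/

section Trace

variable {n d : ℕ} (U : Equiv.Perm (Fin (n + 1)) →* Matrix (Fin d) (Fin d) ℂ)

lemma trace_idem_nonneg {P : Matrix (Fin d) (Fin d) ℂ} (h : P * P = P) : 0 ≤ P.trace.re := by
  have h1 : IsIdempotentElem (Matrix.toLin' P) := by
    rw [IsIdempotentElem, Module.End.mul_eq_comp, ← Matrix.toLin'_mul, h]
  rw [← Matrix.trace_toLin'_eq, (LinearMap.IsIdempotentElem.isProj_range _ h1).trace,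
    Complex.natCast_re]
  exact Nat.cast_nonneg _

variable {U} in
lemma EigenSystem.trace_nonneg (E : EigenSystem U) {x : Matrix (Fin d) (Fin d) ℂ}
    (hx : x ∈ E.cone) : 0 ≤ x.trace.re := by
  induction hx using AddSubmonoid.closure_induction with
  | mem x hx =>
    obtain ⟨c, g, α, hc, hg, rfl⟩ := hx
    rw [Matrix.trace_smul, Complex.smul_re, smul_eq_mul]
    refine mul_nonneg hc ?_
    by_cases h : α ∘ ⇑g⁻¹ = α
    · have h1 : g = 1 := hg.eq_one fun a => by
        have := congrFun h (g a)
        rw [Function.comp_apply, perm_inv_apply] at this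
        exact this.symm
      refine trace_idem_nonneg ?_
      rw [N, h, h1, map_one, mul_one, p_idem, p_idem]
    · rw [N, Matrix.trace_mul_comm, ← mul_assoc, E.p_mul_p_of_ne fun e => h e.symm, zero_mul,
        Matrix.trace_zero, Complex.zero_re]
  | zero => rw [Matrix.trace_zero, Complex.zero_re]
  | add x y _ _ hx hy =>
    rw [Matrix.trace_add, Complex.add_re]
    exact add_nonneg hx hy

/-- The closed semiring generated by the nonnegative scalars and the elements `1 + U (adj i)`. -/
noncomputable def K : Subsemiring (Matrix (Fin d) (Fin d) ℂ) :=
  (Subsemiring.closure ({x | ∃ c : ℝ, 0 ≤ c ∧ x = c • 1} ∪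
    Set.range fun i : Fin n => 1 + U (adj i))).topologicalClosure

lemma smul_one_mem_K {c : ℝ} (hc : 0 ≤ c) : c • (1 : Matrix (Fin d) (Fin d) ℂ) ∈ K U :=
  Subsemiring.le_topologicalClosure _ (Subsemiring.subset_closure (Or.inl ⟨c, hc, rfl⟩))

lemma smul_mem_K {c : ℝ} (hc : 0 ≤ c) {x : Matrix (Fin d) (Fin d) ℂ} (hx : x ∈ K U) :
    c • x ∈ K U := by
  rw [← one_mul x, ← smul_mul_assoc]
  exact mul_mem (smul_one_mem_K U hc) hx

lemma one_add_mem_K (i : Fin n) : 1 + U (adj i) ∈ K U :=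
  Subsemiring.le_topologicalClosure _ (Subsemiring.subset_closure (Or.inr ⟨i, rfl⟩))

lemma isClosed_K : IsClosed (K U : Set (Matrix (Fin d) (Fin d) ℂ)) :=
  Subsemiring.isClosed_topologicalClosure _

lemma trace_nonneg_of_mem_K {x : Matrix (Fin d) (Fin d) ℂ} (hx : x ∈ K U) :
    0 ≤ x.trace.re := by
  obtain ⟨E⟩ := exists_eigenSystem U
  have hcl : IsClosed {x : Matrix (Fin d) (Fin d) ℂ | 0 ≤ x.trace.re} := by
    refine isClosed_le continuous_const ?_
    exact Complex.continuous_re.comp (Continuous.matrix_trace continuous_id)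
  refine closure_minimal (fun y hy => ?_) hcl hx
  suffices h : ∀ z ∈ E.cone, y * z ∈ E.cone by
    have := h 1 E.one_mem_cone
    rw [mul_one] at this
    exact E.trace_nonneg this
  rw [SetLike.mem_coe] at hy
  induction hy using Subsemiring.closure_induction with
  | mem y hy =>
    intro z hz
    rcases hy with ⟨c, hc, rfl⟩ | ⟨i, rfl⟩
    · rw [smul_mul_assoc, one_mul]
      exact E.smul_mem_cone hc hz
    · exact E.one_add_adj_mul_mem i hz
  | zero => intro z _; rw [zero_mul]; exact zero_mem _
  | one => intro z hz; rwa [one_mul]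
  | add x y _ _ hx hy => intro z hz; rw [add_mul]; exact add_mem (hx z hz) (hy z hz)
  | mul x y _ _ hx hy => intro z hz; rw [mul_assoc]; exact hx _ (hy z hz)

end Trace

/-! ### Sums over Young subgroups -/

section Young

variable {n d : ℕ} (U : Equiv.Perm (Fin (n + 1)) →* Matrix (Fin d) (Fin d) ℂ)

/-- The stabiliser of a monotone function is generated by adjacent transpositions. -/
lemma stabilizer_le {κ : Fin (n + 1) → ℕ} (hκ : Monotone κ)
    (S : Subgroup (Equiv.Perm (Fin (n + 1))))
    (hS : ∀ i : Fin n, κ i.castSucc = κ i.succ → adj i ∈ S) {σ : Equiv.Perm (Fin (n + 1))}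
    (hσ : κ ∘ σ = κ) : σ ∈ S := by
  have hswap : ∀ k : ℕ, ∀ i j : Fin (n + 1), i < j → j.val = i.val + k + 1 → κ i = κ j →
      Equiv.swap i j ∈ S := by
    intro k
    induction k with
    | zero =>
      intro i j hij hk he
      have h1 : i.val < n := by have := j.isLt; omega
      have e1 : i = (⟨i, h1⟩ : Fin n).castSucc := rfl
      have e2 : j = (⟨i, h1⟩ : Fin n).succ := Fin.ext hk
      rw [e1, e2] at he ⊢
      exact hS _ he
    | succ k ih =>
      intro i j hij hk he
      have h1 : i.val + k + 1 < n := by have := j.isLt; omega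
      set l : Fin n := ⟨i.val + k + 1, h1⟩ with hl
      have e2 : j = l.succ := Fin.ext hk
      have h2 : i < l.castSucc := by rw [Fin.lt_def, Fin.val_castSucc, hl]; dsimp only; omega
      have h3 : l.castSucc ≤ j := by rw [e2]; exact Fin.castSucc_lt_succ.le
      have h4 : κ i = κ l.castSucc := le_antisymm (hκ h2.le) (he ▸ hκ h3)
      have h5 := ih i l.castSucc h2 rfl h4
      have h6 : adj l ∈ S := hS l (by rw [← e2, ← he, h4])
      have h7 : Equiv.swap i j = adj l * Equiv.swap i l.castSucc * adj l := by
        rw [Equiv.mul_swap_eq_swap_mul, mul_assoc, adj_mul_self, mul_one, adj_castSucc, ← e2,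
          adj_of_ne l i h2.ne (h2.trans Fin.castSucc_lt_succ).ne]
      rw [h7]
      exact mul_mem (mul_mem h6 h5) h6
  have key := Tuple.bubble_sort_induction' (f := σ)
    (P := fun τ => κ ∘ τ = κ ∧ ∃ η ∈ S, ⇑σ = τ ∘ η) ⟨hσ, 1, one_mem _, rfl⟩ (by
      rintro τ i j hij hlt ⟨h1, η, hη, h2⟩
      have e1 := congrFun h1 i
      have e2 := congrFun h1 j
      have he : κ i = κ j := by
        refine le_antisymm (hκ hij.le) ?_
        rw [← e1, ← e2]
        exact hκ hlt.le
      have hsw : κ ∘ Equiv.swap i j = κ := by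
        funext x
        rw [Function.comp_apply, Equiv.swap_apply_def]
        split_ifs with h3 h3
        · rw [h3, he]
        · rw [h3, he]
        · rfl
      refine ⟨?_, Equiv.swap i j * η, mul_mem (hswap (j.val - i.val - 1) i j hij ?_ he) hη, ?_⟩
      · rw [← Function.comp_assoc, ← Function.comp_assoc, Function.comp_assoc κ, h1, hsw]
      · rw [Fin.lt_def] at hij; omega
      · conv_lhs => rw [h2]
        funext x
        simp only [Function.comp_apply, Equiv.Perm.mul_apply, Equiv.swap_apply_self])
  obtain ⟨-, η, hη, h2⟩ := key
  have h4 : ⇑σ ∘ Tuple.sort σ = id :=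
    Tuple.unique_monotone (f := id) (σ := (Tuple.sort σ).trans σ) (τ := 1)
      (Tuple.monotone_sort (σ : Fin (n + 1) → Fin (n + 1))) monotone_id
  have h5 : σ = η := by
    ext x
    rw [h2, h4, Function.id_comp]
  rwa [h5]

/-- The sum over the stabiliser of a monotone function is a limit of nonnegative combinations of
products of the `1 + U (adj i)`. Among the probability measures on the stabiliser whose image
lies in `K U`, one with the least sum of squares is invariant under each generator, hence
uniform. -/
lemma sum_stabilizer_mem_K {κ : Fin (n + 1) → ℕ} (hκ : Monotone κ) :
    ∑ σ : Equiv.Perm (Fin (n + 1)), (if κ ∘ σ = κ then U σ else 0) ∈ K U := by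
  classical
  let Φ : (Equiv.Perm (Fin (n + 1)) → ℝ) → Matrix (Fin d) (Fin d) ℂ := fun f => ∑ g, f g • U g
  have hΦ : Continuous Φ :=
    continuous_finsetSum _ fun g _ => (continuous_apply g).smul continuous_const
  let Z : Set (Equiv.Perm (Fin (n + 1)) → ℝ) :=
    {f | f ∈ stdSimplex ℝ _ ∧ (∀ g : Equiv.Perm (Fin (n + 1)), κ ∘ ⇑g ≠ κ → f g = 0) ∧ Φ f ∈ K U}
  have hZ : IsCompact Z := by
    refine IsCompact.inter_right (isCompact_stdSimplex ℝ _) (IsClosed.inter ?_ ?_)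
    · have h : {f : Equiv.Perm (Fin (n + 1)) → ℝ |
          ∀ g : Equiv.Perm (Fin (n + 1)), κ ∘ ⇑g ≠ κ → f g = 0} =
          ⋂ g : Equiv.Perm (Fin (n + 1)), ⋂ _ : κ ∘ ⇑g ≠ κ, {f | f g = 0} := by
        ext f
        simp only [Set.mem_ofPred_eq, Set.mem_iInter]
      change IsClosed {f : Equiv.Perm (Fin (n + 1)) → ℝ |
        ∀ g : Equiv.Perm (Fin (n + 1)), κ ∘ ⇑g ≠ κ → f g = 0}
      rw [h]
      exact isClosed_iInter fun g => isClosed_iInter fun _ =>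
        isClosed_eq (continuous_apply g) continuous_const
    · exact (isClosed_K U).preimage hΦ
  have hne : Z.Nonempty := by
    refine ⟨Pi.single 1 1, single_mem_stdSimplex _ _, fun g hg => ?_, ?_⟩
    · refine Pi.single_eq_of_ne ?_ _
      rintro rfl
      exact hg rfl
    · have : Φ (Pi.single 1 1) = 1 := by
        simp only [Φ]
        rw [Finset.sum_eq_single 1]
        · rw [Pi.single_eq_same, one_smul, map_one]
        · intro g _ hg
          rw [Pi.single_eq_of_ne hg, zero_smul]
        · intro h; exact absurd (Finset.mem_univ _) h
      rw [this]
      exact one_mem _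
  obtain ⟨f, ⟨⟨hf0, hf1⟩, hf2, hf3⟩, hmin⟩ := hZ.exists_isMinOn hne (f := fun f => ∑ g, f g ^ 2)
    (Continuous.continuousOn (by fun_prop))
  have hinv : ∀ i : Fin n, κ i.castSucc = κ i.succ → ∀ g, f (adj i * g) = f g := by
    intro i hi
    have hκi : κ ∘ adj i = κ := by
      funext x
      rw [Function.comp_apply, adj, Equiv.swap_apply_def]
      split_ifs with h1 h1
      · rw [h1, hi]
      · rw [h1, hi]
      · rfl
    have hsum : ∀ F : Equiv.Perm (Fin (n + 1)) → ℝ, ∑ g, F (adj i * g) = ∑ g, F g := fun F =>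
      Equiv.sum_comp (Equiv.mulLeft (adj i)) F
    let f' : Equiv.Perm (Fin (n + 1)) → ℝ := fun g => (f g + f (adj i * g)) / 2
    have hf' : f' ∈ Z := by
      refine ⟨⟨fun g => ?_, ?_⟩, fun g hg => ?_, ?_⟩
      · exact div_nonneg (add_nonneg (hf0 _) (hf0 _)) zero_le_two
      · rw [← Finset.sum_div, Finset.sum_add_distrib, hsum, hf1]
        norm_num
      · have h1 : κ ∘ ⇑(adj i * g) ≠ κ := by
          rw [Equiv.Perm.coe_mul, ← Function.comp_assoc, hκi]
          exact hg
        simp only [f']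
        rw [hf2 g hg, hf2 _ h1, add_zero, zero_div]
      · have h1 : Φ f' = (1 / 2 : ℝ) • ((1 + U (adj i)) * Φ f) := by
          have h2 : U (adj i) * Φ f = ∑ g, f (adj i * g) • U g := by
            rw [← Equiv.sum_comp (Equiv.mulLeft (adj i)) fun g => f (adj i * g) • U g,
              Finset.mul_sum]
            refine Finset.sum_congr rfl fun g _ => ?_
            rw [Equiv.coe_mulLeft, ← mul_assoc, adj_mul_self, one_mul, map_mul, mul_smul_comm]
          rw [add_mul, one_mul, h2, ← Finset.sum_add_distrib, Finset.smul_sum]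
          refine Finset.sum_congr rfl fun g _ => ?_
          rw [← add_smul, smul_smul]
          congr 1
          simp only [f']
          ring
        rw [h1]
        exact smul_mem_K U (by norm_num) (mul_mem (one_add_mem_K U i) hf3)
    have h1 : ∑ g, f g ^ 2 ≤ ∑ g, f' g ^ 2 := hmin hf'
    have h2 : ∑ g, f' g ^ 2 + ∑ g, (f g - f (adj i * g)) ^ 2 / 4 = ∑ g, f g ^ 2 := by
      have h3 := hsum fun g => f g ^ 2
      have h4 : ∑ g, f' g ^ 2 + ∑ g, (f g - f (adj i * g)) ^ 2 / 4 =
          ∑ g, (f g ^ 2 / 2 + f (adj i * g) ^ 2 / 2) := by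
        rw [← Finset.sum_add_distrib]
        refine Finset.sum_congr rfl fun g _ => ?_
        simp only [f']
        ring
      rw [h4, Finset.sum_add_distrib, ← Finset.sum_div, ← Finset.sum_div, h3]
      ring
    have h5 : ∑ g, (f g - f (adj i * g)) ^ 2 / 4 = 0 :=
      le_antisymm (by linarith) (Finset.sum_nonneg fun g _ => by positivity)
    intro g
    have h6 := (Finset.sum_eq_zero_iff_of_nonneg (fun g _ => by positivity)).1 h5 g
      (Finset.mem_univ g)
    have h7 : f g - f (adj i * g) = 0 := by
      have h8 : (f g - f (adj i * g)) ^ 2 = 0 := by linarith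
      exact pow_eq_zero_iff (two_ne_zero) |>.1 h8
    linarith
  let S : Subgroup (Equiv.Perm (Fin (n + 1))) :=
    { carrier := {σ | ∀ g, f (σ * g) = f g}
      one_mem' := fun g => by rw [one_mul]
      mul_mem' := fun {a b} ha hb g => by rw [mul_assoc, ha, hb]
      inv_mem' := fun {a} ha g => by rw [← ha, mul_inv_cancel_left] }
  have hconst : ∀ σ : Equiv.Perm (Fin (n + 1)), κ ∘ σ = κ → f σ = f 1 := fun σ hσ => by
    have h1 : σ ∈ S := stabilizer_le hκ S hinv hσ
    rw [← h1 1, mul_one]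
  have hf : ∀ σ : Equiv.Perm (Fin (n + 1)), f σ = if κ ∘ σ = κ then f 1 else 0 := fun σ => by
    split_ifs with h
    · exact hconst σ h
    · exact hf2 σ h
  have hpos : 0 < f 1 := by
    refine lt_of_le_of_ne (hf0 1) fun h => ?_
    rw [Finset.sum_eq_zero] at hf1
    · exact zero_ne_one hf1
    · intro σ _
      rw [hf, ← h, ite_self]
  have hfin : ∑ σ : Equiv.Perm (Fin (n + 1)), (if κ ∘ σ = κ then U σ else 0) =
      (f 1)⁻¹ • Φ f := by
    rw [Finset.smul_sum]
    refine Finset.sum_congr rfl fun σ _ => ?_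
    rw [hf σ]
    split_ifs
    · rw [smul_smul, inv_mul_cancel₀ hpos.ne', one_smul]
    · rw [zero_smul, smul_zero]
  rw [hfin]
  exact smul_mem_K U (inv_nonneg.2 hpos.le) hf3

end Young

/-! ### A Cauchy–Binet formula with values in an algebra -/

section CauchyBinet

variable {R E : Type*} [CommRing R] [Ring E] [Algebra R E] {m : ℕ} (W : Equiv.Perm (Fin m) →* E)

/-- The universal immanant of the matrix `(M (I a) (J b))`: applying a trace to it gives the
immanant for the corresponding character. -/
def immE (M : ℕ → ℕ → R) (I J : Fin m → ℕ) : E :=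
  ∑ σ : Equiv.Perm (Fin m), (∏ a, M (I a) (J (σ a))) • W σ

lemma immE_congr {M M' : ℕ → ℕ → R} {I J : Fin m → ℕ}
    (h : ∀ a b, M (I a) (J b) = M' (I a) (J b)) : immE W M I J = immE W M' I J := by
  simp only [immE, h]

lemma immE_comp_right (M : ℕ → ℕ → R) (I J : Fin m → ℕ) (π : Equiv.Perm (Fin m)) :
    immE W M I (J ∘ π) = W π⁻¹ * immE W M I J := by
  rw [immE, immE, Finset.mul_sum]
  conv_rhs => rw [← Equiv.sum_comp (Equiv.mulLeft π)]
  refine Finset.sum_congr rfl fun σ _ => ?_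
  rw [mul_smul_comm, ← map_mul, Equiv.coe_mulLeft, inv_mul_cancel_left]
  rfl

lemma immE_comp_left (M : ℕ → ℕ → R) (I J : Fin m → ℕ) (π : Equiv.Perm (Fin m)) :
    immE W M (I ∘ π) J = immE W M I J * W π := by
  rw [immE, immE, Finset.sum_mul, ← Equiv.sum_comp (Equiv.mulRight π)]
  refine Finset.sum_congr rfl fun σ _ => ?_
  rw [smul_mul_assoc, ← map_mul, Equiv.coe_mulRight]
  congr 1
  exact Equiv.prod_comp π fun a => M (I a) (J (σ a))

/-- Cauchy–Binet: the sum runs over all sequences of intermediate indices, and each orbit under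
rearrangement is counted with the factor `m!`. -/
lemma factorial_smul_immE {A B C : ℕ → ℕ → R} {I J : Fin m → ℕ} (S : Finset ℕ)
    (hC : ∀ a b, C (I a) (J b) = ∑ k ∈ S, A (I a) k * B k (J b)) :
    m.factorial • immE W C I J =
      ∑ k ∈ Fintype.piFinset fun _ : Fin m => S, immE W B k J * immE W A I k := by
  have h1 : immE W C I J = ∑ k ∈ Fintype.piFinset fun _ : Fin m => S,
      (∏ a, A (I a) (k a)) • immE W B k J := by
    simp only [immE, hC, Finset.prod_univ_sum, Finset.smul_sum, Finset.sum_smul, smul_smul,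
      Finset.prod_mul_distrib]
    rw [Finset.sum_comm]
  have h2 : ∀ k : Fin m → ℕ, immE W B k J * immE W A I k = ∑ π : Equiv.Perm (Fin m),
      (∏ a, A (I a) ((k ∘ π) a)) • immE W B (k ∘ π) J := by
    intro k
    conv_lhs => rw [immE.eq_1 W A, Finset.mul_sum]
    refine Finset.sum_congr rfl fun π _ => ?_
    rw [mul_smul_comm, immE_comp_left]
    rfl
  have h3 : ∀ π : Equiv.Perm (Fin m), ∑ k ∈ Fintype.piFinset fun _ : Fin m => S,
      (∏ a, A (I a) ((k ∘ π) a)) • immE W B (k ∘ π) J = immE W C I J := by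
    intro π
    rw [h1]
    refine Finset.sum_bij' (fun k _ => k ∘ π) (fun k _ => k ∘ ⇑π⁻¹) ?_ ?_ ?_ ?_ ?_
    · intro k hk
      rw [Fintype.mem_piFinset] at hk ⊢
      exact fun a => hk _
    · intro k hk
      rw [Fintype.mem_piFinset] at hk ⊢
      exact fun a => hk _
    · intro k _
      funext a
      exact congrArg k (perm_apply_inv π a)
    · intro k _
      funext a
      exact congrArg k (perm_inv_apply π a)
    · intro k _; rfl
  simp only [h2]
  rw [Finset.sum_comm]
  simp only [h3]
  rw [Finset.sum_const, Finset.card_univ, Fintype.card_perm, Fintype.card_fin]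

/-- A semiring `P` of positive elements of `E` and a semiring `Q` of positive scalars, such that
`P` contains the sums over the stabilisers of monotone sequences. -/
structure Positivity where
  P : Subsemiring E
  Q : Subsemiring R
  smul_mem : ∀ w ∈ Q, ∀ x ∈ P, w • x ∈ P
  of_factorial : ∀ x, m.factorial • x ∈ P → x ∈ P
  stab_mem : ∀ κ : Fin m → ℕ, Monotone κ →
    ∑ σ : Equiv.Perm (Fin m), (if κ ∘ σ = κ then W σ else 0) ∈ P

variable {W} (Z : Positivity (R := R) W)

lemma Positivity.immE_mem {A B C : ℕ → ℕ → R} {I J : Fin m → ℕ} (S : Finset ℕ)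
    (hC : ∀ a b, C (I a) (J b) = ∑ k ∈ S, A (I a) k * B k (J b))
    (hA : ∀ k, Monotone k → immE W A I k ∈ Z.P) (hB : ∀ k, Monotone k → immE W B k J ∈ Z.P) :
    immE W C I J ∈ Z.P := by
  apply Z.of_factorial
  rw [factorial_smul_immE W S hC]
  refine sum_mem fun k _ => ?_
  set ρ := Tuple.sort k
  have h1 : k = (k ∘ ρ) ∘ ⇑ρ⁻¹ := by
    funext a
    exact (congrArg k (perm_apply_inv ρ a)).symm
  have h2 : immE W B k J * immE W A I k = immE W B (k ∘ ρ) J * immE W A I (k ∘ ρ) := by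
    conv_lhs => rw [h1, immE_comp_left, immE_comp_right, inv_inv]
    rw [mul_assoc, ← mul_assoc (W ρ⁻¹), ← map_mul, inv_mul_cancel, map_one, one_mul]
  rw [h2]
  exact mul_mem (hB _ (Tuple.monotone_sort k)) (hA _ (Tuple.monotone_sort k))

/-- The rows of `M` with index less than `L` have positive universal immanants, and so do the
columns of the transpose of `M`; the row and column sequences may have repetitions. -/
def Positivity.RowGood (L : ℕ) (M : ℕ → ℕ → R) : Prop :=
  ∀ I J : Fin m → ℕ, Monotone I → Monotone J → (∀ a, I a < L) →
    immE W M I J ∈ Z.P ∧ immE W (fun j i => M i j) J I ∈ Z.P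

/-- All universal immanants of `M` and of its transpose are positive. -/
def Positivity.Good (M : ℕ → ℕ → R) : Prop := ∀ L, Z.RowGood L M

variable {Z}

lemma exists_lt_bound (I : Fin m → ℕ) : ∃ L, ∀ a, I a < L :=
  ⟨∑ a, I a + 1, fun a => Nat.lt_succ_of_le
    (Finset.single_le_sum (f := I) (fun _ _ => Nat.zero_le _) (Finset.mem_univ a))⟩

lemma Positivity.Good.transpose {M : ℕ → ℕ → R} (h : Z.Good M) : Z.Good fun j i => M i j := by
  intro L I J hI hJ _
  obtain ⟨L', hL'⟩ := exists_lt_bound J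
  exact (h L' J I hJ hI hL').symm

lemma Positivity.RowGood.mul {L : ℕ} {A B C : ℕ → ℕ → R} (hA : Z.RowGood L A) (hB : Z.Good B)
    (hC : ∀ N, ∃ S : Finset ℕ, ∀ i j, i < L → j < N → C i j = ∑ k ∈ S, A i k * B k j) :
    Z.RowGood L C := by
  intro I J hI hJ hL
  obtain ⟨N, hN⟩ := exists_lt_bound J
  obtain ⟨S, hS⟩ := hC N
  constructor
  · refine Z.immE_mem S (fun a b => hS _ _ (hL a) (hN b)) (fun k hk => (hA I k hI hk hL).1)
      fun k hk => ?_
    obtain ⟨L', hL'⟩ := exists_lt_bound k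
    exact (hB L' k J hk hJ hL').1
  · refine Z.immE_mem (A := fun j k => B k j) (B := fun k i => A i k) S
      (fun a b => (hS _ _ (hL b) (hN a)).trans
        (Finset.sum_congr rfl fun k _ => mul_comm _ _)) (fun k hk => ?_)
      fun k hk => (hA I k hI hk hL).2
    obtain ⟨L', hL'⟩ := exists_lt_bound k
    exact (hB L' k J hk hJ hL').2

lemma Positivity.Good.mul {A B C : ℕ → ℕ → R} (hA : Z.Good A) (hB : Z.Good B)
    (hC : ∀ L N, ∃ S : Finset ℕ, ∀ i j, i < L → j < N → C i j = ∑ k ∈ S, A i k * B k j) :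
    Z.Good C :=
  fun L => (hA L).mul hB (hC L)

lemma Positivity.RowGood.congr {L : ℕ} {A B : ℕ → ℕ → R} (hA : Z.RowGood L A)
    (h : ∀ i j, i < L → A i j = B i j) : Z.RowGood L B := by
  intro I J hI hJ hL
  obtain ⟨h1, h2⟩ := hA I J hI hJ hL
  refine ⟨?_, ?_⟩
  · rwa [← immE_congr W fun a b => h _ (J b) (hL a)]
  · rwa [← immE_congr W (M := fun j i => A i j) fun a b => h _ (J a) (hL b)]

/-- A weighted monotone relabelling: its universal immanants are zero or a product of weights
times the sum over the stabiliser of a monotone sequence. -/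
lemma Positivity.good_map {f : ℕ → ℕ} (hf : Monotone f) {w : ℕ → R} (hw : ∀ i, w i ∈ Z.Q) :
    Z.Good fun i k => if f i = k then w i else 0 := by
  intro L I J hI hJ _
  have key : ∀ X : E, X = (if f ∘ I = J then ∏ a, w (I a) else 0) •
      ∑ σ : Equiv.Perm (Fin m), (if J ∘ σ = J then W σ else 0) → X ∈ Z.P := by
    rintro X rfl
    refine Z.smul_mem _ ?_ _ (Z.stab_mem J hJ)
    split_ifs
    · exact prod_mem fun a _ => hw _
    · exact zero_mem _
  have hmono : Monotone (f ∘ I) := hf.comp hI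
  constructor
  · refine key _ ?_
    rw [Finset.smul_sum]
    refine Finset.sum_congr rfl fun σ _ => ?_
    by_cases h : f ∘ I = J ∘ σ
    · have h1 : J ∘ σ = J := Tuple.unique_monotone (f := J) (σ := σ) (τ := 1)
        (by rw [← h]; exact hmono) hJ
      rw [if_pos (h.trans h1), if_pos h1]
      congr 1
      exact Finset.prod_congr rfl fun a _ => if_pos (congrFun h a)
    · have h1 : ∏ a, (if f (I a) = J (σ a) then w (I a) else 0) = 0 := by
        obtain ⟨a, ha⟩ := Function.ne_iff.1 h
        exact Finset.prod_eq_zero (Finset.mem_univ a) (if_neg ha)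
      rw [h1, zero_smul]
      split_ifs with h2 h3
      · exact absurd (h2.trans h3.symm) h
      · rw [smul_zero]
      · rw [zero_smul]
      · rw [smul_zero]
  · refine key _ ?_
    rw [Finset.smul_sum]
    refine Finset.sum_congr rfl fun σ _ => ?_
    by_cases h : (f ∘ I) ∘ σ = J
    · have h1 : (f ∘ I) ∘ σ = f ∘ I := Tuple.unique_monotone (f := f ∘ I) (σ := σ) (τ := 1)
        (by rw [h]; exact hJ) hmono
      have h2 : f ∘ I = J := h1.symm.trans h
      rw [if_pos h2, if_pos (by rw [← h2]; exact h1)]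
      congr 1
      refine Eq.trans ?_ (Equiv.prod_comp σ fun a => w (I a))
      exact Finset.prod_congr rfl fun a _ => if_pos (congrFun h a)
    · have h1 : ∏ a, (if f (I (σ a)) = J a then w (I (σ a)) else 0) = 0 := by
        obtain ⟨a, ha⟩ := Function.ne_iff.1 h
        exact Finset.prod_eq_zero (Finset.mem_univ a) (if_neg ha)
      rw [h1, zero_smul]
      split_ifs with h2 h3
      · exact absurd (by rw [h2]; exact h3) h
      · rw [smul_zero]
      · rw [zero_smul]
      · rw [smul_zero]

end CauchyBinet

/-! ### Diagonally dominant tridiagonal matrices -/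

section Tridiagonal

variable {R E : Type*} [CommRing R] [Ring E] [Algebra R E] {m : ℕ} {W : Equiv.Perm (Fin m) →* E}
  {Z : Positivity (R := R) W}

/-- The matrix whose row `i` has the entries `a i`, `b i`, `c i` in columns `2 * i`, `2 * i + 1`,
`2 * i + 2`. -/
def fan (a b c : ℕ → R) (i v : ℕ) : R :=
  (if 2 * i = v then a i else 0) + (if 2 * i + 1 = v then b i else 0) +
    (if 2 * i + 2 = v then c i else 0)

lemma good_fan {a b c : ℕ → R} (ha : ∀ i, a i ∈ Z.Q) (hb : ∀ i, b i ∈ Z.Q)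
    (hc : ∀ i, c i ∈ Z.Q) : Z.Good (fan a b c) := by
  have h1 : Z.Good fun i e : ℕ => if e / 3 = i then (1 : R) else 0 :=
    (Z.good_map (f := fun e => e / 3) (fun x y h => Nat.div_le_div_right h)
      (w := fun _ => 1) fun _ => one_mem _).transpose
  have h2 := Z.good_map (f := fun e => 2 * (e / 3) + e % 3) (fun x y h => by dsimp only; omega)
    (w := fun e => if e % 3 = 0 then a (e / 3) else if e % 3 = 1 then b (e / 3) else c (e / 3))
    (fun e => by
      split_ifs
      · exact ha _
      · exact hb _
      · exact hc _)
  refine h1.mul h2 fun L N => ⟨Finset.range (3 * L), fun i v hi _ => ?_⟩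
  have hsub : ({3 * i, 3 * i + 1, 3 * i + 2} : Finset ℕ) ⊆ Finset.range (3 * L) := by
    intro e he
    simp only [Finset.mem_insert, Finset.mem_singleton] at he
    rw [Finset.mem_range]
    omega
  rw [← Finset.sum_subset hsub fun e _ he => by
    simp only [Finset.mem_insert, Finset.mem_singleton] at he
    rw [if_neg (by omega), zero_mul]]
  rw [Finset.sum_insert (by simp), Finset.sum_insert (by simp), Finset.sum_singleton]
  have e0 : 3 * i / 3 = i := by omega
  have e1 : (3 * i + 1) / 3 = i := by omega
  have e2 : (3 * i + 2) / 3 = i := by omega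
  have f0 : 3 * i % 3 = 0 := by omega
  have f1 : (3 * i + 1) % 3 = 1 := by omega
  have f2 : (3 * i + 2) % 3 = 2 := by omega
  simp only [e0, e1, e2, f0, f1, f2, if_true, one_mul, fan, add_zero, add_assoc]
  rfl

/-- The tridiagonal matrix with superdiagonal `r`, diagonal `s` and subdiagonal `t`. -/
def tri (r s t : ℕ → R) (i j : ℕ) : R :=
  if j = i + 1 then r i else if j = i then s i else if i = j + 1 then t j else 0

/-- The diagonal entry `s i` minus the entries `r (i - 1)` and `t i` of column `i`. -/
def excess (r s t : ℕ → R) (i : ℕ) : R := s i - (if i = 0 then 0 else r (i - 1)) - t i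

/-- A tridiagonal matrix is a product of two `fan`s, the weights of the second being the
off-diagonal entries and the excess of the diagonal. -/
lemma good_tri {r s t : ℕ → R} (hr : ∀ i, r i ∈ Z.Q) (ht : ∀ i, t i ∈ Z.Q)
    (h : ∀ i, excess r s t i ∈ Z.Q) : Z.Good (tri r s t) := by
  have h1 : Z.Good (fan (1 : ℕ → R) 1 1) :=
    good_fan (fun _ => one_mem _) (fun _ => one_mem _) fun _ => one_mem _
  have h2 : Z.Good (fan (fun i => if i = 0 then 0 else r (i - 1)) (excess r s t) t) := by
    refine good_fan (fun i => ?_) h ht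
    split_ifs
    · exact zero_mem _
    · exact hr _
  refine h1.mul h2.transpose fun L N => ⟨Finset.range (2 * L + 1), fun i j hi _ => ?_⟩
  have m0 : 2 * i ∈ Finset.range (2 * L + 1) := Finset.mem_range.2 (by omega)
  have m1 : 2 * i + 1 ∈ Finset.range (2 * L + 1) := Finset.mem_range.2 (by omega)
  have m2 : 2 * i + 2 ∈ Finset.range (2 * L + 1) := Finset.mem_range.2 (by omega)
  have h3 : ∀ F : ℕ → R, ∑ v ∈ Finset.range (2 * L + 1), fan (1 : ℕ → R) 1 1 i v * F v =
      F (2 * i) + F (2 * i + 1) + F (2 * i + 2) := by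
    intro F
    simp only [fan, Pi.one_apply, add_mul, Finset.sum_add_distrib, ite_mul, one_mul, zero_mul,
      Finset.sum_ite_eq, m0, m1, m2, if_true]
  rw [h3]
  simp only [fan, tri, excess]
  rcases Nat.lt_trichotomy j i with hji | rfl | hji
  · rw [if_neg (by omega), if_neg (by omega)]
    by_cases h4 : i = j + 1
    · subst h4
      rw [if_pos rfl, if_neg (by omega), if_neg (by omega), if_pos (by omega), if_neg (by omega),
        if_neg (by omega), if_neg (by omega), if_neg (by omega), if_neg (by omega),
        if_neg (by omega)]
      ring
    · rw [if_neg h4, if_neg (by omega), if_neg (by omega), if_neg (by omega), if_neg (by omega),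
        if_neg (by omega), if_neg (by omega), if_neg (by omega), if_neg (by omega),
        if_neg (by omega)]
      ring
  · rw [if_neg (by omega), if_pos rfl]
    simp
    ring
  · by_cases h4 : j = i + 1
    · subst h4
      have e0 : 2 * (i + 1) = 2 * i + 2 := by omega
      have e1 : ¬ 2 * i + 2 + 1 = 2 * i := by omega
      have e2 : ¬ 2 * i + 2 + 2 = 2 * i := by omega
      simp [e0, e1, e2]
    · rw [if_neg h4, if_neg (by omega), if_neg (by omega), if_neg (by omega), if_neg (by omega),
        if_neg (by omega), if_neg (by omega), if_neg (by omega), if_neg (by omega),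
        if_neg (by omega), if_neg (by omega), if_neg (by omega)]
      ring

/-- The block matrix `1 ⊕ M`, with an identity block of size `k`. -/
def pad (k : ℕ) (M : ℕ → ℕ → R) (i j : ℕ) : R :=
  if i < k then (if i = j then 1 else 0) else if j < k then 0 else M (i - k) (j - k)

lemma pad_tri (k : ℕ) (r s t : ℕ → R) (i j : ℕ) : pad k (tri r s t) i j =
    tri (fun i => if i < k then 0 else r (i - k)) (fun i => if i < k then 1 else s (i - k))
      (fun i => if i < k then 0 else t (i - k)) i j := by
  simp only [pad, tri]
  by_cases hi : i < k
  · simp only [hi, if_true]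
    split_ifs <;> first | rfl | omega
  · simp only [hi, if_false]
    split_ifs <;> first | rfl | omega

lemma good_pad_tri {r s t : ℕ → R} (hr : ∀ i, r i ∈ Z.Q) (ht : ∀ i, t i ∈ Z.Q)
    (h : ∀ i, excess r s t i ∈ Z.Q) (k : ℕ) : Z.Good (pad k (tri r s t)) := by
  have h1 : pad k (tri r s t) = _ := funext fun i => funext fun j => pad_tri k r s t i j
  rw [h1]
  refine good_tri (fun i => ?_) (fun i => ?_) fun i => ?_
  · split_ifs
    · exact zero_mem _
    · exact hr _
  · split_ifs
    · exact zero_mem _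
    · exact ht _
  · rw [excess]
    by_cases hi : i < k
    · rw [if_pos hi, if_pos hi]
      have : (if i = 0 then 0 else if i - 1 < k then 0 else r (i - 1 - k)) = 0 := by
        split_ifs <;> first | rfl | omega
      rw [this, sub_zero, sub_zero]
      exact one_mem _
    · rw [if_neg hi, if_neg hi]
      have : (if i = 0 then 0 else if i - 1 < k then 0 else r (i - 1 - k)) =
          if i - k = 0 then 0 else r (i - k - 1) := by
        split_ifs <;> first | rfl | omega | (congr 1; omega)
      rw [this]
      exact h (i - k)

/-! ### Rows of the powers of a tridiagonal matrix -/

/-- Row `n` is the first row of the `n`-th power of the upper Hessenberg matrix `M`. -/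
def rowIter (M : ℕ → ℕ → R) : ℕ → ℕ → R
  | 0, k => if k = 0 then 1 else 0
  | n + 1, k => ∑ l ∈ Finset.range (n + 1), rowIter M n l * M l k

lemma rowIter_eq_zero {M : ℕ → ℕ → R} (hM : ∀ l k, l + 1 < k → M l k = 0) (n : ℕ) :
    ∀ k, n < k → rowIter M n k = 0 := by
  induction n with
  | zero => intro k hk; exact if_neg (by omega)
  | succ n ih =>
    intro k hk
    refine Finset.sum_eq_zero fun l hl => ?_
    rw [Finset.mem_range] at hl
    rw [hM l k (by omega), mul_zero]

lemma rowIter_succ {M : ℕ → ℕ → R} (hM : ∀ l k, l + 1 < k → M l k = 0) {n L : ℕ} (hL : n < L)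
    (k : ℕ) : rowIter M (n + 1) k = ∑ l ∈ Finset.range L, rowIter M n l * M l k := by
  rw [rowIter]
  refine Finset.sum_subset (Finset.range_mono hL) fun l _ hl => ?_
  rw [Finset.mem_range, not_lt] at hl
  rw [rowIter_eq_zero hM n l hl, zero_mul]

/-- The matrix `1 ⊕ [e₀; M]`, with an identity block of size `k`: the row of index `k` is `e₀`,
and the rows below it are those of `M`. -/
def stepMat (k : ℕ) (M : ℕ → ℕ → R) (i p : ℕ) : R :=
  if i ≤ k then (if i = p then 1 else 0) else if p < k then 0 else M (i - (k + 1)) (p - k)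

lemma good_stepMat {M : ℕ → ℕ → R} {k : ℕ} (h : Z.Good (pad (k + 1) M)) :
    Z.Good (stepMat k M) := by
  have h1 := Z.good_map (f := fun q => if q ≤ k then q else q - 1)
    (fun x y hxy => by dsimp only; split_ifs <;> omega) (w := fun _ => 1) fun _ => one_mem _
  refine h.mul h1 fun L N => ⟨Finset.range (L + N + k + 2), fun i p hi hp => ?_⟩
  have m : ∀ x ≤ i + p + k + 2, x ∈ Finset.range (L + N + k + 2) :=
    fun x hx => Finset.mem_range.2 (by omega)
  rw [stepMat]
  by_cases hik : i ≤ k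
  · rw [if_pos hik]
    have h2 : ∀ q, pad (k + 1) M i q = if i = q then 1 else 0 := fun q => if_pos (by omega)
    simp only [h2, ite_mul, one_mul, zero_mul, Finset.sum_ite_eq, m i (by omega), if_true,
      if_pos hik]
  · rw [if_neg hik]
    have h2 : ∀ q, pad (k + 1) M i q = if q < k + 1 then 0 else M (i - (k + 1)) (q - (k + 1)) :=
      fun q => if_neg (by omega)
    rw [Finset.sum_eq_single (p + 1)]
    · rw [h2]
      by_cases hpk : p < k
      · rw [if_pos hpk, if_pos (by omega), zero_mul]
      · rw [if_neg hpk, if_neg (by omega), if_pos (by split_ifs <;> omega), mul_one]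
        congr 1
        omega
    · intro q _ hq
      rw [h2]
      by_cases hqk : q < k + 1
      · rw [if_pos hqk, zero_mul]
      · rw [if_neg hqk, if_neg (by split_ifs <;> omega), mul_zero]
    · intro h3
      exact absurd (m _ (by omega)) h3

lemma pad_rowIter_step {M : ℕ → ℕ → R} (hM : ∀ l k, l + 1 < k → M l k = 0) {L : ℕ} (k : ℕ)
    {i : ℕ} (hi : i < L) (p : ℕ) : pad k (rowIter M) i p =
      ∑ q ∈ Finset.range L, pad (k + 1) (rowIter M) i q * stepMat k M q p := by
  by_cases hik : i < k + 1
  · have h1 : ∀ q, pad (k + 1) (rowIter M) i q = if i = q then 1 else 0 := fun q => if_pos hik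
    simp only [h1, ite_mul, one_mul, zero_mul, Finset.sum_ite_eq, Finset.mem_range.2 hi, if_true]
    rw [stepMat, if_pos (by omega), pad]
    by_cases h2 : i < k
    · rw [if_pos h2]
    · have h3 : i = k := by omega
      subst h3
      rw [if_neg h2, Nat.sub_self, rowIter]
      split_ifs <;> first | rfl | omega
  · obtain ⟨n, rfl⟩ : ∃ n, i = k + 1 + n := ⟨i - (k + 1), by omega⟩
    obtain ⟨L', rfl⟩ : ∃ L', L = k + 1 + L' := ⟨L - (k + 1), by omega⟩
    rw [Finset.sum_range_add, Finset.sum_eq_zero, zero_add]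
    · have h1 : ∀ l, pad (k + 1) (rowIter M) (k + 1 + n) (k + 1 + l) = rowIter M n l := fun l => by
        rw [pad, if_neg (by omega), if_neg (by omega), Nat.add_sub_cancel_left,
          Nat.add_sub_cancel_left]
      have h2 : ∀ l, stepMat k M (k + 1 + l) p = if p < k then 0 else M l (p - k) := fun l => by
        rw [stepMat, if_neg (by omega), Nat.add_sub_cancel_left]
      simp only [h1, h2]
      rw [pad, if_neg (by omega), show k + 1 + n - k = n + 1 by omega]
      split_ifs with hp
      · simp only [mul_zero, Finset.sum_const_zero]
      · exact rowIter_succ hM (by omega) _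
    · intro q hq
      rw [Finset.mem_range] at hq
      rw [pad, if_neg hik, if_pos hq, zero_mul]

/-- The rows of index less than `k + n + 1` of `1 ⊕ rowIter M` form a product of `n` matrices of
the form `stepMat`. -/
lemma rowGood_pad_rowIter {M : ℕ → ℕ → R} (hM : ∀ l k, l + 1 < k → M l k = 0)
    (h : ∀ k, Z.Good (pad k M)) (n : ℕ) : ∀ k, Z.RowGood (k + n + 1) (pad k (rowIter M)) := by
  induction n with
  | zero =>
    intro k
    have h1 := Z.good_map (f := id) monotone_id (w := fun _ => 1) fun _ => one_mem _
    refine (h1 (k + 0 + 1)).congr fun i j hi => ?_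
    rw [pad]
    by_cases hik : i < k
    · rw [if_pos hik]; rfl
    · have h2 : i = k := by omega
      subst h2
      rw [if_neg hik, Nat.sub_self, rowIter]
      simp only [id]
      split_ifs <;> first | rfl | omega
  | succ n ih =>
    intro k
    have h1 := ih (k + 1)
    rw [show k + 1 + n + 1 = k + (n + 1) + 1 by omega] at h1
    exact h1.mul (good_stepMat (h (k + 1))) fun N =>
      ⟨Finset.range (k + (n + 1) + 1), fun i j hi _ => pad_rowIter_step hM k hi j⟩

lemma good_rowIter {M : ℕ → ℕ → R} (hM : ∀ l k, l + 1 < k → M l k = 0)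
    (h : ∀ k, Z.Good (pad k M)) : Z.Good (rowIter M) := by
  intro L I J hI hJ hL
  have h1 : pad 0 (rowIter M) = rowIter M := by
    funext i j
    rw [pad, if_neg (by omega), if_neg (by omega)]; rfl
  have h2 := rowGood_pad_rowIter hM h L 0 I J hI hJ fun a => by have := hL a; omega
  rwa [h1] at h2

lemma tri_upper (r s t : ℕ → R) (l k : ℕ) (h : l + 1 < k) : tri r s t l k = 0 := by
  rw [tri, if_neg (by omega), if_neg (by omega), if_neg (by omega)]

lemma tri_lower (r s t : ℕ → R) (l k : ℕ) (h : l + 1 < k) : tri r s t k l = 0 := by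
  rw [tri, if_neg (by omega), if_neg (by omega), if_neg (by omega)]

lemma pad_transpose (k : ℕ) (M : ℕ → ℕ → R) :
    pad k (fun j i => M i j) = fun j i => pad k M i j := by
  funext j i
  simp only [pad]
  split_ifs <;> first | rfl | omega

lemma good_catalan {r s t : ℕ → R} (hr : ∀ i, r i ∈ Z.Q) (ht : ∀ i, t i ∈ Z.Q)
    (h : ∀ i, excess r s t i ∈ Z.Q) : Z.Good (rowIter (tri r s t)) :=
  good_rowIter (tri_upper r s t) (good_pad_tri hr ht h)

lemma good_catalan_transpose {r s t : ℕ → R} (hr : ∀ i, r i ∈ Z.Q) (ht : ∀ i, t i ∈ Z.Q)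
    (h : ∀ i, excess r s t i ∈ Z.Q) : Z.Good (rowIter fun l k => tri r s t k l) :=
  good_rowIter (tri_lower r s t) fun k => by
    rw [pad_transpose]
    exact (good_pad_tri hr ht h k).transpose

/-- The `(i + j)`-th moment pairs row `i` of the power of `M` with column `j`. -/
lemma rowIter_add {M : ℕ → ℕ → R} (hM : ∀ l k, l + 1 < k → M l k = 0)
    (hM' : ∀ l k, l + 1 < k → M k l = 0) (j : ℕ) : ∀ i L, i + j < L → rowIter M (i + j) 0 =
      ∑ k ∈ Finset.range L, rowIter M i k * rowIter (fun l k => M k l) j k := by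
  induction j with
  | zero =>
    intro i L hL
    have h1 : ∀ k, rowIter (fun l k => M k l) 0 k = if k = 0 then 1 else 0 := fun k => rfl
    simp only [h1, mul_ite, mul_one, mul_zero, Finset.sum_ite_eq', Finset.mem_range]
    rw [if_pos (by omega)]; rfl
  | succ j ih =>
    intro i L hL
    have h1 := ih (i + 1) L (by omega)
    rw [show i + (j + 1) = i + 1 + j by omega, h1]
    have h2 : ∀ k, rowIter (fun l k => M k l) (j + 1) k =
        ∑ l ∈ Finset.range L, rowIter (fun l k => M k l) j l * M k l :=
      fun k => rowIter_succ (M := fun l k => M k l) hM' (by omega) k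
    have h3 : ∀ k, rowIter M (i + 1) k = ∑ l ∈ Finset.range L, rowIter M i l * M l k :=
      fun k => rowIter_succ hM (by omega) k
    simp only [h2, h3, Finset.sum_mul, Finset.mul_sum]
    rw [Finset.sum_comm]
    refine Finset.sum_congr rfl fun k _ => Finset.sum_congr rfl fun l _ => ?_
    ring

lemma good_hankel {r s t : ℕ → R} (hr : ∀ i, r i ∈ Z.Q) (ht : ∀ i, t i ∈ Z.Q)
    (h : ∀ i, excess r s t i ∈ Z.Q) : Z.Good fun i j => rowIter (tri r s t) (i + j) 0 :=
  (good_catalan hr ht h).mul (good_catalan_transpose hr ht h).transpose fun L N =>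
    ⟨Finset.range (L + N), fun i j hi hj =>
      rowIter_add (tri_upper r s t) (tri_lower r s t) j i (L + N) (by omega)⟩

end Tridiagonal

/-! ### Immanants of matrices of real polynomials -/

section Polynomial

variable {n d : ℕ} (U : Equiv.Perm (Fin (n + 1)) →* Matrix (Fin d) (Fin d) ℂ)

/-- Real polynomials act on polynomials with coefficients in a real algebra. -/
noncomputable abbrev polyAlgebra (d : ℕ) : Algebra ℝ[X] (Matrix (Fin d) (Fin d) ℂ)[X] :=
  (Polynomial.mapRingHom (algebraMap ℝ (Matrix (Fin d) (Fin d) ℂ))).toAlgebra' fun f x => by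
    induction f using Polynomial.induction_on' with
    | add f g hf hg => rw [map_add, add_mul, mul_add, hf, hg]
    | monomial k a =>
      ext1 i
      rw [Polynomial.coe_mapRingHom, Polynomial.map_monomial, ← Polynomial.C_mul_X_pow_eq_monomial,
        mul_assoc, Polynomial.coeff_C_mul, ← mul_assoc x, Polynomial.X_pow_mul,
        Polynomial.coeff_mul_X_pow', Polynomial.coeff_mul_X_pow']
      split_ifs
      · rw [Polynomial.coeff_mul_C, Algebra.commutes]
      · rw [mul_zero]

attribute [local instance] polyAlgebra

lemma coeff_smul_C (f : ℝ[X]) (x : Matrix (Fin d) (Fin d) ℂ) (k : ℕ) :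
    (f • Polynomial.C x).coeff k = f.coeff k • x := by
  rw [Algebra.smul_def]
  change (Polynomial.map (algebraMap ℝ (Matrix (Fin d) (Fin d) ℂ)) f * _).coeff k = _
  rw [Polynomial.coeff_mul_C, Polynomial.coeff_map, Algebra.smul_def]

/-- The polynomials all of whose coefficients lie in a given semiring. -/
def coeffsIn {A : Type*} [Semiring A] (S : Subsemiring A) : Subsemiring A[X] where
  carrier := {f | ∀ k, f.coeff k ∈ S}
  zero_mem' k := by rw [Polynomial.coeff_zero]; exact zero_mem _
  one_mem' k := by
    rw [Polynomial.coeff_one]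
    split_ifs
    · exact one_mem _
    · exact zero_mem _
  add_mem' hf hg k := by rw [Polynomial.coeff_add]; exact add_mem (hf k) (hg k)
  mul_mem' hf hg k := by
    rw [Polynomial.coeff_mul]
    exact sum_mem fun x _ => mul_mem (hf _) (hg _)

/-- The permutations as constant polynomials. -/
noncomputable def constRep : Equiv.Perm (Fin (n + 1)) →* (Matrix (Fin d) (Fin d) ℂ)[X] :=
  (Polynomial.C : _ →+* (Matrix (Fin d) (Fin d) ℂ)[X]).toMonoidHom.comp U

/-- Coefficientwise positivity. -/
noncomputable def polyPositivity : Positivity (R := ℝ[X]) (constRep U) where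
  P := coeffsIn (K U)
  Q := coeffsIn (Subsemiring.nonneg ℝ)
  smul_mem w hw x hx k := by
    rw [Algebra.smul_def]
    change (Polynomial.map (algebraMap ℝ (Matrix (Fin d) (Fin d) ℂ)) w * _).coeff k ∈ _
    rw [Polynomial.coeff_mul]
    refine sum_mem fun y _ => ?_
    rw [Polynomial.coeff_map, ← Algebra.smul_def]
    exact smul_mem_K U (hw _) (hx _)
  of_factorial x hx k := by
    have h1 := hx k
    rw [Polynomial.coeff_smul, ← Nat.cast_smul_eq_nsmul ℝ] at h1
    have h2 := smul_mem_K U (c := ((n + 1).factorial : ℝ)⁻¹) (by positivity) h1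
    rwa [smul_smul, inv_mul_cancel₀ (by positivity), one_smul] at h2
  stab_mem κ hκ k := by
    have h1 : ∑ σ : Equiv.Perm (Fin (n + 1)), (if κ ∘ σ = κ then constRep U σ else 0) =
        Polynomial.C (∑ σ : Equiv.Perm (Fin (n + 1)), if κ ∘ σ = κ then U σ else 0) := by
      rw [map_sum]
      refine Finset.sum_congr rfl fun σ _ => ?_
      split_ifs
      · rfl
      · rw [map_zero]
    rw [h1, Polynomial.coeff_C]
    split_ifs
    · exact sum_stabilizer_mem_K U hκ
    · exact zero_mem _

/-- A positive universal immanant has `q`-nonnegative image under the trace. -/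
lemma qnonneg_of_good {M : ℕ → ℕ → ℝ[X]} (hM : (polyPositivity U).Good M)
    {χ : Equiv.Perm (Fin (n + 1)) → ℝ} (hχ : ∀ g, (χ g : ℂ) = (U g).trace)
    {I J : Fin (n + 1) → ℕ} (hI : Monotone I) (hJ : Monotone J) :
    QNonneg (∑ π : Equiv.Perm (Fin (n + 1)), χ π • ∏ a, M (I a) (J (π a))) := by
  intro k
  obtain ⟨L, hL⟩ := exists_lt_bound I
  have h1 := trace_nonneg_of_mem_K U ((hM L I J hI hJ hL).1 k)
  have h2 : (immE (constRep U) M I J).coeff k =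
      ∑ π : Equiv.Perm (Fin (n + 1)), (∏ a, M (I a) (J (π a))).coeff k • U π := by
    rw [immE, Polynomial.finsetSum_coeff]
    exact Finset.sum_congr rfl fun π _ => coeff_smul_C _ _ k
  rw [h2, Matrix.trace_sum, Complex.re_sum] at h1
  rw [Polynomial.finsetSum_coeff]
  refine h1.trans_eq (Finset.sum_congr rfl fun π _ => ?_)
  rw [Matrix.trace_smul, Complex.smul_re, ← hχ, Complex.ofReal_re, Polynomial.coeff_smul,
    smul_eq_mul, smul_eq_mul, mul_comm]

/-- The immanants of Catalan–Stieltjes and Hankel matrices, with `excess` the part of the diagonal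
that exceeds its neighbours. -/
lemma qnonneg_catalan_hankel {r s t : ℕ → ℝ[X]} (hr : ∀ k, QNonneg (r k)) (ht : ∀ k, QNonneg (t k))
    (hex : ∀ k, QNonneg (excess r s t k))
    {χ : Equiv.Perm (Fin (n + 1)) → ℝ} (hχ : ∀ g, (χ g : ℂ) = (U g).trace)
    {I J : Fin (n + 1) → ℕ} (hI : Monotone I) (hJ : Monotone J) :
    QNonneg (∑ π : Equiv.Perm (Fin (n + 1)), χ π • ∏ a, rowIter (tri r s t) (I a) (J (π a))) ∧
    QNonneg (∑ π : Equiv.Perm (Fin (n + 1)),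
      χ π • ∏ a, rowIter (tri r s t) (I a + J (π a)) 0) :=
  ⟨qnonneg_of_good U (good_catalan (Z := polyPositivity U) hr ht hex) hχ hI hJ,
    qnonneg_of_good U (good_hankel (Z := polyPositivity U) hr ht hex) hχ hI hJ⟩

end Polynomial

/-- Every character is the trace of a representation by complex matrices. -/
lemma exists_matrixRep {G : Type} [Group G] (V : FDRep ℂ G) :
    ∃ (d : ℕ) (U : G →* Matrix (Fin d) (Fin d) ℂ), ∀ g, V.character g = (U g).trace := by
  let b := Module.finBasis ℂ V
  refine ⟨_, ((LinearMap.toMatrixAlgEquiv b).toRingEquiv.toRingHom.toMonoidHom).comp V.ρ, fun g => ?_⟩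
  exact LinearMap.trace_eq_matrix_trace ℂ b (V.ρ g)

end ImmPos

theorem stmt6 (r s t : ℕ → Polynomial ℝ) (c : ℕ → ℕ → Polynomial ℝ)
    (hr : ∀ k, QNonneg (r k)) (hs : ∀ k, QNonneg (s k)) (ht : ∀ k, 1 ≤ k → QNonneg (t k))
    (hc00 : c 0 0 = 1)
    (hupper : ∀ n k, n < k → c n k = 0)
    (hrec0 : ∀ n, c (n + 1) 0 = s 0 * c n 0 + t 1 * c n 1)
    (hrec : ∀ n k, c (n + 1) (k + 1) =
      r k * c n k + s (k + 1) * c n (k + 1) + t (k + 2) * c n (k + 2))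
    (hcond : (QNonneg (s 0 - t 1) ∧ ∀ k, 1 ≤ k → QNonneg (s k - (r (k - 1) + t (k + 1)))))
    (m : ℕ) (hm : 1 ≤ m) (χ : Equiv.Perm (Fin m) → ℝ) (hχ : IsIrrChar χ)
    (i j : Fin m → ℕ) (hi : StrictMono i) (hj : StrictMono j) :
    QNonneg (∑ π : Equiv.Perm (Fin m), χ π • ∏ a : Fin m, c (i a) (j (π a))) ∧
    QNonneg (∑ π : Equiv.Perm (Fin m), χ π • ∏ a : Fin m, c (i a + j (π a)) 0) := by
  obtain ⟨n, rfl⟩ : ∃ n, m = n + 1 := ⟨m - 1, by omega⟩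
  obtain ⟨V, -, hV⟩ := hχ
  obtain ⟨d, U, hU⟩ := ImmPos.exists_matrixRep V
  have hχU : ∀ g, (χ g : ℂ) = (U g).trace := fun g => (hV g).trans (hU g)
  -- the subdiagonal is indexed from `0` in `tri`
  set t' : ℕ → ℝ[X] := fun k => t (k + 1) with ht'
  have hc : c = ImmPos.rowIter (ImmPos.tri r s t') := by
    funext l
    induction l with
    | zero =>
      funext k
      rw [ImmPos.rowIter]
      split_ifs with hk
      · rw [hk, hc00]
      · exact hupper 0 k (by omega)
    | succ l ih =>
      funext k
      rw [ImmPos.rowIter_succ (ImmPos.tri_upper r s t') (L := l + k + 3) (by omega), ← ih]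
      cases k with
      | zero =>
        rw [hrec0, ← Finset.sum_subset (s₁ := {0, 1}), Finset.sum_pair (by omega)]
        · simp [ImmPos.tri, ht', mul_comm]
        · intro x hx
          simp only [Finset.mem_insert, Finset.mem_singleton] at hx
          rw [Finset.mem_range]
          omega
        · intro x _ hx
          simp only [Finset.mem_insert, Finset.mem_singleton] at hx
          rw [ImmPos.tri, if_neg (by omega), if_neg (by omega), if_neg (by omega), mul_zero]
      | succ k =>
        rw [hrec, ← Finset.sum_subset (s₁ := {k, k + 1, k + 2}), Finset.sum_insert (by simp),
          Finset.sum_pair (by omega)]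
        · simp [ImmPos.tri, ht', mul_comm, add_assoc]
        · intro x hx
          simp only [Finset.mem_insert, Finset.mem_singleton] at hx
          rw [Finset.mem_range]
          omega
        · intro x _ hx
          simp only [Finset.mem_insert, Finset.mem_singleton] at hx
          rw [ImmPos.tri, if_neg (by omega), if_neg (by omega), if_neg (by omega), mul_zero]
  have hex : ∀ k, QNonneg (ImmPos.excess r s t' k) := by
    intro k
    rw [ImmPos.excess]
    by_cases hk : k = 0
    · subst hk
      rw [if_pos rfl, sub_zero]
      exact hcond.1
    · rw [if_neg hk, sub_sub]
      exact hcond.2 k (by omega)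
  rw [hc]
  exact ImmPos.qnonneg_catalan_hankel U hr (fun k => ht _ (by omega)) hex hχU hi.monotone
    hj.monotone
end

section
/- Suppose the sequences γ = (r_k)_{k≥0}, σ = (s_k)_{k≥0}, τ = (t_k)_{k≥1} of q-nonnegative polynomials satisfy s_0 ≥_q 1 and s_k ≥_q r_{k−1}·t_k + 1 for all k ≥ 1. Then for every m ≥ 1, every m×m submatrix M of the Catalan–Stieltjes matrix C^{γ,σ,τ} (rows and columns chosen by strictly increasing index sequences), and every irreducible character χ of the symmetric group 𝔖_m, the immanant Imm_χ M is q-nonnegative; the same holds for every m×m submatrix of the Hankel matrix H^{γ,σ,τ}. -/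
/-!
The immanant of `M` for `χ` is `χ`, extended linearly, evaluated at the element
`∑ π, (∏ a, M a (π a)) π` of the group algebra of the symmetric group. It is therefore enough to
find a convex cone in the real group algebra on which `χ` is nonnegative and which contains the
coefficients of these elements.

*The cone.* In the irreducible representation with character `χ`, a joint eigenvector of the
Jucys–Murphy elements generates a version of Young's seminormal basis
(`exists_seminormal`). On this basis `1 + s` has a nonnegative matrix for every adjacent
transposition `s`. The elements of the group algebra acting by nonnegative matrices form a closed
convex cone, closed under products, on which the trace `χ` is nonnegative (`exists_posCone`). Such a
cone contains the sum of every Young subgroup, as a limit of products of elements `(1 + s) / 2`; a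
compactness argument replaces the limit (`young_mem`).

*The matrices.* Call a matrix good if the elements of its submatrices, with weakly increasing row
and column indices, have coefficients in the cone. Products of good matrices are good, by the
Cauchy–Binet formula in the group algebra (`SGood.mul`). A matrix with `q`-nonnegative entries on a
staircase path is good, because its elements are multiples of products of two Young subgroup sums
(`sGood_of_chain`). The hypothesis on `s` makes the tridiagonal production matrix of the
Catalan–Stieltjes matrix a product of two such staircase matrices (`padK_eq`). Unrolling the
recurrence writes the Catalan–Stieltjes matrix, up to any given row, as a finite product of
production matrices padded by identity blocks (`padC_eq`). The Hankel matrix is the product of the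
Catalan–Stieltjes matrix with the transpose of the one for the transposed recurrence (`hankel_eq`).
-/

open Polynomial

/-! ### Jucys–Murphy elements and their weight spaces -/

section rep
variable {m : ℕ} {V : Type*} [NormedAddCommGroup V] [InnerProductSpace ℂ V]
  (ρ : Representation ℂ (Equiv.Perm (Fin m)) V)

/-- The action of the `k`-th Jucys–Murphy element `∑_{j < k} (j k)`. -/
noncomputable def jm (k : Fin m) : V →ₗ[ℂ] V := ∑ j ∈ Finset.univ.filter (· < k), ρ (Equiv.swap j k)

/-- The weight space of `γ`: the joint eigenspace of the Jucys–Murphy elements with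
eigenvalues `γ k`. -/
def wt (γ : Fin m → ℝ) : Submodule ℂ V where
  carrier := {x | ∀ k, jm ρ k x = (γ k : ℂ) • x}
  add_mem' := fun hx hy k => by rw [map_add, hx k, hy k, smul_add]
  zero_mem' := fun k => by simp
  smul_mem' := fun c x hx k => by rw [map_smul, hx k, smul_comm]

theorem mem_wt {γ : Fin m → ℝ} {x : V} : x ∈ wt ρ γ ↔ ∀ k, jm ρ k x = (γ k : ℂ) • x := Iff.rfl

theorem jm_conj (k k' : Fin m) (g : Equiv.Perm (Fin m)) (hk : g k = k')
    (x : V) : ρ g (jm ρ k x) =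
      ∑ j ∈ (Finset.univ.filter (· < k)).map g.toEmbedding, ρ (Equiv.swap j k') (ρ g x) := by
  rw [Finset.sum_map, jm, LinearMap.sum_apply, map_sum]
  refine Finset.sum_congr rfl fun j _ => ?_
  rw [← Module.End.mul_apply, ← Module.End.mul_apply, ← map_mul, ← map_mul]
  congr 2
  have := Equiv.mul_swap_eq_swap_mul g j k
  rw [this, hk]
  rfl

theorem jm_comm_perm (k : Fin m) (g : Equiv.Perm (Fin m)) (hk : g k = k)
    (hg : ∀ j, j < k → g j < k) (x : V) : ρ g (jm ρ k x) = jm ρ k (ρ g x) := by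
  rw [jm_conj ρ k k g hk]
  have : (Finset.univ.filter (· < k)).map g.toEmbedding = Finset.univ.filter (· < k) := by
    apply Finset.eq_of_subset_of_card_le
    · intro j hj
      simp only [Finset.mem_map, Finset.mem_filter, Finset.mem_univ, true_and] at hj ⊢
      obtain ⟨i, hi, rfl⟩ := hj
      exact hg i hi
    · rw [Finset.card_map]
  rw [this, jm, LinearMap.sum_apply]

theorem jm_commute (k l : Fin m) : Commute (jm ρ k) (jm ρ l) := by
  wlog h : k < l generalizing k l
  · rcases eq_or_lt_of_le (not_lt.mp h) with h | h
    · rw [h]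
    · exact (this l k h).symm
  refine LinearMap.ext fun x => ?_
  rw [Module.End.mul_apply, Module.End.mul_apply]
  conv_lhs => rw [jm, LinearMap.sum_apply]
  conv_rhs => arg 2; rw [jm, LinearMap.sum_apply]
  rw [map_sum]
  refine Finset.sum_congr rfl fun j hj => ?_
  rw [Finset.mem_filter] at hj
  refine jm_comm_perm ρ l _ (Equiv.swap_apply_of_ne_of_ne (hj.2.trans h).ne' h.ne') (fun i hi => ?_) x
  by_cases h1 : i = j
  · rw [h1, Equiv.swap_apply_left]; exact h
  by_cases h2 : i = k
  · rw [h2, Equiv.swap_apply_right]; exact hj.2.trans h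
  rwa [Equiv.swap_apply_of_ne_of_ne h1 h2]

theorem swap_swap_apply (a b : Fin m) (x : V) :
    ρ (Equiv.swap a b) (ρ (Equiv.swap a b) x) = x := by
  rw [← Module.End.mul_apply, ← map_mul, Equiv.swap_mul_self, map_one, Module.End.one_apply]

theorem jm_adj_other {a b : Fin m} (hab : (b : ℕ) = a + 1) (k : Fin m) (ha : k ≠ a) (hb : k ≠ b)
    (x : V) : jm ρ k (ρ (Equiv.swap a b) x) = ρ (Equiv.swap a b) (jm ρ k x) := by
  refine (jm_comm_perm ρ k _ (Equiv.swap_apply_of_ne_of_ne ha hb) (fun i hi => ?_) x).symm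
  by_cases h1 : i = a
  · rw [h1, Equiv.swap_apply_left]; omega
  by_cases h2 : i = b
  · rw [h2, Equiv.swap_apply_right]; omega
  rwa [Equiv.swap_apply_of_ne_of_ne h1 h2]

theorem jm_right {a b : Fin m} (hab : (b : ℕ) = a + 1) (x : V) :
    jm ρ b (ρ (Equiv.swap a b) x) = ρ (Equiv.swap a b) (jm ρ a x) + x := by
  rw [jm_conj ρ a b _ (Equiv.swap_apply_left a b), jm, LinearMap.sum_apply]
  have h : Finset.univ.filter (· < b) = insert a (Finset.univ.filter (· < a)) := by
    ext j; simp only [Finset.mem_filter, Finset.mem_univ, true_and, Finset.mem_insert]; omega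
  have h2 : (Finset.univ.filter (· < a)).map (Equiv.swap a b).toEmbedding
      = Finset.univ.filter (· < a) := by
    apply Finset.eq_of_subset_of_card_le
    · intro j hj
      simp only [Finset.mem_map, Finset.mem_filter, Finset.mem_univ, true_and] at hj ⊢
      obtain ⟨i, hi, rfl⟩ := hj
      have : Equiv.swap a b i = i :=
        Equiv.swap_apply_of_ne_of_ne hi.ne (by omega)
      simpa [this] using hi
    · rw [Finset.card_map]
  rw [h2, h, Finset.sum_insert (by simp), swap_swap_apply, add_comm]

theorem jm_left {a b : Fin m} (hab : (b : ℕ) = a + 1) (x : V) :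
    jm ρ a (ρ (Equiv.swap a b) x) = ρ (Equiv.swap a b) (jm ρ b x) - x := by
  have h := jm_right ρ hab (ρ (Equiv.swap a b) x)
  rw [swap_swap_apply] at h
  rw [h, map_add, swap_swap_apply, swap_swap_apply, add_sub_cancel_right]

variable (hinv : ∀ g x y, inner ℂ (ρ g x) (ρ g y) = inner ℂ x y)
include hinv

theorem swap_sym (a b : Fin m) (x y : V) :
    inner ℂ (ρ (Equiv.swap a b) x) y = inner ℂ x (ρ (Equiv.swap a b) y) := by
  rw [← hinv (Equiv.swap a b) x, swap_swap_apply]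

theorem jm_sym (k : Fin m) : (jm ρ k).IsSymmetric := by
  intro x y
  simp only [jm, LinearMap.sum_apply, sum_inner, inner_sum]
  exact Finset.sum_congr rfl fun j _ => swap_sym ρ hinv _ _ _ _

theorem wt_ortho {γ δ : Fin m → ℝ} (h : γ ≠ δ) {x y : V} (hx : x ∈ wt ρ γ) (hy : y ∈ wt ρ δ) :
    inner ℂ x y = 0 := by
  obtain ⟨k, hk⟩ := Function.ne_iff.mp h
  have := jm_sym ρ hinv k x y
  rw [hx k, hy k, inner_smul_left, inner_smul_right, Complex.conj_ofReal, ← sub_eq_zero,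
    ← sub_mul, mul_eq_zero] at this
  refine this.resolve_left ?_
  rw [sub_eq_zero]
  exact_mod_cast hk

/-- A nonzero weight vector has distinct weights at neighbouring positions. -/
theorem wt_eq_zero {a b : Fin m} (hab : (b : ℕ) = a + 1) {γ : Fin m → ℝ} (h : γ a = γ b) {x : V}
    (hx : x ∈ wt ρ γ) : x = 0 := by
  have h1 := jm_sym ρ hinv a x (ρ (Equiv.swap a b) x)
  rw [jm_left ρ hab, hx a, hx b, inner_smul_left, Complex.conj_ofReal, inner_sub_right, map_smul,
    inner_smul_right, h] at h1
  have : inner ℂ x x = 0 := by linear_combination h1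
  exact inner_self_eq_zero.mp this

omit hinv in
/-- The intertwiner `s - (γ b - γ a)⁻¹`, where `s = (a b)` and `b = a + 1`, maps the weight space
of `γ` to that of `γ ∘ s`. -/
theorem psi_mem {a b : Fin m} (hab : (b : ℕ) = a + 1) {γ : Fin m → ℝ} (h : γ a ≠ γ b) {x : V}
    (hx : x ∈ wt ρ γ) :
    ρ (Equiv.swap a b) x - (((γ b - γ a)⁻¹ : ℝ) : ℂ) • x ∈ wt ρ (γ ∘ Equiv.swap a b) := by
  have hd : (γ b : ℂ) - γ a ≠ 0 := by
    rw [sub_ne_zero]; exact_mod_cast h.symm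
  intro k
  rw [map_sub, map_smul]
  by_cases ha : k = a
  · subst ha
    rw [jm_left ρ hab, hx k, hx b]
    simp only [Function.comp_apply, Equiv.swap_apply_left, map_smul]
    push_cast
    match_scalars
    · ring
    · field_simp; ring
  by_cases hb : k = b
  · subst hb
    rw [jm_right ρ hab, hx k, hx a]
    simp only [Function.comp_apply, Equiv.swap_apply_right, map_smul]
    push_cast
    match_scalars
    · ring
    · field_simp; ring
  rw [jm_adj_other ρ hab k ha hb, hx k, Function.comp_apply, Equiv.swap_apply_of_ne_of_ne ha hb,
    map_smul]
  module

/-- The isometry `s` splits `s x` into the orthogonal vectors `(γ b - γ a)⁻¹ x` and the image of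
the intertwiner, so the first of them is not longer than `x`. -/
theorem psi_le {a b : Fin m} (hab : (b : ℕ) = a + 1) {γ : Fin m → ℝ} (h : γ a ≠ γ b) {x : V}
    (hx : x ∈ wt ρ γ) (hx0 : x ≠ 0) : |(γ b - γ a)⁻¹| ≤ 1 := by
  set c := (γ b - γ a)⁻¹ with hc
  have hy := psi_mem ρ hab h hx
  rw [← hc] at hy
  set y := ρ (Equiv.swap a b) x - (c : ℂ) • x with hydef
  have hne : γ ≠ γ ∘ Equiv.swap a b := by
    intro h2
    have := congrFun h2 a
    simp at this
    exact h this
  have h1 : inner ℂ x y = 0 := wt_ortho ρ hinv hne hx hy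
  have h2 : ρ (Equiv.swap a b) x = y + (c : ℂ) • x := by rw [hydef]; abel
  have h3 : ‖x‖ ^ 2 = ‖y‖ ^ 2 + c ^ 2 * ‖x‖ ^ 2 := by
    have e1 := hinv (Equiv.swap a b) x x
    have h1' : inner ℂ y x = 0 := by rw [← inner_conj_symm, h1, map_zero]
    rw [h2, inner_add_left, inner_add_right, inner_add_right, inner_smul_left, inner_smul_right,
      inner_smul_left, inner_smul_right, h1, h1', Complex.conj_ofReal,
      inner_self_eq_norm_sq_to_K, inner_self_eq_norm_sq_to_K] at e1
    have e2 : ((‖y‖ ^ 2 + c ^ 2 * ‖x‖ ^ 2 : ℝ) : ℂ) = ((‖x‖ ^ 2 : ℝ) : ℂ) := by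
      push_cast
      simp only [Complex.coe_algebraMap] at e1
      linear_combination e1
    exact_mod_cast e2.symm
  have h4 : 0 < ‖x‖ ^ 2 := by positivity
  have h5 : c ^ 2 ≤ 1 := by
    by_contra hcon
    push Not at hcon
    nlinarith [sq_nonneg ‖y‖]
  exact (sq_le_one_iff_abs_le_one c).mp h5

end rep

/-! ### Length and order-preserving permutations -/

/-- Adjacent transpositions, the Coxeter generators of the symmetric group. -/
def IsAdj {m : ℕ} (s : Equiv.Perm (Fin m)) : Prop :=
  ∃ a b : Fin m, (b : ℕ) = a + 1 ∧ s = Equiv.swap a b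

theorem closure_adj (m : ℕ) : Submonoid.closure {s : Equiv.Perm (Fin m) | IsAdj s} = ⊤ := by
  cases m with
  | zero => exact Subsingleton.elim _ _
  | succ n =>
    rw [eq_top_iff, ← Equiv.Perm.mclosure_swap_castSucc_succ n]
    apply Submonoid.closure_mono
    rintro _ ⟨i, rfl⟩
    exact ⟨i.castSucc, i.succ, by simp, rfl⟩

theorem IsAdj.mul_self {m : ℕ} {s : Equiv.Perm (Fin m)} (h : IsAdj s) : s * s = 1 := by
  obtain ⟨a, b, _, rfl⟩ := h
  exact Equiv.swap_mul_self a b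

theorem IsAdj.sign {m : ℕ} {s : Equiv.Perm (Fin m)} (h : IsAdj s) : Equiv.Perm.sign s = -1 := by
  obtain ⟨a, b, h, rfl⟩ := h
  exact Equiv.Perm.sign_swap (by intro h'; omega)

/-- The Coxeter length and the properties of it used below; that multiplication by a generator
always changes it is seen from the sign. -/
theorem exists_length (m : ℕ) : ∃ ℓ : Equiv.Perm (Fin m) → ℕ,
    (∀ w, ℓ w = 0 ↔ w = 1) ∧
    (∀ s w, IsAdj s → ℓ (s * w) = ℓ w + 1 ∨ ℓ (s * w) + 1 = ℓ w) ∧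
    (∀ w, w ≠ 1 → ∃ s, IsAdj s ∧ ℓ (s * w) + 1 = ℓ w) := by
  classical
  let P : Equiv.Perm (Fin m) → ℕ → Prop := fun w n =>
    ∃ l : List (Equiv.Perm (Fin m)), l.length = n ∧ (∀ s ∈ l, IsAdj s) ∧ l.prod = w
  have hP : ∀ w, ∃ n, P w n := by
    intro w
    have hw : w ∈ Submonoid.closure {s : Equiv.Perm (Fin m) | IsAdj s} := by
      rw [closure_adj]; trivial
    obtain ⟨l, hl, hp⟩ := Submonoid.exists_list_of_mem_closure hw
    exact ⟨l.length, l, rfl, hl, hp⟩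
  have hstep : ∀ s w n, IsAdj s → P w n → P (s * w) (n + 1) := by
    rintro s w n hs ⟨l, h1, h2, h3⟩
    refine ⟨s :: l, by simp [h1], ?_, by simp [h3]⟩
    intro x hx
    rcases List.mem_cons.mp hx with rfl | hx
    · exact hs
    · exact h2 x hx
  have hsign : ∀ w n, P w n → Equiv.Perm.sign w = (-1) ^ n := by
    rintro w n ⟨l, rfl, h2, rfl⟩
    induction l with
    | nil => simp
    | cons s l ih =>
      rw [List.prod_cons, Equiv.Perm.sign_mul, (h2 s (by simp)).sign,
        ih (fun x hx => h2 x (by simp [hx])), List.length_cons, pow_succ']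
  have hle : ∀ s w, IsAdj s → Nat.find (hP (s * w)) ≤ Nat.find (hP w) + 1 := fun s w hs =>
    Nat.find_min' _ (hstep s w _ hs (Nat.find_spec (hP w)))
  have hss : ∀ s w : Equiv.Perm (Fin m), IsAdj s → s * (s * w) = w := fun s w hs => by
    rw [← mul_assoc, hs.mul_self, one_mul]
  refine ⟨fun w => Nat.find (hP w), ?_, ?_, ?_⟩
  · refine fun w => ⟨fun hw => ?_, ?_⟩
    swap
    · rintro rfl
      exact (Nat.find_eq_zero _).mpr ⟨[], rfl, by simp, rfl⟩
    obtain ⟨l, h1, h2, h3⟩ := Nat.find_spec (hP w)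
    dsimp only at hw
    rw [hw, List.length_eq_zero_iff] at h1
    rw [← h3, h1, List.prod_nil]
  · intro s w hs
    have h1 := hle s w hs
    have h2 := hle s (s * w) hs
    simp only [hss s w hs] at h2
    have h3 : Nat.find (hP (s * w)) ≠ Nat.find (hP w) := by
      intro h
      have e1 := hsign _ _ (Nat.find_spec (hP (s * w)))
      have e2 := hsign _ _ (Nat.find_spec (hP w))
      rw [h, ← e2, Equiv.Perm.sign_mul, hs.sign] at e1
      rcases Int.units_eq_one_or (Equiv.Perm.sign w) with h | h <;> rw [h] at e1 <;>
        revert e1 <;> decide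
    dsimp only
    omega
  · intro w hw
    obtain ⟨l, h1, h2, h3⟩ := Nat.find_spec (hP w)
    cases l with
    | nil => exact absurd h3.symm hw
    | cons s l =>
      have hs := h2 s (by simp)
      refine ⟨s, hs, ?_⟩
      have e : s * w = l.prod := by rw [← h3, List.prod_cons, hss s _ hs]
      have h4 : Nat.find (hP (s * w)) ≤ l.length :=
        Nat.find_min' _ ⟨l, rfl, fun x hx => h2 x (by simp [hx]), e.symm⟩
      have h5 := hle s (s * w) hs
      simp only [hss s w hs] at h5
      rw [List.length_cons] at h1
      dsimp only
      omega

/-- `w` is increasing on each level set of `α`. Each weight `α ∘ w⁻¹` in the orbit of `α` comes from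
exactly one such `w`. -/
def OrdPres {m : ℕ} (α : Fin m → ℝ) (w : Equiv.Perm (Fin m)) : Prop :=
  ∀ p q, p < q → α p = α q → w p < w q

/-- Distinct order-preserving permutations produce distinct weights. -/
theorem ordPres_inj {m : ℕ} (α : Fin m → ℝ) {w w' : Equiv.Perm (Fin m)} (hw : OrdPres α w)
    (hw' : OrdPres α w') (h : α ∘ ⇑w⁻¹ = α ∘ ⇑w'⁻¹) : w = w' := by
  -- `θ = w⁻¹ w'` preserves the fibres of `α` and is increasing on each of them
  have h1 : ∀ p, α ((w⁻¹ * w') p) = α p := fun p => by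
    have := congrFun h (w' p)
    simpa using this
  have h2 : ∀ p q, p < q → α p = α q → (w⁻¹ * w') p < (w⁻¹ * w') q := by
    intro p q hpq hα
    by_contra hcon
    rcases (not_lt.mp hcon).eq_or_lt with h3 | h3
    · exact hpq.ne ((w⁻¹ * w').injective h3).symm
    · have h4 := hw _ _ h3 (by rw [h1, h1, hα])
      simp at h4
      exact absurd (hw' p q hpq hα) h4.asymm
  have h3 : ∀ p, (w⁻¹ * w') p = p := by
    intro p
    induction p using WellFoundedLT.induction with
    | ind p ih =>
      rcases lt_trichotomy ((w⁻¹ * w') p) p with h | h | h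
      · exact (w⁻¹ * w').injective (ih _ h)
      · exact h
      · obtain ⟨q, hq⟩ := (w⁻¹ * w').surjective p
        rcases lt_trichotomy q p with h' | h' | h'
        · have := ih q h'
          rw [hq] at this; exact absurd this.symm h'.ne
        · rw [h'] at hq; exact hq
        · have h5 := h2 p q h' (by rw [← h1 q, hq])
          rw [hq] at h5; exact absurd h5 h.asymm
  have : w⁻¹ * w' = 1 := Equiv.ext h3
  rw [inv_mul_eq_one] at this
  exact this

/-- An adjacent transposition that exchanges two distinct values of the weight keeps the
permutation order preserving. -/
theorem OrdPres.swap_mul {m : ℕ} {α : Fin m → ℝ} {w : Equiv.Perm (Fin m)} (hw : OrdPres α w)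
    {a b : Fin m} (hab : (b : ℕ) = a + 1) (hne : (α ∘ ⇑w⁻¹) a ≠ (α ∘ ⇑w⁻¹) b) :
    OrdPres α (Equiv.swap a b * w) := by
  intro p q hpq hα
  have h := hw p q hpq hα
  have hne' : ¬ (w p = a ∧ w q = b) := by
    rintro ⟨rfl, rfl⟩
    simp [hα] at hne
  simp only [Equiv.Perm.mul_apply, Equiv.swap_apply_def]
  split_ifs <;> omega

/-! ### Bases on which all `1 + s` act nonnegatively -/

/-- Simplicity in the category of representations means that the only invariant subspaces are
`⊥` and `⊤`. -/
theorem simple_submodule {G : Type} [Group G] (V : FDRep ℂ G) [hV : CategoryTheory.Simple V]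
    (W : Submodule ℂ V) (hW : ∀ g, ∀ x ∈ W, V.ρ g x ∈ W) : W = ⊥ ∨ W = ⊤ := by
  let σ : Representation ℂ G W :=
    { toFun := fun g => (V.ρ g).restrict (hW g)
      map_one' := by ext; simp
      map_mul' := fun x y => by ext; simp }
  let f : FDRep.of σ ⟶ V :=
    { hom := FGModuleCat.ofHom W.subtype
      comm := fun g => by
        ext x
        rfl }
  have hmono : CategoryTheory.Mono f := by
    refine (CategoryTheory.forget (FDRep ℂ G)).mono_of_mono_map ?_
    rw [CategoryTheory.mono_iff_injective]
    exact Subtype.val_injective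
  by_cases h : f = 0
  · left
    rw [eq_bot_iff]
    intro x hx
    have := congrArg (fun φ : FDRep.of σ ⟶ V => φ.hom.hom.hom (⟨x, hx⟩ : W)) h
    exact this
  · right
    have hiso : CategoryTheory.IsIso f := CategoryTheory.isIso_of_mono_of_nonzero h
    rw [eq_top_iff]
    intro x _
    have h2 := CategoryTheory.IsIso.inv_hom_id f
    have := congrArg (fun φ : V ⟶ V => φ.hom.hom.hom x) h2
    have h3 : f.hom.hom.hom ((CategoryTheory.inv f).hom.hom.hom x) = x := this
    rw [← h3]
    exact Subtype.property _

theorem simple_nontrivial {G : Type} [Group G] (V : FDRep ℂ G) [hV : CategoryTheory.Simple V] :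
    Nontrivial V := by
  by_contra h
  rw [not_nontrivial_iff_subsingleton] at h
  apply CategoryTheory.id_nonzero V
  ext x
  exact Subsingleton.elim (α := V) _ _

section main
variable {m : ℕ} {V : Type*} [NormedAddCommGroup V] [InnerProductSpace ℂ V]
  (ρ : Representation ℂ (Equiv.Perm (Fin m)) V)

open Classical in
/-- The weight space of `α ∘ w⁻¹`, attached to `w` only when `w` is order preserving, so that the
slots of distinct permutations are orthogonal. -/
noncomputable def slot (α : Fin m → ℝ) (w : Equiv.Perm (Fin m)) : Submodule ℂ V :=
  if OrdPres α w then wt ρ (α ∘ ⇑w⁻¹) else ⊥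

theorem slot_of_ordPres {α : Fin m → ℝ} {w : Equiv.Perm (Fin m)} (h : OrdPres α w) :
    slot ρ α w = wt ρ (α ∘ ⇑w⁻¹) := if_pos h

theorem mem_slot {α : Fin m → ℝ} {w : Equiv.Perm (Fin m)} {x : V} (hx : x ∈ slot ρ α w)
    (h0 : x ≠ 0) : OrdPres α w ∧ x ∈ wt ρ (α ∘ ⇑w⁻¹) := by
  unfold slot at hx
  split_ifs at hx with h
  · exact ⟨h, hx⟩
  · exact absurd ((Submodule.mem_bot ℂ).mp hx) h0

variable (hinv : ∀ g x y, inner ℂ (ρ g x) (ρ g y) = inner ℂ x y)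
include hinv

theorem slot_ortho {α : Fin m → ℝ} {w w' : Equiv.Perm (Fin m)} (h : w ≠ w') :
    slot ρ α w ⟂ slot ρ α w' := by
  rw [Submodule.isOrtho_iff_inner_eq]
  intro x hx y hy
  by_cases hx0 : x = 0
  · rw [hx0, inner_zero_left]
  by_cases hy0 : y = 0
  · rw [hy0, inner_zero_right]
  obtain ⟨h1, h2⟩ := mem_slot ρ hx hx0
  obtain ⟨h3, h4⟩ := mem_slot ρ hy hy0
  exact wt_ortho ρ hinv (fun he => h (ordPres_inj α h1 h3 he)) h2 h4

/-- A generator `s` maps the slot of `w` into the sum of the slots of `w` and `s * w`.  The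
coefficient on the slot of `w` is at most `1` in absolute value. -/
theorem slot_step {α : Fin m → ℝ} {s : Equiv.Perm (Fin m)} (hs : IsAdj s) (w : Equiv.Perm (Fin m))
    {x : V} (hx : x ∈ slot ρ α w) :
    ∃ c : ℝ, |c| ≤ 1 ∧ ρ s x - (c : ℂ) • x ∈ slot ρ α (s * w) := by
  by_cases h0 : x = 0
  · exact ⟨0, by simp, by simp [h0]⟩
  obtain ⟨a, b, hab, rfl⟩ := hs
  obtain ⟨h1, h2⟩ := mem_slot ρ hx h0
  have hne : (α ∘ ⇑w⁻¹) a ≠ (α ∘ ⇑w⁻¹) b := fun h => h0 (wt_eq_zero ρ hinv hab h h2)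
  refine ⟨_, psi_le ρ hinv hab hne h2 h0, ?_⟩
  rw [slot_of_ordPres ρ (h1.swap_mul hab hne), mul_inv_rev, Equiv.swap_inv]
  exact psi_mem ρ hab hne h2

/-- Young's seminormal vectors: `u w` is the component of `ρ w v` in the slot of `w`. The other
components of `ρ w v` lie in slots of permutations no longer than `w`, which makes `u w`
independent of the reduced word used to reach `w`. -/
theorem exists_seminormal (α : Fin m → ℝ) (v : V) (hv : v ∈ wt ρ α) :
    ∃ u : Equiv.Perm (Fin m) → V, u 1 = v ∧ (∀ w, u w ∈ slot ρ α w) ∧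
      ∀ s w, IsAdj s → ∃ c e : ℝ, |c| ≤ 1 ∧ 0 ≤ e ∧
        ρ s (u w) = (c : ℂ) • u w + (e : ℂ) • u (s * w) := by
  obtain ⟨ℓ, hl0, hl1, hl2⟩ := exists_length m
  -- `Z w` collects the slots, other than that of `w`, of permutations of length at most `ℓ w`
  let Z : Equiv.Perm (Fin m) → Submodule ℂ V := fun w => ⨆ x, ⨆ (_ : x ≠ w ∧ ℓ x ≤ ℓ w), slot ρ α x
  have hZle : ∀ w x, x ≠ w → ℓ x ≤ ℓ w → slot ρ α x ≤ Z w := fun w x h1 h2 =>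
    le_iSup₂_of_le (f := fun x (_ : x ≠ w ∧ ℓ x ≤ ℓ w) => slot ρ α x) x ⟨h1, h2⟩ le_rfl
  have hZo : ∀ w, slot ρ α w ⟂ Z w := by
    intro w
    simp only [Z, Submodule.isOrtho_iSup_right]
    exact fun x hx => slot_ortho ρ hinv hx.1.symm
  have hss : ∀ s w : Equiv.Perm (Fin m), IsAdj s → s * (s * w) = w := fun s w hs => by
    rw [← mul_assoc, hs.mul_self, one_mul]
  have hρss : ∀ s, IsAdj s → ∀ x, ρ s (ρ s x) = x := fun s hs x => by
    rw [← Module.End.mul_apply, ← map_mul, hs.mul_self, map_one, Module.End.one_apply]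
  have hsne : ∀ s w : Equiv.Perm (Fin m), IsAdj s → ℓ (s * w) = ℓ w + 1 → w ≠ s * w := by
    intro s w _ h h'
    rw [← h'] at h; omega
  have hZstep : ∀ s w, IsAdj s → ℓ (s * w) = ℓ w + 1 → ∀ z ∈ Z w, ρ s z ∈ Z (s * w) := by
    intro s w hs hl z hz
    have : Z w ≤ (Z (s * w)).comap (ρ s) := by
      refine iSup₂_le fun x hx y hy => ?_
      obtain ⟨c, _, hc⟩ := slot_step ρ hinv hs x hy
      rw [Submodule.mem_comap, ← sub_add_cancel (ρ s y) ((c : ℂ) • y)]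
      refine add_mem (hZle _ (s * x) ?_ ?_ hc) (Submodule.smul_mem _ _ (hZle _ x ?_ ?_ hy))
      · exact fun h => hx.1 (mul_left_cancel h)
      · have := hl1 s x hs; have := hx.2; omega
      · rintro h
        have := hx.2
        rw [h] at this; omega
      · have := hx.2; omega
    exact this hz
  have hstep : ∀ s w, IsAdj s → ℓ (s * w) = ℓ w + 1 → ∀ x ∈ slot ρ α w, ρ w v - x ∈ Z w →
      ∀ c : ℝ, ρ s x - (c : ℂ) • x ∈ slot ρ α (s * w) →
      ρ (s * w) v - (ρ s x - (c : ℂ) • x) ∈ Z (s * w) := by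
    intro s w hs hl x hx hxZ c hc
    have e : ρ (s * w) v - (ρ s x - (c : ℂ) • x) = ρ s (ρ w v - x) + (c : ℂ) • x := by
      rw [map_mul, Module.End.mul_apply, map_sub]; abel
    rw [e]
    exact add_mem (hZstep s w hs hl _ hxZ)
      (Submodule.smul_mem _ _ (hZle _ w (hsne s w hs hl) (by omega) hx))
  have hone : v ∈ slot ρ α 1 := by
    rw [slot_of_ordPres ρ (fun p q h _ => by simpa using h)]
    simpa using hv
  have hex : ∀ n w, ℓ w = n → ∃ x ∈ slot ρ α w, ρ w v - x ∈ Z w := by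
    intro n
    induction n with
    | zero =>
      intro w hw
      rw [(hl0 w).mp hw]
      exact ⟨v, hone, by simp⟩
    | succ n ih =>
      intro w hw
      obtain ⟨s, hs, hsl⟩ := hl2 w (fun h => by
        have := (hl0 w).mpr h
        omega)
      obtain ⟨x, hx, hxZ⟩ := ih (s * w) (by omega)
      obtain ⟨c, _, hc⟩ := slot_step ρ hinv hs (s * w) hx
      have := hstep s (s * w) hs (by rw [hss s w hs]; omega) x hx hxZ c hc
      rw [hss s w hs] at this hc
      exact ⟨_, hc, this⟩
  have huniq : ∀ w x y, x ∈ slot ρ α w → y ∈ slot ρ α w → ρ w v - x ∈ Z w → ρ w v - y ∈ Z w →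
      x = y := by
    intro w x y hx hy hxZ hyZ
    have h1 : x - y ∈ slot ρ α w := sub_mem hx hy
    have h2 : x - y ∈ Z w := by
      have := sub_mem hyZ hxZ
      rwa [sub_sub_sub_cancel_left] at this
    have := Submodule.isOrtho_iff_inner_eq.mp (hZo w) _ h1 _ h2
    exact sub_eq_zero.mp (inner_self_eq_zero.mp this)
  choose u hu huZ using fun w => hex (ℓ w) w rfl
  have hup : ∀ s w, IsAdj s → ℓ (s * w) = ℓ w + 1 → ∃ c : ℝ, |c| ≤ 1 ∧
      u (s * w) = ρ s (u w) - (c : ℂ) • u w := by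
    intro s w hs hl
    obtain ⟨c, hc1, hc⟩ := slot_step ρ hinv hs w (hu w)
    exact ⟨c, hc1, huniq _ _ _ (hu _) hc (huZ _) (hstep s w hs hl _ (hu w) (huZ w) c hc)⟩
  refine ⟨u, huniq 1 _ _ (hu 1) hone (huZ 1) (by simp), hu, ?_⟩
  intro s w hs
  rcases hl1 s w hs with hl | hl
  · obtain ⟨c, hc, h⟩ := hup s w hs hl
    exact ⟨c, 1, hc, zero_le_one, by rw [h]; simp⟩
  · obtain ⟨c, hc, h⟩ := hup s (s * w) hs (by rw [hss s w hs]; omega)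
    rw [hss s w hs] at h
    refine ⟨-c, 1 - c ^ 2, by rwa [abs_neg], ?_, ?_⟩
    · have := (sq_le_one_iff_abs_le_one c).mpr hc
      linarith
    · rw [h, map_sub, map_smul, hρss s hs]
      push_cast
      module

/-- In an irreducible unitary representation the nonzero seminormal vectors form a basis. On it
`1 + s` has diagonal entries `1 + c ≥ 0` and off-diagonal entries `e ≥ 0`. -/
theorem exists_nonneg_basis_aux [FiniteDimensional ℂ V] [Nontrivial V]
    (hirr : ∀ W : Submodule ℂ V, (∀ g, ∀ x ∈ W, ρ g x ∈ W) → W = ⊥ ∨ W = ⊤) :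
    ∃ (ι : Type) (_ : Fintype ι) (_ : DecidableEq ι) (b : Module.Basis ι ℂ V),
      ∀ s, IsAdj s → ∀ p q, ∃ r : ℝ, 0 ≤ r ∧ LinearMap.toMatrix b b (1 + ρ s) p q = r := by
  classical
  -- a joint eigenvector of the Jucys-Murphy elements
  obtain ⟨α, v, hv0, hv⟩ : ∃ (α : Fin m → ℝ) (v : V), v ≠ 0 ∧ v ∈ wt ρ α := by
    have htop := LinearMap.IsSymmetric.iSup_iInf_eq_top_of_commute (T := jm ρ) (jm_sym ρ hinv)
      (fun i j _ => jm_commute ρ i j)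
    have hex : ∃ χ : Fin m → ℂ, (⨅ i, Module.End.eigenspace (jm ρ i) (χ i)) ≠ ⊥ := by
      by_contra hcon
      push Not at hcon
      simp only [hcon, iSup_bot] at htop
      exact bot_ne_top htop
    obtain ⟨χ, hχ⟩ := hex
    obtain ⟨v, hv, hv0⟩ := Submodule.exists_mem_ne_zero_of_ne_bot hχ
    rw [Submodule.mem_iInf] at hv
    refine ⟨fun i => (χ i).re, v, hv0, fun k => ?_⟩
    have hk := Module.End.mem_eigenspace_iff.mp (hv k)
    have h1 := jm_sym ρ hinv k v v
    rw [hk, inner_smul_left, inner_smul_right] at h1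
    have h2 := mul_right_cancel₀ (inner_self_ne_zero.mpr hv0) h1
    rw [Complex.conj_eq_iff_re.mp h2, hk]
  obtain ⟨u, hu1, hu, hus⟩ := exists_seminormal ρ hinv α v hv
  have hli : LinearIndependent ℂ (fun w : {w // u w ≠ 0} => u w) := by
    refine linearIndependent_of_ne_zero_of_inner_eq_zero (𝕜 := ℂ) (fun w => w.2) ?_
    intro w w' hww
    exact Submodule.isOrtho_iff_inner_eq.mp
      (slot_ortho ρ hinv (fun h => hww (Subtype.ext h))) _ (hu _) _ (hu _)
  have hmem : ∀ w, u w ∈ Submodule.span ℂ (Set.range (fun w : {w // u w ≠ 0} => u w)) := by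
    intro w
    by_cases h : u w = 0
    · rw [h]; exact zero_mem _
    · exact Submodule.subset_span ⟨⟨w, h⟩, rfl⟩
  have hspan : Submodule.span ℂ (Set.range (fun w : {w // u w ≠ 0} => u w)) = ⊤ := by
    refine (hirr _ ?_).resolve_left ?_
    · intro g
      have hg : g ∈ Submonoid.closure {s : Equiv.Perm (Fin m) | IsAdj s} := by
        rw [closure_adj]; trivial
      induction hg using Submonoid.closure_induction with
      | mem s hs =>
        intro x hx
        induction hx using Submodule.span_induction with
        | mem x hx =>
          obtain ⟨w, rfl⟩ := hx
          obtain ⟨c, e, _, _, h⟩ := hus s w hs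
          dsimp only
          rw [h]
          exact add_mem (Submodule.smul_mem _ _ (hmem _)) (Submodule.smul_mem _ _ (hmem _))
        | zero => rw [map_zero]; exact zero_mem _
        | add x y _ _ hx hy => rw [map_add]; exact add_mem hx hy
        | smul c x _ hx => rw [map_smul]; exact Submodule.smul_mem _ _ hx
      | one => intro x hx; simpa using hx
      | mul g h _ _ hg hh =>
        intro x hx
        rw [map_mul, Module.End.mul_apply]
        exact hg _ (hh _ hx)
    · intro h
      have := hmem 1
      rw [h, hu1, Submodule.mem_bot] at this
      exact hv0 this
  let b := Module.Basis.mk hli hspan.ge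
  have hb : ∀ w, b w = u w := fun w => by simp [b]
  have hrepr : ∀ w p, ∃ r : ℝ, 0 ≤ r ∧ b.repr (u w) p = r := by
    intro w p
    by_cases h : u w = 0
    · exact ⟨0, le_rfl, by simp [h]⟩
    · have : u w = b ⟨w, h⟩ := by rw [hb]
      rw [this, Module.Basis.repr_self, Finsupp.single_apply]
      split_ifs
      · exact ⟨1, zero_le_one, by simp⟩
      · exact ⟨0, le_rfl, by simp⟩
  refine ⟨{w // u w ≠ 0}, inferInstance, inferInstance, b, ?_⟩
  intro s hs p q
  obtain ⟨c, e, hc, he, h⟩ := hus s q hs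
  obtain ⟨r1, hr1, h1⟩ := hrepr q p
  obtain ⟨r2, hr2, h2⟩ := hrepr (s * q) p
  refine ⟨(1 + c) * r1 + e * r2, ?_, ?_⟩
  · have := (abs_le.mp hc).1
    have : 0 ≤ 1 + c := by linarith
    positivity
  · rw [LinearMap.toMatrix_apply, LinearMap.add_apply, Module.End.one_apply, hb, h]
    simp only [map_add, map_smul, Finsupp.add_apply, Finsupp.smul_apply, h1, h2, smul_eq_mul]
    push_cast
    ring

end main

/-- The same without a given inner product: an invariant one is built from a nonzero functional. -/
theorem exists_nonneg_basis {m : ℕ} {V : Type*} [AddCommGroup V] [Module ℂ V]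
    [FiniteDimensional ℂ V] [Nontrivial V] (ρ : Representation ℂ (Equiv.Perm (Fin m)) V)
    (hirr : ∀ W : Submodule ℂ V, (∀ g, ∀ x ∈ W, ρ g x ∈ W) → W = ⊥ ∨ W = ⊤) :
    ∃ (ι : Type) (_ : Fintype ι) (_ : DecidableEq ι) (b : Module.Basis ι ℂ V),
      ∀ s, IsAdj s → ∀ p q, ∃ r : ℝ, 0 ≤ r ∧ LinearMap.toMatrix b b (1 + ρ s) p q = r := by
  obtain ⟨v, hv⟩ := exists_ne (0 : V)
  obtain ⟨f, hf⟩ : ∃ f : Module.Dual ℂ V, f v ≠ 0 := by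
    by_contra hcon
    push Not at hcon
    exact hv ((Module.forall_dual_apply_eq_zero_iff ℂ v).mp hcon)
  -- `x ↦ (f (g x))_g` embeds `V` into functions on the group, with their standard inner product
  have hker : ∀ x, (∀ g, f (ρ g x) = 0) → x = 0 := by
    let W : Submodule ℂ V :=
      { carrier := {x | ∀ g, f (ρ g x) = 0}
        add_mem' := fun hx hy g => by rw [map_add, map_add, hx g, hy g, add_zero]
        zero_mem' := fun g => by simp
        smul_mem' := fun c x hx g => by rw [map_smul, map_smul, hx g, smul_zero] }
    have hW := hirr W (fun g x hx h => by
      rw [← Module.End.mul_apply, ← map_mul]; exact hx _)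
    rcases hW with hW | hW
    · intro x hx
      have : x ∈ W := hx
      rwa [hW, Submodule.mem_bot] at this
    · exfalso
      have : v ∈ W := by rw [hW]; trivial
      exact hf (by simpa using this 1)
  let core : InnerProductSpace.Core ℂ V :=
    { inner := fun x y => ∑ g, (starRingEnd ℂ) (f (ρ g x)) * f (ρ g y)
      conj_inner_symm := fun x y => by
        simp only [map_sum, map_mul, Complex.conj_conj]
        exact Finset.sum_congr rfl fun g _ => mul_comm _ _
      re_inner_nonneg := fun x => by
        rw [map_sum]
        refine Finset.sum_nonneg fun g _ => ?_
        rw [← Complex.normSq_eq_conj_mul_self]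
        exact Complex.normSq_nonneg _
      add_left := fun x y z => by
        simp only [map_add, add_mul, Finset.sum_add_distrib]
      smul_left := fun x y c => by
        simp only [map_smul, smul_eq_mul, map_mul, Finset.mul_sum, mul_assoc]
      definite := fun x hx => by
        refine hker x fun g => ?_
        have h : ∑ g, Complex.normSq (f (ρ g x)) = 0 := by
          have h' : ((∑ g, Complex.normSq (f (ρ g x)) : ℝ) : ℂ) = 0 := by
            rw [← hx]
            push_cast
            exact Finset.sum_congr rfl fun g _ => Complex.normSq_eq_conj_mul_self
          exact_mod_cast h'
        have := (Finset.sum_eq_zero_iff_of_nonneg (fun g _ => Complex.normSq_nonneg _)).mp h g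
          (Finset.mem_univ g)
        exact Complex.normSq_eq_zero.mp this }
  let _ : NormedAddCommGroup V := core.toNormedAddCommGroup
  let _ : InnerProductSpace ℂ V := InnerProductSpace.ofCore core.toCore
  refine exists_nonneg_basis_aux ρ ?_ hirr
  intro h x y
  change ∑ g, (starRingEnd ℂ) (f (ρ g (ρ h x))) * f (ρ g (ρ h y)) =
    ∑ g, (starRingEnd ℂ) (f (ρ g x)) * f (ρ g y)
  conv_rhs => rw [← Equiv.sum_comp (Equiv.mulRight h)]
  simp [map_mul]

/-! ### Convolution cones on the symmetric group -/

section cone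
variable {m : ℕ}

/-- The product of the group algebra `ℝ[𝔖_m]`, written on coefficient functions. -/
def conv (a b : Equiv.Perm (Fin m) → ℝ) : Equiv.Perm (Fin m) → ℝ :=
  fun g => ∑ h, a h * b (h⁻¹ * g)

/-- Closed convex cones of the group algebra that are closed under products and contain the
elements `1` and `1 + s` for all adjacent transpositions `s`. -/
structure PosCone (G : Set (Equiv.Perm (Fin m) → ℝ)) : Prop where
  closed : IsClosed G
  add : ∀ a ∈ G, ∀ b ∈ G, a + b ∈ G
  smul : ∀ c : ℝ, 0 ≤ c → ∀ a ∈ G, c • a ∈ G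
  conv : ∀ a ∈ G, ∀ b ∈ G, conv a b ∈ G
  one : Pi.single 1 1 ∈ G
  adj : ∀ s, IsAdj s → Pi.single 1 1 + Pi.single s 1 ∈ G

/-- The irreducible character `χ` is nonnegative on some `PosCone`: the elements acting by
entrywise nonnegative matrices in the basis of `exists_nonneg_basis`, whose trace is
therefore nonnegative. -/
theorem exists_posCone (χ : Equiv.Perm (Fin m) → ℝ) (hχ : IsIrrChar χ) :
    ∃ G : Set (Equiv.Perm (Fin m) → ℝ), PosCone G ∧ ∀ a ∈ G, 0 ≤ ∑ g, χ g * a g := by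
  obtain ⟨V, hV, hchar⟩ := hχ
  have := simple_nontrivial V
  obtain ⟨ι, _, _, b, hb⟩ := exists_nonneg_basis V.ρ (simple_submodule V)
  let T : (Equiv.Perm (Fin m) → ℝ) → V →ₗ[ℂ] V := fun a => ∑ g, (a g : ℂ) • V.ρ g
  let M : (Equiv.Perm (Fin m) → ℝ) → Matrix ι ι ℂ := fun a => LinearMap.toMatrix b b (T a)
  have hM : ∀ a p q, M a p q = ∑ g, (a g : ℂ) * LinearMap.toMatrix b b (V.ρ g) p q := by
    intro a p q
    simp only [M, T, map_sum, map_smul, Matrix.sum_apply, Matrix.smul_apply, smul_eq_mul]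
  have hadd : ∀ a c, M (a + c) = M a + M c := by
    intro a c
    ext p q
    simp only [Matrix.add_apply, hM, Pi.add_apply, Complex.ofReal_add, add_mul,
      Finset.sum_add_distrib]
  have hconv : ∀ a c, M (conv a c) = M a * M c := by
    intro a c
    simp only [M]
    rw [← LinearMap.toMatrix_mul]
    congr 1
    simp only [T, conv, Complex.ofReal_sum, Finset.sum_smul]
    rw [Finset.sum_mul_sum, Finset.sum_comm]
    refine Finset.sum_congr rfl fun h _ => ?_
    rw [← Equiv.sum_comp (Equiv.mulLeft h)]
    refine Finset.sum_congr rfl fun g _ => ?_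
    simp only [Equiv.coe_mulLeft, inv_mul_cancel_left, map_mul, Complex.ofReal_mul]
    rw [smul_mul_smul_comm]
  have hsingle : ∀ g, M (Pi.single g 1) = LinearMap.toMatrix b b (V.ρ g) := by
    intro g
    ext p q
    rw [hM, Finset.sum_eq_single g]
    · simp
    · intro h _ hne; simp [hne]
    · simp
  refine ⟨{a | ∀ p q, (M a p q).im = 0 ∧ 0 ≤ (M a p q).re}, ?_, ?_⟩
  · refine ⟨?_, ?_, ?_, ?_, ?_, ?_⟩
    · simp only [Set.ofPred_forall]
      refine isClosed_iInter fun p => isClosed_iInter fun q => ?_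
      have hcont : Continuous fun a => M a p q := by
        simp only [hM]
        fun_prop
      exact (isClosed_eq (Complex.continuous_im.comp hcont) continuous_const).inter
        (isClosed_le continuous_const (Complex.continuous_re.comp hcont))
    · intro a ha c hc p q
      rw [hadd, Matrix.add_apply, Complex.add_im, Complex.add_re, (ha p q).1, (hc p q).1]
      exact ⟨add_zero 0, add_nonneg (ha p q).2 (hc p q).2⟩
    · intro r hr a ha p q
      have : M (r • a) p q = r * M a p q := by
        simp only [hM, Pi.smul_apply, smul_eq_mul, Complex.ofReal_mul, Finset.mul_sum, mul_assoc]
      rw [this, Complex.im_ofReal_mul, Complex.re_ofReal_mul, (ha p q).1, mul_zero]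
      exact ⟨rfl, mul_nonneg hr (ha p q).2⟩
    · intro a ha c hc p q
      rw [hconv, Matrix.mul_apply, Complex.im_sum, Complex.re_sum]
      refine ⟨Finset.sum_eq_zero fun j _ => ?_, Finset.sum_nonneg fun j _ => ?_⟩
      · rw [Complex.mul_im, (ha _ _).1, (hc _ _).1]; ring
      · rw [Complex.mul_re, (ha _ _).1, zero_mul, sub_zero]
        exact mul_nonneg (ha _ _).2 (hc _ _).2
    · intro p q
      rw [hsingle, map_one, LinearMap.toMatrix_one, Matrix.one_apply]
      split_ifs <;> simp
    · intro s hs p q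
      obtain ⟨r, hr, h⟩ := hb s hs p q
      rw [hadd, hsingle, hsingle, map_one, ← map_add, h]
      simpa using hr
  · intro a ha
    have h1 : ((∑ g, χ g * a g : ℝ) : ℂ) = (M a).trace := by
      simp only [Matrix.trace, Matrix.diag, hM]
      rw [Finset.sum_comm]
      push_cast
      refine Finset.sum_congr rfl fun g _ => ?_
      rw [hchar g, FDRep.character, LinearMap.trace_eq_matrix_trace ℂ b, ← Finset.mul_sum, mul_comm]
      rfl
    have h2 : ∑ g, χ g * a g = (M a).trace.re := by rw [← h1, Complex.ofReal_re]
    rw [h2, Matrix.trace, Complex.re_sum]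
    exact Finset.sum_nonneg fun p _ => (ha p p).2

end cone

/-! ### Young symmetrizers -/

section cone2
variable {m : ℕ} {G : Set (Equiv.Perm (Fin m) → ℝ)}

theorem conv_inv (a b : Equiv.Perm (Fin m) → ℝ) :
    (fun g => conv a b g⁻¹) = conv (fun g => b g⁻¹) (fun g => a g⁻¹) := by
  funext g
  simp only [conv]
  rw [← Equiv.sum_comp (Equiv.mulLeft g⁻¹)]
  refine Finset.sum_congr rfl fun h _ => ?_
  simp only [Equiv.coe_mulLeft, mul_inv_rev, inv_inv]
  rw [mul_comm]
  congr 2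
  group

theorem single_inv (s : Equiv.Perm (Fin m)) (hs : s * s = 1) :
    (fun g => (Pi.single s 1 : Equiv.Perm (Fin m) → ℝ) g⁻¹) = Pi.single s 1 := by
  have h : s⁻¹ = s := inv_eq_of_mul_eq_one_left hs
  funext g
  simp only [Pi.single_apply, inv_eq_iff_eq_inv, h]

/-- The largest subcone of `G` stable under inversion. -/
theorem PosCone.symm (hG : PosCone G) : PosCone {a | a ∈ G ∧ (fun g => a g⁻¹) ∈ G} where
  closed := hG.closed.inter (hG.closed.preimage (by fun_prop))
  add := fun a ha b hb => ⟨hG.add a ha.1 b hb.1, hG.add _ ha.2 _ hb.2⟩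
  smul := fun c hc a ha => ⟨hG.smul c hc a ha.1, hG.smul c hc _ ha.2⟩
  conv := fun a ha b hb => ⟨hG.conv a ha.1 b hb.1, by
    rw [conv_inv]; exact hG.conv _ hb.2 _ ha.2⟩
  one := ⟨hG.one, by rw [single_inv 1 (one_mul 1)]; exact hG.one⟩
  adj := fun s hs => ⟨hG.adj s hs, by
    have := hG.adj s hs
    rw [← single_inv s hs.mul_self, ← single_inv 1 (one_mul 1)] at this
    exact this⟩

theorem PosCone.zero (hG : PosCone G) : 0 ∈ G := by
  simpa using hG.smul 0 le_rfl _ hG.one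

theorem PosCone.sum (hG : PosCone G) {ι : Type*} (t : Finset ι) (a : ι → Equiv.Perm (Fin m) → ℝ)
    (h : ∀ i ∈ t, a i ∈ G) : ∑ i ∈ t, a i ∈ G := by
  classical
  induction t using Finset.induction_on with
  | empty => simpa using hG.zero
  | insert i t hi ih =>
    rw [Finset.sum_insert hi]
    exact hG.add _ (h i (by simp)) _ (ih fun j hj => h j (by simp [hj]))

open Classical in
/-- The sum, in the group algebra, of the stabiliser `{π | g ∘ π = g}`. -/
noncomputable def young (g : Fin m → ℕ) : Equiv.Perm (Fin m) → ℝ :=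
  fun π => if g ∘ π = g then 1 else 0

theorem conv_adj {s : Equiv.Perm (Fin m)} (hs : s * s = 1) (a : Equiv.Perm (Fin m) → ℝ) (π : Equiv.Perm (Fin m)) :
    conv (Pi.single 1 1 + Pi.single s 1) a π = a π + a (s * π) := by
  have h : s⁻¹ = s := inv_eq_of_mul_eq_one_left hs
  simp only [conv, Pi.add_apply, add_mul, Finset.sum_add_distrib, Pi.single_apply, ite_mul,
    one_mul, zero_mul, Finset.sum_ite_eq', Finset.mem_univ, if_true, inv_one, h]

/-- For monotone `g` the stabiliser is generated by the adjacent transpositions in it. The uniform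
distribution on it is the probability vector of least norm in the cone with support in it,
since such a vector must be fixed by every averaging `(1 + s) / 2`. -/
theorem young_mem (hG : PosCone G) {g : Fin m → ℕ} (hg : Monotone g) : young g ∈ G := by
  classical
  -- among the probability vectors of `G` supported on the stabiliser, take one of least norm
  let K : Set (Equiv.Perm (Fin m) → ℝ) :=
    G ∩ {a | (∀ π, 0 ≤ a π) ∧ (∀ π, a π ≤ 1) ∧ ∑ π, a π = 1 ∧
      ∀ π : Equiv.Perm (Fin m), g ∘ (⇑π : Fin m → Fin m) ≠ g → a π = 0}
  have hKc : IsCompact K := by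
    have hI : IsCompact (Set.Icc (0 : Equiv.Perm (Fin m) → ℝ) 1) := isCompact_Icc
    refine hI.of_isClosed_subset (hG.closed.inter ?_) ?_
    · have e : {a : Equiv.Perm (Fin m) → ℝ | (∀ π, 0 ≤ a π) ∧ (∀ π, a π ≤ 1) ∧ ∑ π, a π = 1 ∧
          ∀ π : Equiv.Perm (Fin m), g ∘ (⇑π : Fin m → Fin m) ≠ g → a π = 0} =
          (⋂ π, {a : Equiv.Perm (Fin m) → ℝ | 0 ≤ a π}) ∩ ((⋂ π, {a | a π ≤ 1}) ∩
            ({a | ∑ π, a π = 1} ∩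
            ⋂ π : Equiv.Perm (Fin m), ⋂ _ : g ∘ (⇑π : Fin m → Fin m) ≠ g, {a | a π = 0})) := by
        ext a; simp
      rw [e]
      refine (isClosed_iInter fun π => isClosed_le continuous_const (continuous_apply π)).inter
        ((isClosed_iInter fun π => isClosed_le (continuous_apply π) continuous_const).inter
        ((isClosed_eq (by fun_prop) continuous_const).inter
        (isClosed_iInter fun π => isClosed_iInter fun _ =>
          isClosed_eq (continuous_apply π) continuous_const)))
    · intro a ha
      exact ⟨fun π => ha.2.1 π, fun π => ha.2.2.1 π⟩
  have hKn : K.Nonempty := by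
    refine ⟨Pi.single 1 1, hG.one, ?_, ?_, ?_, ?_⟩
    · intro π; rw [Pi.single_apply]; split_ifs <;> norm_num
    · intro π; rw [Pi.single_apply]; split_ifs <;> norm_num
    · simp
    · intro π hπ
      rw [Pi.single_apply, if_neg]
      rintro rfl
      exact hπ rfl
  obtain ⟨a, ⟨haG, ha0, ha1, has, hasupp⟩, hmin⟩ := hKc.exists_isMinOn hKn
    (f := fun a => ∑ π, a π ^ 2) (by fun_prop)
  -- averaging over an adjacent transposition would decrease the norm
  have hadj : ∀ p q : Fin m, (q : ℕ) = p + 1 → g p = g q → ∀ π, a (Equiv.swap p q * π) = a π := by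
    intro p q hpq hgpq
    set s := Equiv.swap p q with hs
    have hss : s * s = 1 := Equiv.swap_mul_self p q
    have hgs : g ∘ s = g := by
      funext x
      simp only [Function.comp_apply, hs, Equiv.swap_apply_def]
      split_ifs with h1 h2
      · rw [h1, hgpq]
      · rw [h2, hgpq]
      · rfl
    let b : Equiv.Perm (Fin m) → ℝ := (1 / 2 : ℝ) • conv (Pi.single 1 1 + Pi.single s 1) a
    have hb : ∀ π, b π = (a π + a (s * π)) / 2 := by
      intro π
      simp only [b, Pi.smul_apply, conv_adj hss, smul_eq_mul]; ring
    have hreidx : ∀ φ : Equiv.Perm (Fin m) → ℝ, ∑ π, φ (s * π) = ∑ π, φ π := fun φ =>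
      Equiv.sum_comp (Equiv.mulLeft s) φ
    have hbK : b ∈ K := by
      refine ⟨hG.smul _ (by norm_num) _ (hG.conv _ (hG.adj s ⟨p, q, hpq, hs⟩) _ haG), ?_, ?_, ?_, ?_⟩
      · intro π; rw [hb]; linarith [ha0 π, ha0 (s * π)]
      · intro π; rw [hb]; linarith [ha1 π, ha1 (s * π)]
      · simp only [hb]
        rw [← Finset.sum_div, Finset.sum_add_distrib, hreidx, has]; norm_num
      · intro π hπ
        have : g ∘ (⇑(s * π) : Fin m → Fin m) ≠ g := by
          rw [Equiv.Perm.coe_mul, ← Function.comp_assoc, hgs]; exact hπ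
        rw [hb, hasupp π hπ, hasupp _ this]; norm_num
    have h1 : ∑ π, a π ^ 2 ≤ ∑ π, b π ^ 2 := hmin hbK
    have h2 : ∑ π, (a (s * π) - a π) ^ 2 = 4 * ∑ π, a π ^ 2 - 4 * ∑ π, b π ^ 2 := by
      have e1 : 4 * ∑ π, a π ^ 2 = 2 * ∑ π, a π ^ 2 + 2 * ∑ π, a (s * π) ^ 2 := by
        rw [hreidx fun π => a π ^ 2]; ring
      rw [e1, Finset.mul_sum, Finset.mul_sum, Finset.mul_sum, ← Finset.sum_add_distrib,
        ← Finset.sum_sub_distrib]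
      refine Finset.sum_congr rfl fun π _ => ?_
      rw [hb]; ring
    have h3 : ∑ π, (a (s * π) - a π) ^ 2 = 0 :=
      le_antisymm (by linarith) (Finset.sum_nonneg fun π _ => sq_nonneg _)
    intro π
    have := (Finset.sum_eq_zero_iff_of_nonneg fun π _ => sq_nonneg (a (s * π) - a π)).mp h3 π
      (Finset.mem_univ π)
    exact sub_eq_zero.mp (pow_eq_zero_iff two_ne_zero |>.mp this)
  have hswap : ∀ n : ℕ, ∀ p q : Fin m, (q : ℕ) = p + 1 + n → g p = g q →
      ∀ π, a (Equiv.swap p q * π) = a π := by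
    intro n
    induction n with
    | zero => exact fun p q h => hadj p q h
    | succ n ih =>
      intro p q hpq hgpq π
      let p' : Fin m := ⟨p + 1, by omega⟩
      have hp' : (p' : ℕ) = p + 1 := rfl
      have hle1 : g p ≤ g p' := hg (by rw [Fin.le_def]; omega)
      have hle2 : g p' ≤ g q := hg (by rw [Fin.le_def]; omega)
      have e : Equiv.swap p q = Equiv.swap p p' * (Equiv.swap p' q * Equiv.swap p p') := by
        have h1 : q ≠ p := by intro h; rw [h] at hpq; omega
        have h2 : q ≠ p' := by intro h; rw [h] at hpq; omega
        have h := Equiv.mul_swap_eq_swap_mul (Equiv.swap p p') p' q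
        rw [Equiv.swap_apply_right, Equiv.swap_apply_of_ne_of_ne h1 h2] at h
        rw [← mul_assoc, h, mul_assoc, Equiv.swap_mul_self, mul_one]
      rw [e, mul_assoc, mul_assoc, hadj p p' hp' (by omega), ih p' q (by omega) (by omega),
        hadj p p' hp' (by omega)]
  have hswap' : ∀ p q : Fin m, g p = g q → ∀ π, a (Equiv.swap p q * π) = a π := by
    intro p q hpq π
    rcases lt_trichotomy p q with h | h | h
    · exact hswap (q - p - 1) p q (by rw [Fin.lt_def] at h; omega) hpq π
    · rw [h, Equiv.swap_self, ← Equiv.Perm.one_def, one_mul]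
    · rw [Equiv.swap_comm]
      exact hswap (p - q - 1) q p (by rw [Fin.lt_def] at h; omega) hpq.symm π
  have hstab : ∀ n, ∀ h : Equiv.Perm (Fin m), h.support.card = n → g ∘ h = g → a h = a 1 := by
    intro n
    induction n using Nat.strong_induction_on with
    | _ n ih =>
      intro h hn hgh
      by_cases h1 : h = 1
      · rw [h1]
      obtain ⟨x, hx⟩ : ∃ x, h x ≠ x := by
        by_contra hcon
        push Not at hcon
        exact h1 (Equiv.ext hcon)
      have hgx : g x = g (h x) := (congrFun hgh x).symm
      rw [← hswap' x (h x) hgx h]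
      refine ih _ (hn ▸ Equiv.Perm.card_support_swap_mul hx) _ rfl ?_
      funext y
      have hy : g (h y) = g y := congrFun hgh y
      simp only [Function.comp_apply, Equiv.Perm.mul_apply]
      rw [← hy, Equiv.swap_apply_def]
      split_ifs with e1 e2
      · rw [e1, hgx]
      · rw [e2, hgx]
      · rfl
  have hay : a = a 1 • young g := by
    funext π
    simp only [Pi.smul_apply, young, smul_eq_mul]
    split_ifs with h
    · rw [mul_one]; exact hstab _ π rfl h
    · rw [mul_zero]; exact hasupp π h
  have ha1' : a 1 ≠ 0 := by
    intro h
    rw [h, zero_smul] at hay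
    rw [hay] at has
    simp at has
  have : young g = (a 1)⁻¹ • a := by
    conv_rhs => rw [hay]
    rw [smul_smul]
    simp only [Pi.smul_apply, young, smul_eq_mul]
    ext π
    simp [ha1']
  rw [this]
  exact hG.smul _ (inv_nonneg.mpr (ha0 1)) a haG

end cone2

/-! ### Matrices with positive immanant functions -/

section matrix
variable {m : ℕ} {G : Set (Equiv.Perm (Fin m) → ℝ)}

theorem QNonneg.zero : QNonneg 0 := fun i => by simp

theorem QNonneg.one : QNonneg 1 := fun i => by
  rw [coeff_one]; split_ifs <;> norm_num

theorem QNonneg.add {p q : ℝ[X]} (hp : QNonneg p) (hq : QNonneg q) : QNonneg (p + q) :=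
  fun i => by rw [coeff_add]; exact add_nonneg (hp i) (hq i)

theorem QNonneg.mul {p q : ℝ[X]} (hp : QNonneg p) (hq : QNonneg q) : QNonneg (p * q) :=
  fun i => by rw [coeff_mul]; exact Finset.sum_nonneg fun x _ => mul_nonneg (hp _) (hq _)

theorem QNonneg.prod {ι : Type*} {t : Finset ι} {p : ι → ℝ[X]} (h : ∀ i ∈ t, QNonneg (p i)) :
    QNonneg (∏ i ∈ t, p i) := by
  classical
  induction t using Finset.induction_on with
  | empty => simpa using QNonneg.one
  | insert i t hi ih =>
    rw [Finset.prod_insert hi]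
    exact (h i (by simp)).mul (ih fun j hj => h j (by simp [hj]))

theorem QNonneg.ite {P : Prop} [Decidable P] {p q : ℝ[X]} (hp : P → QNonneg p)
    (hq : ¬P → QNonneg q) : QNonneg (if P then p else q) := by
  split_ifs with h
  · exact hp h
  · exact hq h

/-- Every coefficient of the polynomial-valued function `F` lies in the cone `G`. -/
def PG (G : Set (Equiv.Perm (Fin m) → ℝ)) (F : Equiv.Perm (Fin m) → ℝ[X]) : Prop :=
  ∀ n, (fun π => (F π).coeff n) ∈ G

theorem PG.sum (hG : PosCone G) {ι : Type*} (t : Finset ι) (F : ι → Equiv.Perm (Fin m) → ℝ[X])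
    (h : ∀ i ∈ t, PG G (F i)) : PG G (fun π => ∑ i ∈ t, F i π) := by
  intro n
  have := hG.sum t (fun i π => (F i π).coeff n) fun i hi => h i hi n
  convert this using 1
  funext π
  rw [finsetSum_coeff, Finset.sum_apply]

theorem PG.smul (hG : PosCone G) {F : Equiv.Perm (Fin m) → ℝ[X]} (hF : PG G F) {c : ℝ}
    (hc : 0 ≤ c) : PG G (fun π => c • F π) := by
  intro n
  have := hG.smul c hc _ (hF n)
  convert this using 1
  funext π
  simp

/-- Closure under products in the group algebra `ℝ[q][𝔖_m]`. -/
theorem PG.conv (hG : PosCone G) {F F' : Equiv.Perm (Fin m) → ℝ[X]} (hF : PG G F)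
    (hF' : PG G F') : PG G (fun π => ∑ h, F h * F' (h⁻¹ * π)) := by
  intro n
  have := hG.sum (Finset.HasAntidiagonal.antidiagonal n)
    (fun x : ℕ × ℕ => _root_.conv (fun π => (F π).coeff x.1) (fun π => (F' π).coeff x.2))
    fun x _ => hG.conv _ (hF x.1) _ (hF' x.2)
  convert this using 1
  funext π
  rw [finsetSum_coeff, Finset.sum_apply]
  simp only [coeff_mul, _root_.conv]
  exact Finset.sum_comm

theorem PG.of_mem (hG : PosCone G) {a : Equiv.Perm (Fin m) → ℝ} (ha : a ∈ G) {p : ℝ[X]}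
    (hp : QNonneg p) : PG G (fun π => a π • p) := by
  intro n
  have := hG.smul _ (hp n) _ ha
  convert this using 1
  funext π
  simp [mul_comm]

/-- The element `∑ π, (∏ i, A (f i) (g (π i))) π` of the group algebra has its coefficients in `G`,
for all weakly increasing row indices `f` in `R` and column indices `g` in `S`. Repeated indices
are allowed, as they occur in the expansion of a matrix product. -/
def SGood (G : Set (Equiv.Perm (Fin m) → ℝ)) (R S : Set ℕ) (A : ℕ → ℕ → ℝ[X]) : Prop :=
  ∀ f g : Fin m → ℕ, Monotone f → Monotone g → (∀ i, f i ∈ R) → (∀ i, g i ∈ S) →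
    PG G (fun π => ∏ i, A (f i) (g (π i)))

theorem SGood.congr {R R' S S' : Set ℕ} {A B : ℕ → ℕ → ℝ[X]} (h : SGood G R S A) (hR : R' ⊆ R)
    (hS : S' ⊆ S) (hAB : ∀ i ∈ R', ∀ j ∈ S', B i j = A i j) : SGood G R' S' B := by
  intro f g hf hg hfR hgS
  have := h f g hf hg (fun i => hR (hfR i)) (fun i => hS (hgS i))
  convert this using 4 with π
  exact hAB _ (hfR _) _ (hgS _)

theorem SGood.transpose (hinv : ∀ a ∈ G, (fun g => a g⁻¹) ∈ G) {R S : Set ℕ}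
    {A : ℕ → ℕ → ℝ[X]} (h : SGood G R S A) : SGood G S R (fun i j => A j i) := by
  intro f g hf hg hfS hgR n
  have := hinv _ (h g f hg hf hgR hfS n)
  convert this using 1
  funext π
  congr 1
  beta_reduce
  rw [← Equiv.prod_comp π (fun i => A (g i) (f (π⁻¹ i)))]
  simp

/-- Cauchy–Binet: the element of a product matrix is a positive combination, over weakly
increasing middle indices, of products of the elements of the two factors. -/
theorem SGood.mul (hG : PosCone G) {R S : Set ℕ} {A B C : ℕ → ℕ → ℝ[X]} (K : ℕ)
    (hA : SGood G R (Set.Iio K) A) (hB : SGood G (Set.Iio K) S B)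
    (hC : ∀ i ∈ R, ∀ j ∈ S, C i j = ∑ k ∈ Finset.range K, A i k * B k j) : SGood G R S C := by
  intro f g hf hg hfR hgS
  -- the term of the expansion with middle indices `h`
  let Φ : Equiv.Perm (Fin m) → (Fin m → Fin K) → ℝ[X] := fun π h =>
    (∏ i, A (f i) (h i)) * ∏ i, B (h i) (g (π i))
  have h1 : ∀ π : Equiv.Perm (Fin m), ∏ i, C (f i) (g (π i)) = ∑ h, Φ π h := by
    intro π
    have : ∀ i, C (f i) (g (π i)) = ∑ k : Fin K, A (f i) k * B k (g (π i)) := fun i => by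
      rw [hC _ (hfR i) _ (hgS _), Finset.sum_range]
    simp only [this]
    rw [Finset.prod_univ_sum, Fintype.piFinset_univ]
    simp only [Finset.prod_mul_distrib, Φ]
  have h2 : ∀ (π σ : Equiv.Perm (Fin m)), ∑ h, Φ π (h ∘ σ) = ∑ h, Φ π h := fun π σ =>
    Equiv.sum_comp (Equiv.arrowCongr σ⁻¹ (Equiv.refl (Fin K))) (Φ π)
  -- every middle index tuple may be replaced by all rearrangements of its sorted version
  have h3 : ∀ π, ∑ h, ∑ σ : Equiv.Perm (Fin m), Φ π ((h ∘ Tuple.sort h) ∘ σ) =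
      (m.factorial : ℝ) • ∑ h, Φ π h := by
    intro π
    have : ∀ h : Fin m → Fin K, ∑ σ : Equiv.Perm (Fin m), Φ π ((h ∘ Tuple.sort h) ∘ σ) =
        ∑ σ : Equiv.Perm (Fin m), Φ π (h ∘ σ) := fun h =>
      Equiv.sum_comp (Equiv.mulLeft (Tuple.sort h))
        (fun σ : Equiv.Perm (Fin m) => Φ π (h ∘ σ))
    simp only [this]
    rw [Finset.sum_comm]
    simp only [h2, Finset.sum_const, Finset.card_univ, Fintype.card_perm, Fintype.card_fin]
    rw [Nat.cast_smul_eq_nsmul]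
  have h4 : ∀ h' : Fin m → Fin K, Monotone h' →
      PG G (fun π => ∑ σ : Equiv.Perm (Fin m), Φ π (h' ∘ σ)) := by
    intro h' hh'
    have hm : Monotone (fun i => (h' i : ℕ)) := fun i j hij => hh' hij
    have hlt : ∀ i, ((h' i : ℕ)) ∈ Set.Iio K := fun i => (h' i).2
    have := (hB _ g hm hg hlt hgS).conv hG (hA f _ hf hm hfR hlt)
    convert this using 2 with π
    -- substitute `σ = x⁻¹ * π`
    rw [← Equiv.sum_comp ((Equiv.inv (Equiv.Perm (Fin m))).trans (Equiv.mulRight π))]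
    refine Finset.sum_congr rfl fun x _ => ?_
    simp only [Φ, Equiv.trans_apply, Equiv.inv_apply, Equiv.coe_mulRight, Function.comp_apply]
    rw [mul_comm]
    congr 1
    rw [← Equiv.prod_comp (x⁻¹ * π) (fun i => B (h' i) (g (x i)))]
    simp
  have h5 := (PG.sum hG Finset.univ _ fun h _ => h4 (h ∘ Tuple.sort h)
    (Tuple.monotone_sort h)).smul hG (c := (m.factorial : ℝ)⁻¹) (by positivity)
  convert h5 using 2 with π
  rw [h1, h3, smul_smul, inv_mul_cancel₀ (by positivity), one_smul]

/-- If the nonzero entries form a staircase (the columns weakly increase from row to row), then a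
nonzero product `∏ i, A (f i) (g (π i))` has `π` in the double coset `H_g * H_f` of the two
stabilisers, where the product is constant; so its element is a multiple of
`conv (young g) (young f)`. -/
theorem sGood_of_chain (hG : PosCone G) (R S : Set ℕ) {A : ℕ → ℕ → ℝ[X]}
    (hA : ∀ i j, QNonneg (A i j))
    (hch : ∀ i j i' j', A i j ≠ 0 → A i' j' ≠ 0 → i < i' → j ≤ j') : SGood G R S A := by
  classical
  intro f g hf hg _ _
  -- a permutation contributes only if it lies in `H_g * H_f`
  have hsupp : ∀ π : Equiv.Perm (Fin m), ∏ i, A (f i) (g (π i)) ≠ 0 →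
      ∃ a b : Equiv.Perm (Fin m), g ∘ a = g ∧ f ∘ b = f ∧ π = a * b := by
    intro π hπ
    have hne : ∀ i, A (f i) (g (π i)) ≠ 0 := fun i hi =>
      hπ (Finset.prod_eq_zero (Finset.mem_univ i) hi)
    -- sort the pairs (row, column) lexicographically; along the staircase both coordinates increase
    let u : Fin m → ℕ ×ₗ ℕ := fun i => toLex (f i, g (π i))
    let τ := Tuple.sort u
    have hu : Monotone (u ∘ τ) := Tuple.monotone_sort u
    have h1 : Monotone (f ∘ τ) := by
      intro x y hxy
      rcases Prod.Lex.toLex_le_toLex.mp (hu hxy) with h | h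
      · exact h.le
      · exact h.1.le
    have h2 : Monotone (g ∘ (π * τ)) := by
      intro x y hxy
      rcases Prod.Lex.toLex_le_toLex.mp (hu hxy) with h | h
      · exact hch _ _ _ _ (hne _) (hne _) h
      · exact h.2
    have h1' : f ∘ τ = f := Tuple.unique_monotone (τ := 1) h1 hf
    have h2' : g ∘ (π * τ) = g := Tuple.unique_monotone (τ := 1) h2 hg
    refine ⟨π * τ, τ⁻¹, h2', ?_, by group⟩
    conv_lhs => rw [← h1']
    funext x
    simp
  have hval : ∀ a b : Equiv.Perm (Fin m), g ∘ a = g → f ∘ b = f →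
      ∏ i, A (f i) (g ((a * b) i)) = ∏ i, A (f i) (g i) := by
    intro a b ha hb
    rw [← Equiv.prod_comp b (fun i => A (f i) (g i))]
    refine Finset.prod_congr rfl fun i _ => ?_
    have h1 := congrFun ha (b i)
    have h2 := congrFun hb i
    simp only [Function.comp_apply] at h1 h2
    rw [Equiv.Perm.mul_apply, h1, h2]
  have hyoung : ∀ (k : Fin m → ℕ) (a x : Equiv.Perm (Fin m)), k ∘ a = k →
      young k (a * x) = young k x := by
    intro k a x ha
    simp only [young]
    rw [Equiv.Perm.coe_mul, ← Function.comp_assoc, ha]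
  have hyoung' : ∀ (k : Fin m → ℕ) (b x : Equiv.Perm (Fin m)), k ∘ b = k →
      young k (x * b) = young k x := by
    intro k b x hb
    simp only [young]
    have : k ∘ ⇑(x * b) = k ↔ k ∘ x = k := by
      rw [Equiv.Perm.coe_mul, ← Function.comp_assoc]
      constructor
      · intro h
        refine b.surjective.injective_comp_right ?_
        simp only [h, hb]
      · intro h; rw [h, hb]
    simp only [this]
  have hmem := hG.conv _ (young_mem hG hg) _ (young_mem hG hf)
  let N : ℝ := conv (young g) (young f) 1
  have hnn : ∀ (k : Fin m → ℕ) (x : Equiv.Perm (Fin m)), 0 ≤ young k x := by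
    intro k x; simp only [young]; split_ifs <;> norm_num
  have hN : 0 < N := by
    refine Finset.sum_pos' (fun h _ => mul_nonneg (hnn _ _) (hnn _ _)) ⟨1, Finset.mem_univ _, ?_⟩
    simp [young]
  have hNc : ∀ a b : Equiv.Perm (Fin m), g ∘ a = g → f ∘ b = f →
      conv (young g) (young f) (a * b) = N := by
    intro a b ha hb
    simp only [N, conv]
    rw [← Equiv.sum_comp (Equiv.mulLeft a)]
    refine Finset.sum_congr rfl fun h _ => ?_
    simp only [Equiv.coe_mulLeft]
    rw [hyoung g a h ha, mul_one, ← hyoung' f b h⁻¹ hb]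
    congr 2
    group
  have hN0 : ∀ π : Equiv.Perm (Fin m), conv (young g) (young f) π ≠ 0 →
      ∃ a b : Equiv.Perm (Fin m), g ∘ a = g ∧ f ∘ b = f ∧ π = a * b := by
    intro π hπ
    obtain ⟨h, -, hh⟩ := Finset.exists_ne_zero_of_sum_ne_zero hπ
    have h1 := left_ne_zero_of_mul hh
    have h2 := right_ne_zero_of_mul hh
    simp only [young, ne_eq, ite_eq_right_iff, one_ne_zero, imp_false, not_not] at h1 h2
    exact ⟨h, h⁻¹ * π, h1, h2, by group⟩
  have hp : QNonneg (∏ i, A (f i) (g i)) := QNonneg.prod fun i _ => hA _ _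
  have := (PG.of_mem hG hmem hp).smul hG (inv_nonneg.mpr hN.le)
  convert this using 2 with π
  by_cases h : ∃ a b : Equiv.Perm (Fin m), g ∘ a = g ∧ f ∘ b = f ∧ π = a * b
  · obtain ⟨a, b, ha, hb, rfl⟩ := h
    rw [hval a b ha hb, hNc a b ha hb, smul_smul, inv_mul_cancel₀ hN.ne', one_smul]
  · rw [not_imp_comm.mp (hsupp π) h, not_imp_comm.mp (hN0 π) h, zero_smul, smul_zero]

end matrix

/-! ### Factorization of Catalan–Stieltjes matrices -/

section stieltjes

/-- `c` is the Catalan–Stieltjes matrix of `r`, `s`, `t`, and `e` is the `q`-nonnegative excess of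
`s 0` over `1` and of `s k` over `r (k - 1) * t k + 1`. The value `t 0` is irrelevant. -/
structure CSData (r s t e : ℕ → ℝ[X]) (c : ℕ → ℕ → ℝ[X]) : Prop where
  r_nonneg : ∀ k, QNonneg (r k)
  t_nonneg : ∀ k, QNonneg (t (k + 1))
  e_nonneg : ∀ k, QNonneg (e k)
  s_zero : s 0 = e 0 + 1
  s_succ : ∀ k, s (k + 1) = e (k + 1) + (r k * t (k + 1) + 1)
  zero_zero : c 0 0 = 1
  upper : ∀ n k, n < k → c n k = 0
  rec_zero : ∀ n, c (n + 1) 0 = s 0 * c n 0 + t 1 * c n 1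
  rec_succ : ∀ n k, c (n + 1) (k + 1) =
    r k * c n k + s (k + 1) * c n (k + 1) + t (k + 2) * c n (k + 2)

/-- The tridiagonal matrix with `c (n + 1) k = ∑ a, c n a * jac r s t a k`.  The entry with
`a = k + 1` is never taken at `t 0`. -/
noncomputable def jac (r s t : ℕ → ℝ[X]) (a k : ℕ) : ℝ[X] :=
  (if a + 1 = k then r a else 0) + (if a = k then s a else 0) + (if a = k + 1 then t a else 0)

/-- The block sum of the identity of size `d` and `c`. -/
noncomputable def padC (c : ℕ → ℕ → ℝ[X]) (d i k : ℕ) : ℝ[X] :=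
  if i < d then (if i = k then 1 else 0) else if k < d then 0 else c (i - d) (k - d)

/-- The block sum of the identity of size `d` and the matrix consisting of the first unit row on
top of `jac r s t`. -/
noncomputable def padK (r s t : ℕ → ℝ[X]) (d i k : ℕ) : ℝ[X] :=
  if i ≤ d then (if i = k then 1 else 0) else if k < d then 0 else jac r s t (i - d - 1) (k - d)

/-- The left staircase factor of `padK`, the identity on rows up to `d`. Row `d + 1 + j` has the
entries `t j` (for `j ≥ 1`), `e j` and `1` in the columns `d + 2 * j - 1`, `d + 2 * j` and `d + 2 * j + 1`. -/
noncomputable def facP (t e : ℕ → ℝ[X]) (d i l : ℕ) : ℝ[X] :=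
  if i ≤ d then (if i = l then 1 else 0) else
    (if d + 2 * (i - d - 1) + 1 = l then 1 else 0) +
    (if d + 2 * (i - d - 1) = l then e (i - d - 1) else 0) +
    (if d + 2 * (i - d - 1) - 1 = l then (if d + 1 < i then t (i - d - 1) else 0) else 0)

/-- The right staircase factor of `padK`. Row `d + 2 * j` has a `1` in column `d + j`; row
`d + 2 * j + 1` has the entries `1` and `r j` in the columns `d + j` and `d + j + 1`. -/
noncomputable def facQ (r : ℕ → ℝ[X]) (d l k : ℕ) : ℝ[X] :=
  if l < d then (if l = k then 1 else 0) else
    (if d + (l - d) / 2 = k then 1 else 0) +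
    (if d + (l - d) / 2 + 1 = k ∧ (l - d) % 2 = 1 then r ((l - d) / 2) else 0)

variable {r s t e : ℕ → ℝ[X]} {c : ℕ → ℕ → ℝ[X]}

theorem sum_jac (h : CSData r s t e c) (n k M : ℕ) (hM : n < M) :
    ∑ a ∈ Finset.range M, c n a * jac r s t a k = c (n + 1) k := by
  have hz : ∀ a, M ≤ a → c n a = 0 := fun a ha => h.upper n a (by omega)
  simp only [jac, mul_add, Finset.sum_add_distrib, mul_ite, mul_zero, Finset.sum_ite_eq',
    Finset.mem_range]
  rcases k with _ | k
  · simp only [Nat.succ_ne_zero, if_false, Finset.sum_const_zero, zero_add, h.rec_zero]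
    congr 1
    · rw [if_pos (by omega), mul_comm]
    · split_ifs with h1
      · rw [mul_comm]
      · rw [hz 1 (by omega), mul_zero]
  · simp only [Nat.add_right_cancel_iff, Finset.sum_ite_eq', Finset.mem_range, h.rec_succ]
    congr 1
    · congr 1
      · split_ifs with h1
        · rw [mul_comm]
        · rw [hz k (by omega), mul_zero]
      · split_ifs with h1
        · rw [mul_comm]
        · rw [hz (k + 1) (by omega), mul_zero]
    · split_ifs with h1
      · rw [mul_comm]
      · rw [hz (k + 2) (by omega), mul_zero]

theorem zero_row (h : CSData r s t e c) (k : ℕ) : c 0 k = if 0 = k then 1 else 0 := by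
  rcases k with _ | k
  · simp [h.zero_zero]
  · rw [h.upper 0 _ (Nat.succ_pos k), if_neg (by omega)]

theorem padC_eq (h : CSData r s t e c) (d i k M : ℕ) (hM : i < M) :
    padC c d i k = ∑ k' ∈ Finset.range M, padC c (d + 1) i k' * padK r s t d k' k := by
  rcases Nat.lt_or_ge i (d + 1) with hi | hi
  · have : ∀ k', padC c (d + 1) i k' = if i = k' then 1 else 0 := fun k' => by
      rw [padC, if_pos hi]
    simp only [this, ite_mul, one_mul, zero_mul, Finset.sum_ite_eq, Finset.mem_range, if_pos hM]
    rw [padK, if_pos (by omega), padC]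
    rcases Nat.lt_or_ge i d with h1 | h1
    · rw [if_pos h1]
    · rw [if_neg (by omega)]
      have : i = d := by omega
      subst this
      rw [Nat.sub_self, zero_row h]
      split_ifs <;> first | rfl | omega
  · obtain ⟨n, rfl⟩ := Nat.exists_eq_add_of_le hi
    obtain ⟨L, rfl⟩ := Nat.exists_eq_add_of_le (show d + 1 ≤ M by omega)
    rw [Finset.sum_range_add, Finset.sum_eq_zero, zero_add]
    · have e1 : ∀ a, padC c (d + 1) (d + 1 + n) (d + 1 + a) = c n a := fun a => by
        rw [padC, if_neg (by omega), if_neg (by omega)]; congr 1 <;> omega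
      have e2 : ∀ a, padK r s t d (d + 1 + a) k = if k < d then 0 else jac r s t a (k - d) :=
        fun a => by rw [padK, if_neg (by omega)]; congr 2; omega
      simp only [e1, e2]
      rw [padC, if_neg (by omega)]
      split_ifs with hk
      · simp
      · rw [sum_jac h _ _ _ (by omega)]; congr 1; omega
    · intro k' hk'
      rw [Finset.mem_range] at hk'
      rw [padC, if_neg (by omega), if_pos hk', zero_mul]

/-- The entry on the diagonal of `jac` is `1 + e j + t j * r (j - 1) = s j`. -/
theorem padK_eq (h : CSData r s t e c) (d i k M : ℕ) (hM : 2 * i + d < M) :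
    padK r s t d i k = ∑ l ∈ Finset.range M, facP t e d i l * facQ r d l k := by
  rcases Nat.lt_or_ge d i with hi | hi
  · obtain ⟨j, rfl⟩ := Nat.exists_eq_add_of_le (show d + 1 ≤ i from hi)
    have hj : d + 1 + j - d - 1 = j := by omega
    simp only [facP, if_neg (show ¬ d + 1 + j ≤ d by omega), hj, add_mul, ite_mul, one_mul,
      zero_mul, Finset.sum_add_distrib, Finset.sum_ite_eq, Finset.mem_range]
    rw [if_pos (by omega), if_pos (by omega), if_pos (by omega)]
    have q1 : facQ r d (d + 2 * j + 1) k =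
        (if d + j = k then 1 else 0) + if d + j + 1 = k then r j else 0 := by
      rw [facQ, if_neg (by omega), show (d + 2 * j + 1 - d) / 2 = j by omega,
        show (d + 2 * j + 1 - d) % 2 = 1 by omega]
      simp
    have q2 : facQ r d (d + 2 * j) k = if d + j = k then 1 else 0 := by
      rw [facQ, if_neg (by omega), show (d + 2 * j - d) / 2 = j by omega,
        show (d + 2 * j - d) % 2 = 0 by omega]
      simp
    rw [q1, q2, padK, if_neg (by omega), hj]
    rcases Nat.lt_or_ge k d with hk | hk
    · rw [if_pos hk, if_neg (show ¬ d + j = k by omega), if_neg (show ¬ d + j + 1 = k by omega)]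
      rcases j with _ | j
      · simp
      · rw [facQ, if_neg (show ¬ d + 2 * (j + 1) - 1 < d by omega),
          if_neg (show ¬ d + (d + 2 * (j + 1) - 1 - d) / 2 = k by omega),
          if_neg (show ¬ (d + (d + 2 * (j + 1) - 1 - d) / 2 + 1 = k ∧ _) by omega)]
        simp
    obtain ⟨b, rfl⟩ := Nat.exists_eq_add_of_le hk
    rw [if_neg (by omega), Nat.add_sub_cancel_left, jac]
    simp only [add_assoc d, Nat.add_left_cancel_iff]
    rcases j with _ | j
    · rw [if_neg (show ¬ 0 = b + 1 by omega), if_neg (show ¬ d + 1 < d + (1 + 0) by omega), h.s_zero]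
      split_ifs <;> first | omega | ring
    · have q3 : facQ r d (d + 2 * (j + 1) - 1) (d + b) =
          (if j = b then 1 else 0) + if j + 1 = b then r j else 0 := by
        rw [facQ, if_neg (by omega), show (d + 2 * (j + 1) - 1 - d) / 2 = j by omega,
          show (d + 2 * (j + 1) - 1 - d) % 2 = 1 by omega]
        simp [add_assoc]
      rw [if_pos (show d + 1 < d + (1 + (j + 1)) by omega), q3, h.s_succ]
      simp only [Nat.add_right_cancel_iff]
      split_ifs <;> first | omega | ring
  · simp only [facP, if_pos hi, ite_mul, one_mul, zero_mul, Finset.sum_ite_eq, Finset.mem_range]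
    rw [if_pos (by omega), padK, if_pos hi, facQ]
    split_ifs with h1 h2 h3 h4 h5 h6 h7 h8 h9 <;> first | rfl | omega | simp

theorem facP_supp {d i l : ℕ} (h : facP t e d i l ≠ 0) :
    (i ≤ d ∧ l = i) ∨ (d < i ∧ d ≤ l ∧ 2 * i ≤ l + d + 3 ∧ l + d + 1 ≤ 2 * i) := by
  by_contra hcon
  apply h
  rw [facP]
  split_ifs <;> first | omega | simp

theorem facQ_supp {d l k : ℕ} (h : facQ r d l k ≠ 0) :
    (l < d ∧ k = l) ∨ (d ≤ l ∧ d ≤ k ∧ 2 * k ≤ l + d + 1 ∧ l + d ≤ 2 * k + 1) := by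
  by_contra hcon
  apply h
  rw [facQ]
  split_ifs <;> first | omega | simp

/-! ### Positivity of Catalan–Stieltjes and Hankel matrices -/

variable {m : ℕ} {G : Set (Equiv.Perm (Fin m) → ℝ)}

theorem sGood_facP (hG : PosCone G) (h : CSData r s t e c) (d : ℕ) (R S : Set ℕ) :
    SGood G R S (facP t e d) := by
  refine sGood_of_chain hG R S (fun i l => ?_) fun i j i' j' h1 h2 hlt => ?_
  · rw [facP]
    refine QNonneg.ite (fun _ => .ite (fun _ => .one) fun _ => .zero) fun _ => .add (.add
      (.ite (fun _ => .one) fun _ => .zero) (.ite (fun _ => h.e_nonneg _) fun _ => .zero))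
      (.ite (fun _ => .ite (fun hi => ?_) fun _ => .zero) fun _ => .zero)
    obtain ⟨j, rfl⟩ := Nat.exists_eq_add_of_lt hi
    rw [show d + 1 + j + 1 - d - 1 = j + 1 by omega]
    exact h.t_nonneg j
  · have := facP_supp h1
    have := facP_supp h2
    omega

theorem sGood_facQ (hG : PosCone G) (h : CSData r s t e c) (d : ℕ) (R S : Set ℕ) :
    SGood G R S (facQ r d) := by
  refine sGood_of_chain hG R S (fun i l => ?_) fun i j i' j' h1 h2 hlt => ?_
  · rw [facQ]
    exact QNonneg.ite (fun _ => .ite (fun _ => .one) fun _ => .zero) fun _ => .add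
      (.ite (fun _ => .one) fun _ => .zero) (.ite (fun _ => h.r_nonneg _) fun _ => .zero)
  · have := facQ_supp h1
    have := facQ_supp h2
    omega

/-- On rows up to `N` the matrix `padC c (N + 1)` is the identity, and each step removes one row of
padding by `padC_eq`. -/
theorem sGood_padC (hG : PosCone G) (h : CSData r s t e c) (N : ℕ) :
    ∀ j ≤ N + 1, SGood G (Set.Iic N) Set.univ (padC c (N + 1 - j)) := by
  intro j
  induction j with
  | zero =>
    intro _
    have hid : SGood G Set.univ Set.univ (fun i k => if i = k then (1 : ℝ[X]) else 0) := by
      refine sGood_of_chain hG _ _ (fun i k => .ite (fun _ => .one) fun _ => .zero) ?_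
      intro i k i' k' h1 h2 hlt
      simp only [ne_eq, ite_eq_right_iff, one_ne_zero, imp_false, not_not] at h1 h2
      omega
    refine hid.congr (Set.subset_univ _) subset_rfl fun i hi k _ => ?_
    rw [Set.mem_Iic] at hi
    rw [padC, if_pos (by omega)]
  | succ j ih =>
    intro hj
    have hd : N + 1 - j = N + 1 - (j + 1) + 1 := by omega
    have ih' := ih (by omega)
    rw [hd] at ih'
    set d := N + 1 - (j + 1)
    have hK : SGood G (Set.Iio (N + 1)) Set.univ (padK r s t d) :=
      SGood.mul hG (2 * N + d + 1) (sGood_facP hG h d _ _) (sGood_facQ hG h d _ _)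
        fun i hi k _ => padK_eq h d i k _ (by rw [Set.mem_Iio] at hi; omega)
    exact SGood.mul hG (N + 1) (ih'.congr subset_rfl (Set.subset_univ _) fun _ _ _ _ => rfl) hK
      fun i hi k _ => padC_eq h d i k _ (by rw [Set.mem_Iic] at hi; omega)

theorem sGood_stieltjes (hG : PosCone G) (h : CSData r s t e c) (N : ℕ) :
    SGood G (Set.Iic N) Set.univ c := by
  have := sGood_padC hG h N (N + 1) le_rfl
  rw [Nat.sub_self] at this
  exact this.congr subset_rfl subset_rfl fun i _ k _ => by simp [padC]

/-- The Catalan–Stieltjes matrix of `r`, `s`, `t`. -/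
noncomputable def stieltjes (r s t : ℕ → ℝ[X]) : ℕ → ℕ → ℝ[X]
  | 0, k => if k = 0 then 1 else 0
  | n + 1, 0 => s 0 * stieltjes r s t n 0 + t 1 * stieltjes r s t n 1
  | n + 1, k + 1 => r k * stieltjes r s t n k + s (k + 1) * stieltjes r s t n (k + 1) +
      t (k + 2) * stieltjes r s t n (k + 2)

theorem stieltjes_upper (r s t : ℕ → ℝ[X]) : ∀ n k, n < k → stieltjes r s t n k = 0 := by
  intro n
  induction n with
  | zero => intro k hk; rw [stieltjes, if_neg (by omega)]
  | succ n ih =>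
    intro k hk
    obtain ⟨k, rfl⟩ : ∃ k', k = k' + 1 := ⟨k - 1, by omega⟩
    rw [stieltjes, ih k (by omega), ih _ (by omega), ih _ (by omega)]
    ring

/-- The transposed recurrence: `r` and `t` exchange roles, and the hypotheses are symmetric. At
`k = 0` the truncated `r (k - 1)` is the irrelevant zeroth value. -/
theorem CSData.swap (h : CSData r s t e c) :
    CSData (fun k => t (k + 1)) s (fun k => r (k - 1)) e
      (stieltjes (fun k => t (k + 1)) s (fun k => r (k - 1))) where
  r_nonneg := h.t_nonneg
  t_nonneg := h.r_nonneg
  e_nonneg := h.e_nonneg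
  s_zero := h.s_zero
  s_succ := fun k => by rw [h.s_succ, mul_comm (r k)]; rfl
  zero_zero := by simp [stieltjes]
  upper := stieltjes_upper _ _ _
  rec_zero := fun n => by rw [stieltjes]
  rec_succ := fun n k => by rw [stieltjes]

theorem jac_swap (a k : ℕ) :
    jac (fun k => t (k + 1)) s (fun k => r (k - 1)) k a = jac r s t a k := by
  simp only [jac]
  rcases lt_trichotomy a k with h | h | h
  · rw [if_neg (show ¬ k + 1 = a by omega), if_neg (show ¬ k = a by omega),
      if_neg (show ¬ a = k by omega), if_neg (show ¬ a = k + 1 by omega)]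
    by_cases h1 : a + 1 = k
    · subst h1; simp
    · rw [if_neg h1, if_neg (Ne.symm h1)]
  · subst h; simp
  · rw [if_neg (show ¬ k = a by omega), if_neg (show ¬ k = a + 1 by omega),
      if_neg (show ¬ a + 1 = k by omega), if_neg (show ¬ a = k by omega)]
    by_cases h1 : k + 1 = a
    · subst h1; simp
    · rw [if_neg h1, if_neg (Ne.symm h1)]

/-- The Hankel matrix is the product of `c` with the transpose of the matrix of the transposed
recurrence: both `c (i + 1) · c' j` and `c i · c' (j + 1)` equal `c i · jac · c' j`. -/
theorem hankel_eq {r' s' t' e' : ℕ → ℝ[X]} {c' : ℕ → ℕ → ℝ[X]} (h : CSData r s t e c)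
    (h' : CSData r' s' t' e' c') (hj : ∀ a k, jac r' s' t' k a = jac r s t a k) (M : ℕ) :
    ∀ j i, i + j < M → c (i + j) 0 = ∑ k ∈ Finset.range M, c i k * c' j k := by
  intro j
  induction j with
  | zero =>
    intro i hi
    simp only [zero_row h', mul_ite, mul_one, mul_zero, Finset.sum_ite_eq, Finset.mem_range]
    rw [if_pos (by omega), add_zero]
  | succ j ih =>
    intro i hi
    rw [show i + (j + 1) = i + 1 + j by ring, ih (i + 1) (by omega)]
    simp only [← sum_jac h i _ M (by omega), ← sum_jac h' j _ M (by omega), hj,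
      Finset.sum_mul, Finset.mul_sum]
    rw [Finset.sum_comm]
    refine Finset.sum_congr rfl fun a _ => Finset.sum_congr rfl fun k _ => ?_
    ring

theorem sGood_hankel (hG : PosCone G) (hinv : ∀ a ∈ G, (fun g => a g⁻¹) ∈ G)
    (h : CSData r s t e c) (N : ℕ) :
    SGood G (Set.Iic N) (Set.Iic N) (fun i j => c (i + j) 0) := by
  have hB := (sGood_stieltjes hG h.swap N).transpose hinv
  refine SGood.mul hG (2 * N + 1)
    ((sGood_stieltjes hG h N).congr subset_rfl (Set.subset_univ _) fun _ _ _ _ => rfl)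
    (hB.congr (Set.subset_univ _) subset_rfl fun _ _ _ _ => rfl) fun i hi j hj => ?_
  rw [Set.mem_Iic] at hi hj
  exact hankel_eq h h.swap jac_swap _ j i (by omega)

end stieltjes

/-! ### Immanants -/

theorem stmt7 (r s t : ℕ → Polynomial ℝ) (c : ℕ → ℕ → Polynomial ℝ)
    (hr : ∀ k, QNonneg (r k)) (hs : ∀ k, QNonneg (s k)) (ht : ∀ k, 1 ≤ k → QNonneg (t k))
    (hc00 : c 0 0 = 1)
    (hupper : ∀ n k, n < k → c n k = 0)
    (hrec0 : ∀ n, c (n + 1) 0 = s 0 * c n 0 + t 1 * c n 1)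
    (hrec : ∀ n k, c (n + 1) (k + 1) =
      r k * c n k + s (k + 1) * c n (k + 1) + t (k + 2) * c n (k + 2))
    (hcond : (QNonneg (s 0 - 1) ∧ ∀ k, 1 ≤ k → QNonneg (s k - (r (k - 1) * t k + 1))))
    (m : ℕ) (hm : 1 ≤ m) (χ : Equiv.Perm (Fin m) → ℝ) (hχ : IsIrrChar χ)
    (i j : Fin m → ℕ) (hi : StrictMono i) (hj : StrictMono j) :
    QNonneg (∑ π : Equiv.Perm (Fin m), χ π • ∏ a : Fin m, c (i a) (j (π a))) ∧
    QNonneg (∑ π : Equiv.Perm (Fin m), χ π • ∏ a : Fin m, c (i a + j (π a)) 0) := by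
  obtain ⟨G, hG, hpos⟩ := exists_posCone χ hχ
  let e : ℕ → ℝ[X] := fun k => if k = 0 then s 0 - 1 else s k - (r (k - 1) * t k + 1)
  have hcs : CSData r s t e c :=
    { r_nonneg := hr
      t_nonneg := fun k => ht _ (Nat.le_add_left 1 k)
      e_nonneg := fun k => .ite (fun _ => hcond.1) fun hk => hcond.2 k (Nat.one_le_iff_ne_zero.mpr hk)
      s_zero := by simp [e]
      s_succ := fun k => by simp [e]
      zero_zero := hc00
      upper := hupper
      rec_zero := hrec0
      rec_succ := hrec }
  -- only the inversion-stable part of `G` allows transposing matrices, as the Hankel case needs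
  have hinv : ∀ a ∈ {a | a ∈ G ∧ (fun g => a g⁻¹) ∈ G},
      (fun g => a g⁻¹) ∈ {a | a ∈ G ∧ (fun g => a g⁻¹) ∈ G} := fun a ha =>
    ⟨ha.2, by simpa only [inv_inv] using ha.1⟩
  have himm : ∀ F : Equiv.Perm (Fin m) → ℝ[X], PG {a | a ∈ G ∧ (fun g => a g⁻¹) ∈ G} F →
      QNonneg (∑ π, χ π • F π) := by
    intro F hF n
    rw [finsetSum_coeff]
    simpa only [coeff_smul, smul_eq_mul] using hpos _ (hF n).1
  let N := ∑ a, (i a + j a)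
  have hN : ∀ a, i a + j a ≤ N := fun a =>
    Finset.single_le_sum (f := fun a => i a + j a) (fun _ _ => Nat.zero_le _) (Finset.mem_univ a)
  have hiN : ∀ a, i a ∈ Set.Iic N := fun a => (Nat.le_add_right _ _).trans (hN a)
  have hjN : ∀ a, j a ∈ Set.Iic N := fun a => (Nat.le_add_left _ _).trans (hN a)
  exact ⟨himm _ (sGood_stieltjes hG.symm hcs N i j hi.monotone hj.monotone hiN fun _ => trivial),
    himm _ (sGood_hankel hG.symm hinv hcs N i j hi.monotone hj.monotone hiN hjN)⟩
end
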